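/- (Corollary 4.3, Porosity of the time-slices of the free boundary) There exists a constant δ ∈ (0,1], depending only on N, p, q, m and M, such that for every u ∈ 𝔍 and every t₀ ∈ (−(1/2)^θ, (1/2)^θ], the set E := {x ∈ ℝ^N : (x,t₀) ∈ ∂{u>0} ∩ closure(Q_{1/2})} is porous with porosity constant δ, i.e. there exists R > 0 such that for each x₀ ∈ E and each r ∈ (0,R) there is a point x′ ∈ ℝ^N with B_{δr}(x′) ⊆ B_r(x₀) \ E. -/

import Mathlib

noncomputable section

open Set Metric MeasureTheory

/-- Euclidean space `ℝ^N`. -/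
abbrev Euc (N : ℕ) := EuclideanSpace ℝ (Fin N)

/-- `s₊^q`: equals `(max s 0)^q` if `s > 0` and `0` otherwise. -/
def plusPowQ (q s : ℝ) : ℝ := if 0 < s then (max s 0) ^ q else 0

/-- The spatial gradient `∇u(x,t)`. -/
def spatialGrad (N : ℕ) (u : Euc N × ℝ → ℝ) (z : Euc N × ℝ) : Euc N :=
  gradient (fun y => u (y, z.2)) z.1

/-- The vector field `V(y,t) = ‖∇u(y,t)‖^(p-2) ∇u(y,t)`. -/
def pVF (N : ℕ) (p : ℝ) (u : Euc N × ℝ → ℝ) (z : Euc N × ℝ) : Euc N :=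
  ‖spatialGrad N u z‖ ^ (p - 2) • spatialGrad N u z

/-- The `p`-Laplacian `Δ_p u` realized as `trace (D_x V)` with `V = ‖∇u‖^(p-2)∇u`. -/
def pLap (N : ℕ) (p : ℝ) (u : Euc N × ℝ → ℝ) (z : Euc N × ℝ) : ℝ :=
  LinearMap.trace ℝ (Euc N) (fderiv ℝ (fun y => pVF N p u (y, z.2)) z.1).toLinearMap

/-- The time derivative `∂ₜ u`. -/
def timeDeriv (N : ℕ) (u : Euc N × ℝ → ℝ) (z : Euc N × ℝ) : ℝ :=
  deriv (fun t => u (z.1, t)) z.2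

/-- `u` is a classical solution of the dead-core equation `Δ_p u - ∂_t u = λ₀ u₊^q` on `D`:
`u` is continuous on `D` and at every point of `D` the spatial gradient and time derivative
exist, `V = ‖∇u‖^(p-2)∇u` is spatially differentiable, and the PDE holds. -/
def IsDCSol (N : ℕ) (p q : ℝ) (lam u : Euc N × ℝ → ℝ) (D : Set (Euc N × ℝ)) : Prop :=
  ContinuousOn u D ∧
  ∀ z ∈ D,
    DifferentiableAt ℝ (fun y => u (y, z.2)) z.1 ∧
    DifferentiableAt ℝ (fun t => u (z.1, t)) z.2 ∧
    DifferentiableAt ℝ (fun y => pVF N p u (y, z.2)) z.1 ∧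
    pLap N p u z - timeDeriv N u z = lam z * plusPowQ q (u z)

/-- The intrinsic scaling exponent `θ = p(1-q)/(p-1-q)`. -/
def thetaV (p q : ℝ) : ℝ := p * (1 - q) / (p - 1 - q)

/-- The intrinsic cylinder `Q_r(x₀,t₀) = B_r(x₀) × (t₀ - r^θ, t₀ + r^θ)`. -/
def cylQ (N : ℕ) (θ r : ℝ) (z0 : Euc N × ℝ) : Set (Euc N × ℝ) :=
  (ball z0.1 r) ×ˢ (Ioo (z0.2 - r ^ θ) (z0.2 + r ^ θ))

/-- The lower cylinder `Q_r⁻(x₀,t₀) = B_r(x₀) × (t₀ - r^θ, t₀]`. -/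
def cylQm (N : ℕ) (θ r : ℝ) (z0 : Euc N × ℝ) : Set (Euc N × ℝ) :=
  (ball z0.1 r) ×ˢ (Ioc (z0.2 - r ^ θ) z0.2)

/-- The upper cylinder `Q_r⁺(x₀,t₀) = B_r(x₀) × [t₀, t₀ + r^θ)`. -/
def cylQp (N : ℕ) (θ r : ℝ) (z0 : Euc N × ℝ) : Set (Euc N × ℝ) :=
  (ball z0.1 r) ×ˢ (Ico z0.2 (z0.2 + r ^ θ))

/-- The parabolic boundary of `Q_r⁻(x₀,t₀)`:
`(closure(B_r) × {t₀ - r^θ}) ∪ (∂B_r × (t₀ - r^θ, t₀])`. -/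
def parBdryQm (N : ℕ) (θ r : ℝ) (z0 : Euc N × ℝ) : Set (Euc N × ℝ) :=
  ((closedBall z0.1 r) ×ˢ ({z0.2 - r ^ θ} : Set ℝ)) ∪
    ((sphere z0.1 r) ×ˢ (Ioc (z0.2 - r ^ θ) z0.2))

/-- The class `𝔍 = 𝔍_p(λ₀,q)(Q₁)`: classical solutions `u` on `Q₁` (for some `λ₀` with
`m ≤ λ₀ ≤ M`) with `0 ≤ u ≤ 1`, `∂ₜ u ≥ 0` on `Q₁` and `u(0,0) = 0`. -/
def memJ (N : ℕ) (p q m M : ℝ) (u : Euc N × ℝ → ℝ) : Prop :=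
  ∃ lam : Euc N × ℝ → ℝ,
    (∀ z ∈ cylQ N (thetaV p q) 1 (0, 0), m ≤ lam z ∧ lam z ≤ M) ∧
    IsDCSol N p q lam u (cylQ N (thetaV p q) 1 (0, 0)) ∧
    (∀ z ∈ cylQ N (thetaV p q) 1 (0, 0), 0 ≤ u z ∧ u z ≤ 1) ∧
    (∀ z ∈ cylQ N (thetaV p q) 1 (0, 0), 0 ≤ timeDeriv N u z) ∧
    u (0, 0) = 0

/-- `S_r[u] = sup over Q_r⁻ of u` (cylinders centered at the origin). -/
def Sr (N : ℕ) (p q r : ℝ) (u : Euc N × ℝ → ℝ) : ℝ :=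
  sSup (u '' cylQm N (thetaV p q) r (0, 0))

open Filter Topology
open scoped RealInnerProductSpace

/-!
Put `α = p / (p - 1 - q)`. The scaling `w (x, t) = u (x₀ + η x, t₀ + η ^ θ t) / η ^ α` preserves the
dead-core equation. If every ball of radius `η` in `B_r(x₀)` contained a zero of `u (·, t₀)`, then
`w (·, 0)` would have a zero in every unit ball of a large ball, and this bounds `w (·, 0)` by a
universal constant. Indeed a doubling-of-variables argument in the manner of Ishii and Lions shows
that a solution which is large at time `-τ` stays comparably large on a small ball, and an expanding
subsolution spreads that positivity over a whole unit ball by time `0`. Hence `w (·, -τ)` is at most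
a multiple of `τ ^ (-1 / (p - 2))`, or of `exp (c / τ)` when `p = 2`, and a supersolution blowing up
on the lateral boundary at this rate controls `w (·, 0)` in the centre. On the other hand, as
`∂ₜ u ≥ 0`, each time slice is a subsolution of the elliptic dead-core problem, so near a point
of the closure of `{u > 0}` the function `u (·, t₀)` reaches `c r ^ α` in `B_{r / 2}(x₀)`. The two
bounds are incompatible once `r / η` is large, so some ball of radius `η` in `B_r(x₀)` avoids the
zeros of `u (·, t₀)`, and with them the free boundary.
-/

/-! ### Pointwise second-order calculus -/

/-- `g` is differentiable near `s` with `g' s = b`, and `g'` has derivative `c` at `s`: the second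
order information that a maximum or minimum principle needs. -/
def HasSecondDerivAt (g : ℝ → ℝ) (b c s : ℝ) : Prop :=
  ∃ g' : ℝ → ℝ, (∀ᶠ r in 𝓝 s, HasDerivAt g (g' r) r) ∧ g' s = b ∧ HasDerivAt g' c s

namespace HasSecondDerivAt

variable {g h : ℝ → ℝ} {b c b' c' s : ℝ}

theorem hasDerivAt (hg : HasSecondDerivAt g b c s) : HasDerivAt g b s := by
  obtain ⟨g', hg', rfl, -⟩ := hg
  exact hg'.self_of_nhds

theorem of_forall {g' : ℝ → ℝ} (hg : ∀ r, HasDerivAt g (g' r) r) (hg' : HasDerivAt g' c s) :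
    HasSecondDerivAt g (g' s) c s :=
  ⟨g', .of_forall hg, rfl, hg'⟩

theorem const (k s : ℝ) : HasSecondDerivAt (fun _ => k) 0 0 s :=
  .of_forall (g' := fun _ => 0) (fun _ => hasDerivAt_const _ _) (hasDerivAt_const _ _)

theorem congr (hg : HasSecondDerivAt g b c s) (hb : b = b') (hc : c = c') :
    HasSecondDerivAt g b' c' s :=
  hb ▸ hc ▸ hg

theorem sub (hg : HasSecondDerivAt g b c s) (hh : HasSecondDerivAt h b' c' s) :
    HasSecondDerivAt (fun r => g r - h r) (b - b') (c - c') s := by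
  obtain ⟨g', hg', rfl, hg''⟩ := hg
  obtain ⟨h', hh', rfl, hh''⟩ := hh
  exact ⟨fun r => g' r - h' r, (hg'.and hh').mono fun r hr => hr.1.sub hr.2, rfl, hg''.sub hh''⟩

theorem neg (hg : HasSecondDerivAt g b c s) :
    HasSecondDerivAt (fun r => -g r) (-b) (-c) s := by
  obtain ⟨g', hg', rfl, hg''⟩ := hg
  exact ⟨fun r => -g' r, hg'.mono fun r hr => hr.neg, rfl, hg''.neg⟩

theorem const_mul (a : ℝ) (hg : HasSecondDerivAt g b c s) :
    HasSecondDerivAt (fun r => a * g r) (a * b) (a * c) s := by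
  obtain ⟨g', hg', rfl, hg''⟩ := hg
  exact ⟨fun r => a * g' r, hg'.mono fun r hr => hr.const_mul a, rfl, hg''.const_mul a⟩

theorem comp (hh : HasSecondDerivAt h b' c' (g s)) (hg : HasSecondDerivAt g b c s) :
    HasSecondDerivAt (fun r => h (g r)) (b' * b) (c' * b ^ 2 + b' * c) s := by
  have hgs := hg.hasDerivAt
  obtain ⟨g', hg', rfl, hg''⟩ := hg
  obtain ⟨h', hh', rfl, hh''⟩ := hh
  refine ⟨fun r => h' (g r) * g' r, ?_, rfl, ?_⟩
  · filter_upwards [hg', hgs.continuousAt.eventually hh'] with r hgr hhr using hhr.comp r hgr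
  · exact ((hh''.comp s hgs).mul hg'').congr_deriv (by simp only [Function.comp_apply]; ring)

theorem nonpos_of_isLocalMax (hg : HasSecondDerivAt g b c s) (hmax : IsLocalMax g s) : c ≤ 0 := by
  have hb : b = 0 := hmax.hasDerivAt_eq_zero hg.hasDerivAt
  obtain ⟨g', hg', rfl, hg''⟩ := hg
  have hderiv : deriv g =ᶠ[𝓝 s] g' := hg'.mono fun r hr => hr.deriv
  by_contra! hc
  have hmin : IsLocalMin g s := by
    apply isLocalMin_of_deriv_deriv_pos
    · rwa [hderiv.deriv_eq, hg''.deriv]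
    · rw [hderiv.self_of_nhds, hb]
    · exact hg'.self_of_nhds.continuousAt
  have hconst : g =ᶠ[𝓝 s] fun _ => g s := by
    filter_upwards [hmax, hmin] with r h₁ h₂ using le_antisymm h₁ h₂
  have hzero : g' =ᶠ[𝓝 s] fun _ => 0 := by
    filter_upwards [hderiv, hconst.eventuallyEq_nhds] with r hr hr'
    rw [← hr, hr'.deriv_eq, deriv_const]
  exact hc.ne' (hg''.unique ((hasDerivAt_const s 0).congr_of_eventuallyEq hzero))

theorem nonneg_of_isLocalMin (hg : HasSecondDerivAt g b c s) (hmin : IsLocalMin g s) : 0 ≤ c :=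
  neg_nonpos.1 (hg.neg.nonpos_of_isLocalMax hmin.neg)

end HasSecondDerivAt

section Radial

variable {E : Type*} [NormedAddCommGroup E] [InnerProductSpace ℝ E]

theorem hasSecondDerivAt_norm_add_smul_sq (z ξ : E) :
    HasSecondDerivAt (fun s : ℝ => ‖z + s • ξ‖ ^ 2) (2 * ⟪z, ξ⟫) (2 * ‖ξ‖ ^ 2) 0 := by
  have hexpand : (fun s : ℝ => ‖z + s • ξ‖ ^ 2) =
      fun s => ‖z‖ ^ 2 + s * (2 * ⟪z, ξ⟫) + s ^ 2 * ‖ξ‖ ^ 2 := by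
    funext s
    rw [norm_add_sq_real, norm_smul, mul_pow, real_inner_smul_right, Real.norm_eq_abs, sq_abs]
    ring
  have h₁ (s : ℝ) : HasDerivAt (fun s : ℝ => ‖z‖ ^ 2 + s * (2 * ⟪z, ξ⟫) + s ^ 2 * ‖ξ‖ ^ 2)
      (2 * ⟪z, ξ⟫ + s * (2 * ‖ξ‖ ^ 2)) s := by
    refine ((((hasDerivAt_id s).mul_const (2 * ⟪z, ξ⟫)).const_add (‖z‖ ^ 2)).add
      (((hasDerivAt_id s).pow 2).mul_const (‖ξ‖ ^ 2))).congr_deriv ?_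
    simp
    ring
  have h₂ : HasDerivAt (fun s : ℝ => 2 * ⟪z, ξ⟫ + s * (2 * ‖ξ‖ ^ 2)) (2 * ‖ξ‖ ^ 2) 0 := by
    simpa using ((hasDerivAt_id (0 : ℝ)).mul_const (2 * ‖ξ‖ ^ 2)).const_add (2 * ⟪z, ξ⟫)
  rw [hexpand]
  exact (HasSecondDerivAt.of_forall h₁ h₂).congr (by simp) rfl

theorem HasSecondDerivAt.comp_norm_add_smul_sq {F : ℝ → ℝ} {F₁ F₂ : ℝ} {z : E}
    (hF : HasSecondDerivAt F F₁ F₂ (‖z‖ ^ 2)) (ξ : E) :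
    HasSecondDerivAt (fun s : ℝ => F (‖z + s • ξ‖ ^ 2)) (2 * F₁ * ⟪z, ξ⟫)
      (4 * F₂ * ⟪z, ξ⟫ ^ 2 + 2 * F₁ * ‖ξ‖ ^ 2) 0 := by
  have hF' : HasSecondDerivAt F F₁ F₂ (‖z + (0 : ℝ) • ξ‖ ^ 2) := by simpa using hF
  exact (hF'.comp (g := fun s : ℝ => ‖z + s • ξ‖ ^ 2)
    (hasSecondDerivAt_norm_add_smul_sq z ξ)).congr (by ring) (by ring)

end Radial

theorem nonneg_of_hasDerivAt_of_forall_le_left {g : ℝ → ℝ} {c t s₀ : ℝ} (hg : HasDerivAt g c t)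
    (hs : s₀ < t) (hmax : ∀ s ∈ Ioo s₀ t, g s ≤ g t) : 0 ≤ c := by
  refine ge_of_tendsto (hasDerivAt_iff_tendsto_slope_left_right.1 hg).1 ?_
  filter_upwards [Ioo_mem_nhdsLT hs] with s hst
  rw [slope_def_field]
  exact div_nonneg_of_nonpos (by linarith [hmax s hst]) (by linarith [hst.2])

theorem plusPowQ_of_pos {q s : ℝ} (hs : 0 < s) : plusPowQ q s = s ^ q := by
  rw [plusPowQ, if_pos hs, max_eq_left hs.le]

theorem plusPowQ_of_nonpos {q s : ℝ} (hs : s ≤ 0) : plusPowQ q s = 0 :=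
  if_neg hs.not_gt

theorem plusPowQ_nonneg {q s : ℝ} : 0 ≤ plusPowQ q s := by
  rcases le_or_gt s 0 with hs | hs
  · rw [plusPowQ_of_nonpos hs]
  · rw [plusPowQ_of_pos hs]; positivity

theorem plusPowQ_pos {q s : ℝ} (hs : 0 < s) : 0 < plusPowQ q s := by
  rw [plusPowQ_of_pos hs]; positivity

theorem plusPowQ_le_rpow {q s K : ℝ} (hq : 0 ≤ q) (hK : 0 ≤ K) (hs : s ≤ K) :
    plusPowQ q s ≤ K ^ q := by
  rcases le_or_gt s 0 with hs₀ | hs₀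
  · rw [plusPowQ_of_nonpos hs₀]; positivity
  · rw [plusPowQ_of_pos hs₀]; exact Real.rpow_le_rpow hs₀.le hs hq

/-- The operator `tr X + (p - 2) ⟨X â, â⟩` with `â = a / ‖a‖`: if `X` is the Hessian and `a ≠ 0` the
gradient of a function, then its `p`-Laplacian is `‖a‖ ^ (p - 2) * normalizedPLap p X a`. -/
def normalizedPLap {N : ℕ} (p : ℝ) (X : Euc N →L[ℝ] Euc N) (a : Euc N) : ℝ :=
  LinearMap.trace ℝ (Euc N) X.toLinearMap + (p - 2) * ⟪X (‖a‖⁻¹ • a), ‖a‖⁻¹ • a⟫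

theorem normalizedPLap_neg {N : ℕ} (p : ℝ) (X : Euc N →L[ℝ] Euc N) (a : Euc N) :
    normalizedPLap p (-X) a = -normalizedPLap p X a := by
  have : LinearMap.trace ℝ (Euc N) (-X).toLinearMap = -LinearMap.trace ℝ (Euc N) X.toLinearMap := by
    rw [← map_neg]; rfl
  simp only [normalizedPLap, this, neg_apply, inner_neg_left]
  ring

theorem norm_inv_norm_smul {E : Type*} [NormedAddCommGroup E] [NormedSpace ℝ E] {a : E}
    (ha : a ≠ 0) : ‖‖a‖⁻¹ • a‖ = 1 := by
  simpa using norm_smul_inv_norm (𝕜 := ℝ) ha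

theorem trace_le_of_inner_le {N : ℕ} {X : Euc N →L[ℝ] Euc N} {A B : ℝ} {z : Euc N}
    (hX : ∀ ξ : Euc N, ⟪X ξ, ξ⟫ ≤ A * ⟪z, ξ⟫ ^ 2 + B * ‖ξ‖ ^ 2) :
    LinearMap.trace ℝ (Euc N) X.toLinearMap ≤ A * ‖z‖ ^ 2 + B * N := by
  let b := EuclideanSpace.basisFun (Fin N) ℝ
  have hz : ∑ i, ⟪z, b i⟫ ^ 2 = ‖z‖ ^ 2 := by
    simpa only [Real.norm_eq_abs, sq_abs] using b.sum_sq_norm_inner_left z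
  calc LinearMap.trace ℝ (Euc N) X.toLinearMap
      = ∑ i, ⟪X (b i), b i⟫ := by
        simp only [LinearMap.trace_eq_sum_inner _ b, ContinuousLinearMap.coe_coe, real_inner_comm]
    _ ≤ ∑ i, (A * ⟪z, b i⟫ ^ 2 + B) :=
        Finset.sum_le_sum fun i _ => by simpa [b.norm_eq_one] using hX (b i)
    _ = A * ‖z‖ ^ 2 + B * N := by
        rw [Finset.sum_add_distrib, ← Finset.mul_sum, hz]
        simp [mul_comm]

theorem normalizedPLap_le_of_inner_le {N : ℕ} {p A B s : ℝ} {X : Euc N →L[ℝ] Euc N} {a z : Euc N}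
    (hp : 2 ≤ p) (hX : ∀ ξ : Euc N, ⟪X ξ, ξ⟫ ≤ A * ⟪z, ξ⟫ ^ 2 + B * ‖ξ‖ ^ 2) (ha : a = s • z)
    (hnd : a ≠ 0 ∨ p = 2) :
    normalizedPLap p X a ≤ A * ‖z‖ ^ 2 * (p - 1) + B * (N + p - 2) := by
  have htrace := trace_le_of_inner_le hX
  have hdir : (p - 2) * ⟪X (‖a‖⁻¹ • a), ‖a‖⁻¹ • a⟫ ≤ (p - 2) * (A * ‖z‖ ^ 2 + B) := by
    rcases hnd with ha₀ | rfl
    · have hinner : ⟪z, ‖a‖⁻¹ • a⟫ ^ 2 = ‖z‖ ^ 2 := by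
        have hs : s ≠ 0 := fun h => ha₀ (by rw [ha, h, zero_smul])
        have hz : ‖z‖ ≠ 0 := norm_ne_zero_iff.2 fun h => ha₀ (by rw [ha, h, smul_zero])
        rw [ha, norm_smul, smul_smul, real_inner_smul_right, real_inner_self_eq_norm_sq, mul_inv]
        field_simp
        rw [Real.norm_eq_abs, sq_abs]
      have h := hX (‖a‖⁻¹ • a)
      rw [hinner, norm_inv_norm_smul ha₀, one_pow, mul_one] at h
      exact mul_le_mul_of_nonneg_left h (by linarith)
    · simp
  rw [normalizedPLap]
  linarith

theorem le_normalizedPLap_of_le_inner {N : ℕ} {p A B s : ℝ} {X : Euc N →L[ℝ] Euc N} {a z : Euc N}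
    (hp : 2 ≤ p) (hX : ∀ ξ : Euc N, A * ⟪z, ξ⟫ ^ 2 + B * ‖ξ‖ ^ 2 ≤ ⟪X ξ, ξ⟫) (ha : a = s • z)
    (hnd : a ≠ 0 ∨ p = 2) :
    A * ‖z‖ ^ 2 * (p - 1) + B * (N + p - 2) ≤ normalizedPLap p X a := by
  have h := normalizedPLap_le_of_inner_le (A := -A) (B := -B) hp (X := -X) (z := z) (fun ξ => by
    rw [neg_apply, inner_neg_left]; linarith [hX ξ]) ha hnd
  rw [normalizedPLap_neg] at h
  linarith

/-- The `p`-Laplacian of `x ↦ F (‖x‖ ^ 2)` at `‖x‖ = s`, where `F₁` and `F₂` are the first two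
derivatives of `F` at `s ^ 2`. -/
def radialPLap (N : ℕ) (p F₁ F₂ s : ℝ) : ℝ :=
  (2 * |F₁| * s) ^ (p - 2) * (4 * F₂ * s ^ 2 * (p - 1) + 2 * F₁ * (N + p - 2))

theorem norm_two_mul_smul {E : Type*} [NormedAddCommGroup E] [NormedSpace ℝ E] (F₁ : ℝ) (z : E) :
    ‖(2 * F₁) • z‖ = 2 * |F₁| * ‖z‖ := by
  rw [norm_smul, Real.norm_eq_abs, abs_mul, abs_two]

/-! ### Solutions of the dead-core equation in nondivergence form -/

/-- `v ≥ 0` satisfies the dead-core equation at `(x, t)`, with spatial gradient `a`, time derivative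
`b ≥ 0` and absorption `f` between `m v₊^q` and `M v₊^q`, in the form that comparison arguments use.
Where the equation is not degenerate the Hessian exists and the equation is expanded; where it is
degenerate only the sign of `b + f` at points touched from above by a flat function is kept. -/
structure DeadCoreJet (N : ℕ) (p q m M : ℝ) (v : Euc N → ℝ → ℝ) (x : Euc N) (t : ℝ)
    (a : Euc N) (b f : ℝ) : Prop where
  nonneg : 0 ≤ v x t
  timeDeriv_nonneg : 0 ≤ b
  le_absorption : m * plusPowQ q (v x t) ≤ f
  absorption_le : f ≤ M * plusPowQ q (v x t)
  hasDerivAt_time : HasDerivAt (fun s => v x s) b t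
  hasDerivAt_line : ∀ ξ : Euc N, HasDerivAt (fun s : ℝ => v (x + s • ξ) t) ⟪a, ξ⟫ 0
  exists_hessian : (a ≠ 0 ∨ p = 2) → ∃ X : Euc N →L[ℝ] Euc N,
    (∀ ξ : Euc N, HasSecondDerivAt (fun s : ℝ => v (x + s • ξ) t) ⟪a, ξ⟫ ⟪X ξ, ξ⟫ 0) ∧
    ‖a‖ ^ (p - 2) * normalizedPLap p X a = b + f
  nonpos_of_touching : a = 0 → ∀ C κ : ℝ, p / (p - 1) < κ →
    (∀ᶠ y in 𝓝 x, v y t ≤ v x t + C * ‖y - x‖ ^ κ) → b + f ≤ 0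

namespace DeadCoreJet

variable {N : ℕ} {p q m M : ℝ} {v : Euc N → ℝ → ℝ} {x a c : Euc N} {t b f F₁ F₂ : ℝ} {F : ℝ → ℝ}

theorem gradient_eq_of_isLocalExtr_sub_radial (hv : DeadCoreJet N p q m M v x t a b f)
    (hF : HasSecondDerivAt F F₁ F₂ (‖x - c‖ ^ 2))
    (hext : IsLocalExtr (fun y => v y t - F (‖y - c‖ ^ 2)) x) : a = (2 * F₁) • (x - c) := by
  refine ext_inner_right ℝ fun ξ => ?_
  have hline : IsLocalExtr (fun s : ℝ => v (x + s • ξ) t - F (‖x - c + s • ξ‖ ^ 2)) 0 := by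
    simpa only [Function.comp_def, sub_add_eq_add_sub] using IsLocalExtr.comp_continuous
      (g := fun s : ℝ => x + s • ξ) (b := 0) (by simpa using hext) (by fun_prop)
  have h := hline.hasDerivAt_eq_zero
    ((hv.hasDerivAt_line ξ).sub (hF.comp_norm_add_smul_sq ξ).hasDerivAt)
  rw [real_inner_smul_left]
  linarith

theorem add_le_of_isLocalMax_sub_radial (hp : 2 ≤ p) (hv : DeadCoreJet N p q m M v x t a b f)
    (hF : HasSecondDerivAt F F₁ F₂ (‖x - c‖ ^ 2))
    (hmax : IsLocalMax (fun y => v y t - F (‖y - c‖ ^ 2)) x) (hnd : a ≠ 0 ∨ p = 2) :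
    b + f ≤ radialPLap N p F₁ F₂ ‖x - c‖ := by
  obtain ⟨X, hX, heq⟩ := hv.exists_hessian hnd
  have ha := hv.gradient_eq_of_isLocalExtr_sub_radial hF (.inr hmax)
  rw [← heq, radialPLap, ← norm_two_mul_smul, ← ha]
  refine mul_le_mul_of_nonneg_left (normalizedPLap_le_of_inner_le hp (fun ξ => ?_)
    ha hnd) (by positivity)
  have hline : IsLocalMax (fun s : ℝ => v (x + s • ξ) t - F (‖x - c + s • ξ‖ ^ 2)) 0 := by
    simpa only [Function.comp_def, sub_add_eq_add_sub] using IsLocalMax.comp_continuous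
      (g := fun s : ℝ => x + s • ξ) (b := 0) (by simpa using hmax) (by fun_prop)
  linarith [((hX ξ).sub (hF.comp_norm_add_smul_sq ξ)).nonpos_of_isLocalMax hline]

theorem le_add_of_isLocalMin_sub_radial (hp : 2 ≤ p) (hv : DeadCoreJet N p q m M v x t a b f)
    (hF : HasSecondDerivAt F F₁ F₂ (‖x - c‖ ^ 2))
    (hmin : IsLocalMin (fun y => v y t - F (‖y - c‖ ^ 2)) x) (hnd : a ≠ 0 ∨ p = 2) :
    radialPLap N p F₁ F₂ ‖x - c‖ ≤ b + f := by
  obtain ⟨X, hX, heq⟩ := hv.exists_hessian hnd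
  have ha := hv.gradient_eq_of_isLocalExtr_sub_radial hF (.inl hmin)
  rw [← heq, radialPLap, ← norm_two_mul_smul, ← ha]
  refine mul_le_mul_of_nonneg_left (le_normalizedPLap_of_le_inner hp (fun ξ => ?_)
    ha hnd) (by positivity)
  have hline : IsLocalMin (fun s : ℝ => v (x + s • ξ) t - F (‖x - c + s • ξ‖ ^ 2)) 0 := by
    simpa only [Function.comp_def, sub_add_eq_add_sub] using IsLocalMin.comp_continuous
      (g := fun s : ℝ => x + s • ξ) (b := 0) (by simpa using hmin) (by fun_prop)
  linarith [((hX ξ).sub (hF.comp_norm_add_smul_sq ξ)).nonneg_of_isLocalMin hline]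

end DeadCoreJet

/-- `v` is continuous on `S × I`, and at every point of it `v ≥ 0`, `∂ₜ v ≥ 0` and the dead-core
equation holds, for some choice of the absorption coefficient with values in `[m, M]`. -/
structure IsDeadCoreOn (N : ℕ) (p q m M : ℝ) (v : Euc N → ℝ → ℝ) (S : Set (Euc N)) (I : Set ℝ) :
    Prop where
  continuousOn : ContinuousOn (fun z : Euc N × ℝ => v z.1 z.2) (S ×ˢ I)
  exists_jet : ∀ x ∈ S, ∀ t ∈ I, ∃ a b f, DeadCoreJet N p q m M v x t a b f

namespace IsDeadCoreOn

variable {N : ℕ} {p q m M : ℝ} {v : Euc N → ℝ → ℝ} {S S' : Set (Euc N)} {I I' : Set ℝ}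

theorem mono (hv : IsDeadCoreOn N p q m M v S I) (hS : S' ⊆ S) (hI : I' ⊆ I) :
    IsDeadCoreOn N p q m M v S' I' :=
  ⟨hv.continuousOn.mono (prod_mono hS hI), fun x hx t ht => hv.exists_jet x (hS hx) t (hI ht)⟩

theorem nonneg (hv : IsDeadCoreOn N p q m M v S I) {x : Euc N} (hx : x ∈ S) {t : ℝ} (ht : t ∈ I) :
    0 ≤ v x t := by
  obtain ⟨a, b, f, h⟩ := hv.exists_jet x hx t ht
  exact h.nonneg

theorem continuousOn_slice (hv : IsDeadCoreOn N p q m M v S I) {t : ℝ} (ht : t ∈ I) :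
    ContinuousOn (fun x => v x t) S :=
  hv.continuousOn.comp (f := fun x => (x, t)) (by fun_prop) fun _ hx => ⟨hx, ht⟩

theorem monotoneOn (hv : IsDeadCoreOn N p q m M v S I) (hI : Convex ℝ I) {x : Euc N}
    (hx : x ∈ S) : MonotoneOn (v x) I := by
  choose a b f hjet using hv.exists_jet x hx
  refine monotoneOn_of_deriv_nonneg hI
    (fun t ht => (hjet t ht).hasDerivAt_time.continuousAt.continuousWithinAt)
    (fun t ht => (hjet t (interior_subset ht)).hasDerivAt_time.differentiableAt
      |>.differentiableWithinAt) fun t ht => ?_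
  rw [(hjet t (interior_subset ht)).hasDerivAt_time.deriv]
  exact (hjet t (interior_subset ht)).timeDeriv_nonneg

end IsDeadCoreOn

/-! ### The half-Hölder estimate -/

theorem hasSecondDerivAt_rpow_const {β r : ℝ} (hr : 0 < r) :
    HasSecondDerivAt (fun s => s ^ β) (β * r ^ (β - 1)) (β * (β - 1) * r ^ (β - 2)) r := by
  refine ⟨fun s => β * s ^ (β - 1), ?_, rfl, ?_⟩
  · filter_upwards [lt_mem_nhds hr] with s hs using Real.hasDerivAt_rpow_const (.inl hs.ne')
  · refine ((Real.hasDerivAt_rpow_const (.inl hr.ne')).const_mul β).congr_deriv ?_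
    rw [sub_sub, one_add_one_eq_two, mul_assoc]

theorem hasSecondDerivAt_sqrt {s : ℝ} (hs : 0 < s) :
    HasSecondDerivAt (fun r => √r) (1 / (2 * s)) (-(1 / (4 * s ^ 3))) (s ^ 2) := by
  have hpow (k : ℕ) : (s ^ 2) ^ (-(k / 2) : ℝ) = (s ^ k)⁻¹ := by
    rw [← Real.rpow_natCast s 2, ← Real.rpow_mul hs.le, ← Real.rpow_natCast, ← Real.rpow_neg hs.le]
    congr 1
    push_cast
    ring
  simp only [Real.sqrt_eq_rpow]
  refine (hasSecondDerivAt_rpow_const (pow_pos hs 2)).congr ?_ ?_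
  · rw [show (1 / 2 - 1 : ℝ) = -((1 : ℕ) / 2) by norm_num, hpow]
    field_simp
  · rw [show (1 / 2 - 2 : ℝ) = -((3 : ℕ) / 2) by norm_num, hpow]
    field_simp
    norm_num

theorem hasSecondDerivAt_const_mul_sqrt_sqrt (A : ℝ) {s : ℝ} (hs : 0 < s) :
    HasSecondDerivAt (fun r => A * √√r) (A / (4 * s ^ 3)) (-(3 * A / (16 * s ^ 7))) (s ^ 4) := by
  have hsq : √(s ^ 4) = s ^ 2 := by
    rw [show s ^ 4 = (s ^ 2) ^ 2 by ring, Real.sqrt_sq (by positivity)]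
  have hinner : HasSecondDerivAt (fun r => √r) (1 / (2 * s ^ 2)) (-(1 / (4 * s ^ 6))) (s ^ 4) := by
    convert hasSecondDerivAt_sqrt (pow_pos hs 2) using 1 <;> ring
  have houter : HasSecondDerivAt (fun r => √r) (1 / (2 * s)) (-(1 / (4 * s ^ 3))) (√(s ^ 4)) := by
    rw [hsq]
    exact hasSecondDerivAt_sqrt hs
  refine ((houter.comp (g := fun r => √r) hinner).const_mul A).congr ?_ ?_ <;> field_simp <;> ring

section TwoPoint

variable {N : ℕ} {p A B C : ℝ} {X Y : Euc N →L[ℝ] Euc N} {n e : Euc N}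

-- Moving the two points along opposite directions makes the penalized distance concave.
theorem inner_le_of_inner_sub_inner_le (hn : ‖n‖ = 1) (he : ‖e‖ = 1)
    (hXY : ∀ ξ ζ : Euc N, ⟪X ξ, ξ⟫ - ⟪Y ζ, ζ⟫ ≤
      A * ⟪n, ξ - ζ⟫ ^ 2 + B * ‖ξ - ζ‖ ^ 2 + C * ‖ξ‖ ^ 2)
    (hAB : A * (1 + ⟪n, e⟫) + 2 * B ≤ 0) : ⟪X e, e⟫ ≤ ⟪Y n, n⟫ + C := by
  have hne : 0 ≤ 1 + ⟪n, e⟫ := by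
    have := (abs_le.1 (abs_real_inner_le_norm n e)).1
    rw [hn, he] at this
    linarith
  have hinner : ⟪n, e - -n⟫ = 1 + ⟪n, e⟫ := by
    rw [sub_neg_eq_add, inner_add_right, real_inner_self_eq_norm_sq, hn]; ring
  have hnorm : ‖e - -n‖ ^ 2 = 2 * (1 + ⟪n, e⟫) := by
    rw [sub_neg_eq_add, norm_add_sq_real, hn, he, real_inner_comm]; ring
  have h := hXY e (-n)
  rw [hinner, hnorm, he, map_neg, inner_neg_neg] at h
  linarith [mul_nonpos_of_nonneg_of_nonpos hne hAB]

-- Compare the trace of `X` in an orthonormal basis with that of `Y` in the basis reflected in `nᗮ`.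
theorem trace_le_of_inner_sub_inner_le (hn : ‖n‖ = 1)
    (hXY : ∀ ξ ζ : Euc N, ⟪X ξ, ξ⟫ - ⟪Y ζ, ζ⟫ ≤
      A * ⟪n, ξ - ζ⟫ ^ 2 + B * ‖ξ - ζ‖ ^ 2 + C * ‖ξ‖ ^ 2) :
    LinearMap.trace ℝ (Euc N) X.toLinearMap ≤
      LinearMap.trace ℝ (Euc N) Y.toLinearMap + 4 * (A + B) + C * N := by
  let b := EuclideanSpace.basisFun (Fin N) ℝ
  let b' := b.map (ℝ ∙ n)ᗮ.reflection
  have hsub (i : Fin N) : b i - b' i = (2 * ⟪n, b i⟫) • n := by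
    rw [OrthonormalBasis.map_apply, Submodule.reflection_orthogonal_apply,
      Submodule.reflection_singleton_apply, hn, two_mul, add_smul, two_smul]
    simp
  have hsum : ∑ i, ⟪n, b i⟫ ^ 2 = 1 := by
    simpa only [Real.norm_eq_abs, sq_abs, hn, one_pow] using b.sum_sq_norm_inner_left n
  calc LinearMap.trace ℝ (Euc N) X.toLinearMap
      = ∑ i, ⟪X (b i), b i⟫ := by
        simp only [LinearMap.trace_eq_sum_inner _ b, ContinuousLinearMap.coe_coe, real_inner_comm]
    _ ≤ ∑ i, (⟪Y (b' i), b' i⟫ + 4 * (A + B) * ⟪n, b i⟫ ^ 2 + C) := by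
        refine Finset.sum_le_sum fun i _ => ?_
        have h := hXY (b i) (b' i)
        rw [hsub, norm_smul, inner_smul_right, real_inner_self_eq_norm_sq, hn, b.norm_eq_one,
          one_pow, mul_one, mul_one, mul_one, Real.norm_eq_abs, sq_abs] at h
        linarith
    _ = LinearMap.trace ℝ (Euc N) Y.toLinearMap + 4 * (A + B) + C * N := by
        rw [Finset.sum_add_distrib, Finset.sum_add_distrib, ← Finset.mul_sum, hsum,
          LinearMap.trace_eq_sum_inner _ b']
        simp [real_inner_comm, mul_comm]

theorem normalizedPLap_le_of_inner_sub_inner_le {a b : Euc N} (hp : 2 ≤ p) (ha : a ≠ 0)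
    (hb : b ≠ 0) (hXY : ∀ ξ ζ : Euc N, ⟪X ξ, ξ⟫ - ⟪Y ζ, ζ⟫ ≤
      A * ⟪‖b‖⁻¹ • b, ξ - ζ⟫ ^ 2 + B * ‖ξ - ζ‖ ^ 2 + C * ‖ξ‖ ^ 2)
    (hAB : A * (1 + ⟪‖b‖⁻¹ • b, ‖a‖⁻¹ • a⟫) + 2 * B ≤ 0) :
    normalizedPLap p X a ≤ normalizedPLap p Y b + 4 * (A + B) + C * (N + p - 2) := by
  have htrace := trace_le_of_inner_sub_inner_le (norm_inv_norm_smul hb) hXY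
  have hinner := mul_le_mul_of_nonneg_left (inner_le_of_inner_sub_inner_le
    (norm_inv_norm_smul hb) (norm_inv_norm_smul ha) hXY hAB) (sub_nonneg.2 hp)
  rw [normalizedPLap, normalizedPLap]
  linarith

end TwoPoint

section TwoPointMax

variable {N : ℕ} {p q m M κ A t₁ t₂ b₁ b₂ f₁ f₂ F₁ F₂ : ℝ} {v : Euc N → ℝ → ℝ}
  {x y a₁ a₂ c : Euc N} {F : ℝ → ℝ}

theorem isLocalMax_two_point_line {u w : Euc N → ℝ}
    (hmax : IsLocalMax (fun z : Euc N × Euc N =>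
      u z.1 - w z.2 - F (‖z.1 - z.2‖ ^ 2) - κ * ‖z.1 - c‖ ^ 2) (x, y)) (ξ ζ : Euc N) :
    IsLocalMax (fun s : ℝ => u (x + s • ξ) - w (y + s • ζ) - F (‖x - y + s • (ξ - ζ)‖ ^ 2) -
      κ * ‖x - c + s • ξ‖ ^ 2) 0 := by
  have h := IsLocalMax.comp_continuous (g := fun s : ℝ => (x + s • ξ, y + s • ζ)) (b := 0)
    (by simpa using hmax) (by fun_prop)
  simpa only [Function.comp_def, add_sub_add_comm, ← smul_sub, sub_add_eq_add_sub] using h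

namespace DeadCoreJet

theorem gradients_eq_of_isLocalMax_two_point (hx : DeadCoreJet N p q m M v x t₁ a₁ b₁ f₁)
    (hy : DeadCoreJet N p q m M v y t₂ a₂ b₂ f₂) (hF : HasSecondDerivAt F F₁ F₂ (‖x - y‖ ^ 2))
    (hmax : IsLocalMax (fun z : Euc N × Euc N =>
      v z.1 t₁ - v z.2 t₂ - F (‖z.1 - z.2‖ ^ 2) - κ * ‖z.1 - c‖ ^ 2) (x, y)) :
    a₁ = a₂ + (2 * κ) • (x - c) ∧ a₂ = (2 * F₁) • (x - y) := by
  have hfirst (ξ ζ : Euc N) :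
      ⟪a₁, ξ⟫ - ⟪a₂, ζ⟫ - 2 * F₁ * ⟪x - y, ξ - ζ⟫ - κ * (2 * ⟪x - c, ξ⟫) = 0 :=
    (isLocalMax_two_point_line (u := (v · t₁)) (w := (v · t₂)) hmax ξ ζ).hasDerivAt_eq_zero
      ((((hx.hasDerivAt_line ξ).sub (hy.hasDerivAt_line ζ)).sub
        (hF.comp_norm_add_smul_sq (ξ - ζ)).hasDerivAt).sub
        ((hasSecondDerivAt_norm_add_smul_sq (x - c) ξ).hasDerivAt.const_mul κ))
  constructor
  · refine ext_inner_right ℝ fun ξ => ?_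
    have h := hfirst ξ ξ
    rw [sub_self, inner_zero_right] at h
    rw [inner_add_left, real_inner_smul_left]
    linarith
  · refine ext_inner_right ℝ fun ζ => ?_
    have h := hfirst 0 ζ
    rw [zero_sub, inner_neg_right, inner_zero_right, inner_zero_right] at h
    rw [real_inner_smul_left]
    linarith

theorem inner_sub_inner_le_of_isLocalMax_two_point {X Y : Euc N →L[ℝ] Euc N}
    (hX : ∀ ξ, HasSecondDerivAt (fun s : ℝ => v (x + s • ξ) t₁) ⟪a₁, ξ⟫ ⟪X ξ, ξ⟫ 0)
    (hY : ∀ ξ, HasSecondDerivAt (fun s : ℝ => v (y + s • ξ) t₂) ⟪a₂, ξ⟫ ⟪Y ξ, ξ⟫ 0)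
    (hF : HasSecondDerivAt F F₁ F₂ (‖x - y‖ ^ 2))
    (hmax : IsLocalMax (fun z : Euc N × Euc N =>
      v z.1 t₁ - v z.2 t₂ - F (‖z.1 - z.2‖ ^ 2) - κ * ‖z.1 - c‖ ^ 2) (x, y)) (ξ ζ : Euc N) :
    ⟪X ξ, ξ⟫ - ⟪Y ζ, ζ⟫ ≤
      4 * F₂ * ⟪x - y, ξ - ζ⟫ ^ 2 + 2 * F₁ * ‖ξ - ζ‖ ^ 2 + 2 * κ * ‖ξ‖ ^ 2 := by
  have h := ((((hX ξ).sub (hY ζ)).sub (hF.comp_norm_add_smul_sq (ξ - ζ))).sub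
    ((hasSecondDerivAt_norm_add_smul_sq (x - c) ξ).const_mul κ)).nonpos_of_isLocalMax
    (isLocalMax_two_point_line (u := (v · t₁)) (w := (v · t₂)) hmax ξ ζ)
  linarith

end DeadCoreJet

theorem norm_add_bounds_of_norm_le_half {b w : Euc N} (hb : b ≠ 0) (hw : ‖w‖ ≤ ‖b‖ / 2) :
    b + w ≠ 0 ∧ 1 / 3 ≤ ⟪‖b‖⁻¹ • b, ‖b + w‖⁻¹ • (b + w)⟫ := by
  have hbpos : 0 < ‖b‖ := norm_pos_iff.2 hb
  have hpos : 0 < ‖b + w‖ := by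
    have := norm_sub_le_norm_add b w
    linarith
  refine ⟨norm_pos_iff.1 hpos, ?_⟩
  have hnorm : ‖b + w‖ ≤ 3 / 2 * ‖b‖ := (norm_add_le b w).trans (by linarith)
  have hinner : ‖b‖ ^ 2 / 2 ≤ ⟪b, b + w⟫ := by
    have := (abs_le.1 (abs_real_inner_le_norm b w)).1
    rw [inner_add_right, real_inner_self_eq_norm_sq]
    nlinarith
  rw [real_inner_smul_left, real_inner_smul_right, ← mul_assoc, ← mul_inv, inv_mul_eq_div,
    le_div_iff₀ (by positivity)]
  nlinarith

section HalfHolder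

variable {σ : ℝ}

theorem DeadCoreJet.gradients_of_isLocalMax_half_holder (hA : 0 < A)
    (hx : DeadCoreJet N p q m M v x t₁ a₁ b₁ f₁) (hy : DeadCoreJet N p q m M v y t₂ a₂ b₂ f₂)
    (hσ : 0 < σ) (hxy : ‖x - y‖ = σ ^ 2) (hxc : ‖(2 * κ) • (x - c)‖ ≤ A / (2 * σ) / 2)
    (hmax : IsLocalMax (fun z : Euc N × Euc N =>
      v z.1 t₁ - v z.2 t₂ - A * √√(‖z.1 - z.2‖ ^ 2) - κ * ‖z.1 - c‖ ^ 2) (x, y)) :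
    ‖a₂‖ = A / (2 * σ) ∧ x - y = σ ^ 2 • ‖a₂‖⁻¹ • a₂ ∧ a₁ ≠ 0 ∧
      1 / 3 ≤ ⟪‖a₂‖⁻¹ • a₂, ‖a₁‖⁻¹ • a₁⟫ := by
  have hF := hasSecondDerivAt_const_mul_sqrt_sqrt A hσ
  rw [show σ ^ 4 = ‖x - y‖ ^ 2 by rw [hxy]; ring] at hF
  obtain ⟨ha₁, ha₂⟩ := hx.gradients_eq_of_isLocalMax_two_point hy hF hmax
  have hnorm : ‖a₂‖ = A / (2 * σ) := by
    rw [ha₂, norm_smul, hxy, Real.norm_of_nonneg (by positivity)]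
    field_simp
    norm_num
  have hpos : 0 < A / (2 * σ) := by positivity
  refine ⟨hnorm, ?_, ?_⟩
  · have hcoeff : σ ^ 2 * ((A / (2 * σ))⁻¹ * (2 * (A / (4 * σ ^ 3)))) = 1 := by
      field_simp
      norm_num
    rw [hnorm, ha₂, smul_smul, smul_smul, mul_assoc, hcoeff, one_smul]
  · rw [ha₁]
    exact norm_add_bounds_of_norm_le_half (norm_pos_iff.1 (hnorm ▸ hpos)) (hnorm ▸ hxc)

theorem DeadCoreJet.le_of_isLocalMax_half_holder (hp : 2 ≤ p) (hm : 0 ≤ m) (hA : 0 < A)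
    (hx : DeadCoreJet N p q m M v x t₁ a₁ b₁ f₁) (hy : DeadCoreJet N p q m M v y t₂ a₂ b₂ f₂)
    (hσ : 0 < σ) (hxy : ‖x - y‖ = σ ^ 2) (hxc : ‖(2 * κ) • (x - c)‖ ≤ A / (2 * σ) / 2)
    (hmax : IsLocalMax (fun z : Euc N × Euc N =>
      v z.1 t₁ - v z.2 t₂ - A * √√(‖z.1 - z.2‖ ^ 2) - κ * ‖z.1 - c‖ ^ 2) (x, y)) :
    A / σ ^ 3 ≤ 2 * κ * (N + p - 2) + (A / (2 * σ)) ^ (2 - p) * (b₂ + f₂) := by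
  obtain ⟨hnorm, hdir, hne₁, hangle⟩ :=
    hx.gradients_of_isLocalMax_half_holder hA hy hσ hxy hxc hmax
  have hF := hasSecondDerivAt_const_mul_sqrt_sqrt A hσ
  rw [show σ ^ 4 = ‖x - y‖ ^ 2 by rw [hxy]; ring] at hF
  have hpos : 0 < A / (2 * σ) := by positivity
  have hne₂ : a₂ ≠ 0 := norm_pos_iff.1 (hnorm ▸ hpos)
  obtain ⟨X, hX, heqX⟩ := hx.exists_hessian (.inl hne₁)
  obtain ⟨Y, hY, heqY⟩ := hy.exists_hessian (.inl hne₂)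
  have hcmp := normalizedPLap_le_of_inner_sub_inner_le (A := -(3 / 4 * (A / σ ^ 3)))
    (B := A / σ ^ 3 / 2) (C := 2 * κ) hp hne₁ hne₂ (fun ξ ζ => by
      refine (inner_sub_inner_le_of_isLocalMax_two_point hX hY hF hmax ξ ζ).trans_eq ?_
      rw [hdir, real_inner_smul_left]
      field_simp
      ring) (by
    have : 0 < A / σ ^ 3 := by positivity
    nlinarith)
  have hX₀ : 0 ≤ normalizedPLap p X a₁ := by
    have hf₁ : 0 ≤ f₁ := (mul_nonneg hm plusPowQ_nonneg).trans hx.le_absorption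
    rw [← mul_nonneg_iff_of_pos_left (show 0 < ‖a₁‖ ^ (p - 2) by positivity), heqX]
    exact add_nonneg hx.timeDeriv_nonneg hf₁
  have hY₀ : normalizedPLap p Y a₂ = (A / (2 * σ)) ^ (2 - p) * (b₂ + f₂) := by
    rw [← heqY, hnorm, ← mul_assoc, ← Real.rpow_add hpos]
    norm_num
  rw [hY₀] at hcmp
  linarith

end HalfHolder

end TwoPointMax

/-- Admissible parameters for the half-Hölder estimate `K - v(y, t₀ + h) ≤ ℓ K |c - y|^(1/2)` around
a point `(c, t₀)` with `v(c, t₀) = K`, when `v(·, t₀) ≤ Λ K` on the ball of radius `d / 2`. The last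
three conditions make the slope `ℓ` absorb the localization, the time derivative and the absorption
term of the equation, respectively. -/
structure HalfHolderScale (N : ℕ) (p q M Λ ℓ K d h : ℝ) : Prop where
  one_le_ratio : 1 ≤ Λ
  slope_pos : 0 < ℓ
  height_pos : 0 < K
  radius_pos : 0 < d
  radius_le_one : d ≤ 1
  time_pos : 0 < h
  localization : 8 * Λ * (N + p) ≤ ℓ * √d
  time : 4 * Λ ^ 4 ≤ ℓ ^ 4 * h * K ^ (p - 2)
  absorption : M * (Λ * K) ^ q ≤ K ^ (p - 1)

namespace HalfHolderScale

variable {N : ℕ} {p q M Λ ℓ K d h t σ : ℝ}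

theorem sqrt_radius_le_one (hs : HalfHolderScale N p q M Λ ℓ K d h) : √d ≤ 1 :=
  Real.sqrt_le_one.2 hs.radius_le_one

theorem sqrt_radius_pos (hs : HalfHolderScale N p q M Λ ℓ K d h) : 0 < √d :=
  Real.sqrt_pos.2 hs.radius_pos

theorem one_le_slope (hs : HalfHolderScale N p q M Λ ℓ K d h) (hNp : 3 ≤ N + p) : 1 ≤ ℓ := by
  have hℓ : ℓ * √d ≤ ℓ := mul_le_of_le_one_right hs.slope_pos.le hs.sqrt_radius_le_one
  nlinarith [hs.localization, hs.one_le_ratio]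

theorem slope_mul_time_lt (hs : HalfHolderScale N p q M Λ ℓ K d h) (ht : 0 < t)
    (hgap : ℓ * K * (h / t) * σ < Λ * K) : ℓ * σ * h < Λ * t := by
  have hK := hs.height_pos
  rw [← mul_lt_mul_iff_left₀ hK]
  field_simp at hgap
  nlinarith

theorem slope_mul_lt (hs : HalfHolderScale N p q M Λ ℓ K d h) (ht : 0 < t) (hth : t ≤ h)
    (hgap : ℓ * K * (h / t) * σ < Λ * K) : ℓ * σ < Λ := by
  have hΛ : Λ * t ≤ Λ * h := mul_le_mul_of_nonneg_left hth (by linarith [hs.one_le_ratio])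
  exact lt_of_mul_lt_mul_right ((hs.slope_mul_time_lt ht hgap).trans_le hΛ) hs.time_pos.le

theorem mul_lt_sqrt_radius (hs : HalfHolderScale N p q M Λ ℓ K d h) (ht : 0 < t) (hth : t ≤ h)
    (hσ : 0 < σ) (hgap : ℓ * K * (h / t) * σ < Λ * K) : 8 * (N + p) * σ < √d := by
  have hlocal := mul_le_mul_of_nonneg_right hs.localization hσ.le
  have hslope := mul_lt_mul_of_pos_right (hs.slope_mul_lt ht hth hgap) hs.sqrt_radius_pos
  have hΛ := hs.one_le_ratio
  nlinarith

theorem slope_mul_height_le (hs : HalfHolderScale N p q M Λ ℓ K d h) (ht : 0 < t) (hth : t ≤ h) :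
    ℓ * K ≤ ℓ * K * (h / t) :=
  le_mul_of_one_le_right (mul_pos hs.slope_pos hs.height_pos).le ((one_le_div ht).2 hth)

theorem height_le (hs : HalfHolderScale N p q M Λ ℓ K d h) (hNp : 3 ≤ N + p) (ht : 0 < t)
    (hth : t ≤ h) (hσ : 0 < σ) (hgap : ℓ * K * (h / t) * σ < Λ * K) :
    K ≤ ℓ * K * (h / t) / (2 * σ) := by
  have hσ₁ : 2 * σ ≤ 1 := by
    nlinarith [hs.mul_lt_sqrt_radius ht hth hσ hgap, hs.sqrt_radius_le_one]
  have hK := hs.height_pos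
  rw [le_div_iff₀ (by positivity)]
  calc K * (2 * σ) ≤ K := mul_le_of_le_one_right hK.le hσ₁
    _ ≤ ℓ * K := le_mul_of_one_le_left hK.le (hs.one_le_slope hNp)
    _ ≤ ℓ * K * (h / t) := hs.slope_mul_height_le ht hth

theorem penalty_gradient_le (hs : HalfHolderScale N p q M Λ ℓ K d h) (hNp : 3 ≤ N + p)
    (ht : 0 < t) (hth : t ≤ h) (hσ : 0 < σ) (hgap : ℓ * K * (h / t) * σ < Λ * K) :
    4 * Λ * K / d ≤ ℓ * K * (h / t) / (2 * σ) / 2 := by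
  have hd := Real.sq_sqrt hs.radius_pos.le
  have hroot := hs.sqrt_radius_pos
  have hσd : 2 * σ ≤ √d := by nlinarith [hs.mul_lt_sqrt_radius ht hth hσ hgap]
  have hΛ : 8 * Λ ≤ ℓ * √d := by nlinarith [hs.localization, hs.one_le_ratio]
  have key : 8 * Λ * (2 * σ) ≤ ℓ * √d * √d :=
    mul_le_mul hΛ hσd (by positivity) (mul_pos hs.slope_pos hroot).le
  rw [div_div, div_le_div_iff₀ hs.radius_pos (by positivity)]
  have hK := hs.height_pos
  calc 4 * Λ * K * (2 * σ * 2) = K * (8 * Λ * (2 * σ)) := by ring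
    _ ≤ K * (ℓ * √d * √d) := mul_le_mul_of_nonneg_left key hK.le
    _ = ℓ * K * d := by rw [mul_assoc ℓ, ← sq, hd]; ring
    _ ≤ ℓ * K * (h / t) * d :=
      mul_le_mul_of_nonneg_right (hs.slope_mul_height_le ht hth) hs.radius_pos.le

theorem penalty_hessian_le (hs : HalfHolderScale N p q M Λ ℓ K d h) (hNp : 3 ≤ N + p)
    (ht : 0 < t) (hth : t ≤ h) (hσ : 0 < σ) (hgap : ℓ * K * (h / t) * σ < Λ * K) :
    2 * (4 * Λ * K / d ^ 2) * (N + p - 2) ≤ ℓ * K * (h / t) / σ ^ 3 / 4 := by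
  have hd := Real.sq_sqrt hs.radius_pos.le
  have hroot := hs.sqrt_radius_pos
  have hσd : 2 * σ ≤ √d := by nlinarith [hs.mul_lt_sqrt_radius ht hth hσ hgap]
  have hσd₃ : 4 * σ ^ 3 ≤ √d ^ 3 := by
    linarith [pow_le_pow_left₀ (by positivity) hσd 3, pow_pos hσ 3]
  have hΛ : 8 * Λ * (N + p - 2) ≤ ℓ * √d := by linarith [hs.localization, hs.one_le_ratio]
  have key : 8 * Λ * (N + p - 2) * (4 * σ ^ 3) ≤ ℓ * √d * √d ^ 3 :=
    mul_le_mul hΛ hσd₃ (by positivity) (mul_pos hs.slope_pos hroot).le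
  have hK := hs.height_pos
  have hd₀ := hs.radius_pos
  calc 2 * (4 * Λ * K / d ^ 2) * (N + p - 2)
      = K * (8 * Λ * (N + p - 2) * (4 * σ ^ 3)) / (4 * d ^ 2 * σ ^ 3) := by field_simp; ring
    _ ≤ K * (ℓ * √d * √d ^ 3) / (4 * d ^ 2 * σ ^ 3) := by gcongr
    _ = ℓ * K / σ ^ 3 / 4 := by
      rw [mul_assoc ℓ, ← pow_succ', show √d ^ (3 + 1) = (√d ^ 2) ^ 2 by ring, hd]
      field_simp
    _ ≤ ℓ * K * (h / t) / σ ^ 3 / 4 := by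
      have := hs.slope_mul_height_le ht hth
      gcongr

theorem four_mul_pow_le (hs : HalfHolderScale N p q M Λ ℓ K d h) (ht : 0 < t) (hth : t ≤ h)
    (hσ : 0 < σ) (hgap : ℓ * K * (h / t) * σ < Λ * K) : 4 * σ ^ 4 ≤ t * K ^ (p - 2) := by
  have hℓ := hs.slope_pos
  have hh := hs.time_pos
  have hΛ : 0 < Λ := by linarith [hs.one_le_ratio]
  have hσℓ : (ℓ * σ * h) ^ 4 ≤ Λ ^ 4 * t * h ^ 3 := by
    calc (ℓ * σ * h) ^ 4 ≤ (Λ * t) ^ 4 :=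
          pow_le_pow_left₀ (by positivity) (hs.slope_mul_time_lt ht hgap).le 4
      _ = Λ ^ 4 * t * t ^ 3 := by ring
      _ ≤ Λ ^ 4 * t * h ^ 3 := by gcongr
  have key : ℓ ^ 4 * h ^ 4 * (4 * σ ^ 4) ≤ ℓ ^ 4 * h ^ 4 * (t * K ^ (p - 2)) := by
    calc ℓ ^ 4 * h ^ 4 * (4 * σ ^ 4) = 4 * (ℓ * σ * h) ^ 4 := by ring
      _ ≤ 4 * (Λ ^ 4 * t * h ^ 3) := by gcongr
      _ = 4 * Λ ^ 4 * (t * h ^ 3) := by ring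
      _ ≤ ℓ ^ 4 * h * K ^ (p - 2) * (t * h ^ 3) :=
        mul_le_mul_of_nonneg_right hs.time (by positivity)
      _ = ℓ ^ 4 * h ^ 4 * (t * K ^ (p - 2)) := by ring
  exact le_of_mul_le_mul_left key (by positivity)

theorem time_term_le (hs : HalfHolderScale N p q M Λ ℓ K d h) (hp : 2 ≤ p) (hNp : 3 ≤ N + p)
    (ht : 0 < t) (hth : t ≤ h) (hσ : 0 < σ) (hgap : ℓ * K * (h / t) * σ < Λ * K) :
    (ℓ * K * (h / t) / (2 * σ)) ^ (2 - p) * (ℓ * K * (h / t) * σ / t) ≤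
      ℓ * K * (h / t) / σ ^ 3 / 4 := by
  have hA : 0 < ℓ * K * (h / t) :=
    mul_pos (mul_pos hs.slope_pos hs.height_pos) (div_pos hs.time_pos ht)
  have hK := hs.height_pos
  have hKP := Real.rpow_le_rpow hK.le (hs.height_le hNp ht hth hσ hgap) (sub_nonneg.2 hp)
  have hpow : 4 * σ ^ 4 ≤ t * K ^ (p - 2) := hs.four_mul_pow_le ht hth hσ hgap
  generalize ℓ * K * (h / t) = A at hA hKP
  rw [show 2 - p = -(p - 2) by ring, Real.rpow_neg (by positivity), inv_mul_eq_div,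
    div_le_iff₀ (by positivity)]
  calc A * σ / t = A / σ ^ 3 / 4 * (4 * σ ^ 4 / t) := by field_simp
    _ ≤ A / σ ^ 3 / 4 * (t * K ^ (p - 2) / t) := by gcongr
    _ = A / σ ^ 3 / 4 * K ^ (p - 2) := by field_simp
    _ ≤ A / σ ^ 3 / 4 * (A / (2 * σ)) ^ (p - 2) := by gcongr

theorem absorption_term_le (hs : HalfHolderScale N p q M Λ ℓ K d h) (hp : 2 ≤ p)
    (hNp : 3 ≤ N + p) (ht : 0 < t) (hth : t ≤ h) (hσ : 0 < σ)
    (hgap : ℓ * K * (h / t) * σ < Λ * K) :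
    (ℓ * K * (h / t) / (2 * σ)) ^ (2 - p) * (M * (Λ * K) ^ q) ≤ ℓ * K * (h / t) / σ ^ 3 / 4 := by
  have hA : 0 < ℓ * K * (h / t) :=
    mul_pos (mul_pos hs.slope_pos hs.height_pos) (div_pos hs.time_pos ht)
  have hσ₁ : 2 * σ ^ 2 ≤ 1 := by
    nlinarith [hs.mul_lt_sqrt_radius ht hth hσ hgap, hs.sqrt_radius_le_one]
  have hKP := Real.rpow_le_rpow hs.height_pos.le (hs.height_le hNp ht hth hσ hgap)
    (by linarith : 0 ≤ p - 1)
  have habs := hs.absorption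
  generalize ℓ * K * (h / t) = A at hA hKP
  calc (A / (2 * σ)) ^ (2 - p) * (M * (Λ * K) ^ q)
      ≤ (A / (2 * σ)) ^ (2 - p) * (A / (2 * σ)) ^ (p - 1) := by
        gcongr
        exact habs.trans hKP
    _ = A / (2 * σ) := by rw [← Real.rpow_add (by positivity)]; norm_num
    _ = A / σ ^ 3 / 4 * (2 * σ ^ 2) := by field_simp; norm_num
    _ ≤ A / σ ^ 3 / 4 := mul_le_of_le_one_right (by positivity) hσ₁

end HalfHolderScale

/-- The doubled functional of the half-Hölder estimate: the excess of `v(x, t₀) - v(y, t₀ + s)` over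
the modulus `S (h / s) |x - y|^(1/2)`, with a penalty that keeps `x` close to `c`. The factor
`h / s` keeps maximum points away from `s = 0`. -/
def halfHolderGap {N : ℕ} (v : Euc N → ℝ → ℝ) (c : Euc N) (t₀ h S κ : ℝ)
    (z : Euc N × Euc N × ℝ) : ℝ :=
  v z.1 t₀ - v z.2.1 (t₀ + z.2.2) - S * (h / z.2.2) * √‖z.1 - z.2.1‖ - κ * ‖z.1 - c‖ ^ 2

section HalfHolderGap

variable {N : ℕ} {p q m M : ℝ} {v : Euc N → ℝ → ℝ} {c x y : Euc N} {t₀ d h S κ L s t : ℝ}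

theorem continuousOn_halfHolderGap (hd : 0 ≤ d) (hs : 0 < s)
    (hv : ContinuousOn (fun z : Euc N × ℝ => v z.1 z.2) (closedBall c d ×ˢ Icc t₀ (t₀ + h))) :
    ContinuousOn (halfHolderGap v c t₀ h S κ)
      (closedBall c (d / 2) ×ˢ closedBall c d ×ˢ Icc s h) := by
  have hx : ContinuousOn (fun z : Euc N × Euc N × ℝ => v z.1 t₀)
      (closedBall c (d / 2) ×ˢ closedBall c d ×ˢ Icc s h) := by
    refine hv.comp (f := fun z : Euc N × Euc N × ℝ => (z.1, t₀)) (by fun_prop) fun z hz =>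
      ⟨closedBall_subset_closedBall (by linarith) hz.1, le_rfl, ?_⟩
    linarith [hz.2.2.1, hz.2.2.2]
  have hy : ContinuousOn (fun z : Euc N × Euc N × ℝ => v z.2.1 (t₀ + z.2.2))
      (closedBall c (d / 2) ×ˢ closedBall c d ×ˢ Icc s h) := by
    refine hv.comp (f := fun z : Euc N × Euc N × ℝ => (z.2.1, t₀ + z.2.2)) (by fun_prop)
      fun z hz => ⟨hz.2.1, ?_, ?_⟩ <;> dsimp only <;> linarith [hz.2.2.1, hz.2.2.2]
  have htime : ContinuousOn (fun z : Euc N × Euc N × ℝ => h / z.2.2)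
      (closedBall c (d / 2) ×ˢ closedBall c d ×ˢ Icc s h) :=
    continuousOn_const.div (by fun_prop) fun z hz => (hs.trans_le hz.2.2.1).ne'
  exact ((hx.sub hy).sub ((continuousOn_const.mul htime).mul (by fun_prop))).sub (by fun_prop)

theorem IsDeadCoreOn.lt_of_halfHolderGap_pos
    (hv : IsDeadCoreOn N p q m M v (closedBall c d) (Icc t₀ (t₀ + h)))
    (hbd : ∀ x ∈ closedBall c (d / 2), v x t₀ ≤ L) (hx : x ∈ closedBall c (d / 2))
    (hy : y ∈ closedBall c d) (ht : 0 ≤ t) (hth : t ≤ h)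
    (hpos : 0 < halfHolderGap v c t₀ h S κ (x, y, t)) :
    S * (h / t) * √‖x - y‖ + κ * ‖x - c‖ ^ 2 < L := by
  have hvy : 0 ≤ v y (t₀ + t) := hv.nonneg hy ⟨by linarith, by linarith⟩
  have hvx := hbd x hx
  simp only [halfHolderGap] at hpos
  linarith

theorem IsDeadCoreOn.exists_isMaxOn_halfHolderGap
    (hv : IsDeadCoreOn N p q m M v (closedBall c d) (Icc t₀ (t₀ + h)))
    (hbd : ∀ x ∈ closedBall c (d / 2), v x t₀ ≤ L) (hd : 0 < d) (hh : 0 < h) (hS : 0 < S)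
    (hκ : 0 ≤ κ) (hL : 0 < L) (hy : y ∈ closedBall c d)
    (hpos : 0 < halfHolderGap v c t₀ h S κ (c, y, h)) :
    ∃ s > 0, ∃ x' ∈ closedBall c (d / 2), ∃ y' ∈ closedBall c d, ∃ t' ∈ Ioc s h,
      0 < halfHolderGap v c t₀ h S κ (x', y', t') ∧
      IsMaxOn (halfHolderGap v c t₀ h S κ) (closedBall c (d / 2) ×ˢ closedBall c d ×ˢ Icc s h)
        (x', y', t') := by
  have ht₀ : t₀ ∈ Icc t₀ (t₀ + h) := ⟨le_rfl, by linarith⟩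
  have hsub : closedBall c (d / 2) ⊆ closedBall c d := closedBall_subset_closedBall (by linarith)
  obtain ⟨ε, hε, hunif⟩ := Metric.uniformContinuousOn_iff.1 ((isCompact_closedBall c d
    ).uniformContinuousOn_of_continuous (hv.continuousOn_slice ht₀)) _ hpos
  obtain ⟨s, hs₀, hsh, hsε⟩ : ∃ s, 0 < s ∧ s < h ∧ L * s ≤ S * h * √ε := by
    refine ⟨min (h / 2) (S * h * √ε / L), by positivity, (min_le_left _ _).trans_lt (by linarith),
      ?_⟩
    rw [mul_comm, ← le_div_iff₀ hL]
    exact min_le_right _ _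
  have hmem : (c, y, h) ∈ closedBall c (d / 2) ×ˢ closedBall c d ×ˢ Icc s h :=
    ⟨mem_closedBall_self (by linarith), hy, hsh.le, le_rfl⟩
  obtain ⟨⟨x', y', t'⟩, ⟨hx', hy', hst', ht'h⟩, hmax⟩ := ((isCompact_closedBall c (d / 2)).prod
    ((isCompact_closedBall c d).prod isCompact_Icc)).exists_isMaxOn ⟨_, hmem⟩
    (continuousOn_halfHolderGap hd.le hs₀ hv.continuousOn)
  dsimp only at hx' hy' hst' ht'h
  have hge := hmax hmem
  refine ⟨s, hs₀, x', hx', y', hy', t', ⟨hst'.lt_of_ne ?_, ht'h⟩, hpos.trans_le hge, hmax⟩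
  rintro rfl
  have hlt := hv.lt_of_halfHolderGap_pos hbd hx' hy' hs₀.le ht'h (hpos.trans_le hge)
  have hpen : 0 ≤ κ * ‖x' - c‖ ^ 2 := by positivity
  rcases lt_or_ge (dist x' y') ε with hclose | hfar
  · have hosc := (abs_lt.1 (hunif x' (hsub hx') y' hy' hclose)).2
    have htime : v y' t₀ ≤ v y' (t₀ + s) :=
      hv.monotoneOn (convex_Icc _ _) hy' ht₀ ⟨by linarith, by linarith⟩ (by linarith)
    have hmod : 0 ≤ S * (h / s) * √‖x' - y'‖ := by positivity
    simp only [mem_ofPred_eq, halfHolderGap] at hge hosc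
    linarith
  · rw [dist_eq_norm] at hfar
    have hroot : S * (h / s) * √ε ≤ S * (h / s) * √‖x' - y'‖ := by gcongr
    have hL' : L ≤ S * (h / s) * √ε := by
      rw [show S * (h / s) * √ε = S * h * √ε / s by ring]
      exact (le_div_iff₀ hs₀).2 hsε
    linarith

theorem DeadCoreJet.timeDeriv_le_of_isMaxOn_halfHolderGap {a : Euc N} {b f : ℝ} {A B : Set (Euc N)}
    (hv : DeadCoreJet N p q m M v y (t₀ + t) a b f) (hs : 0 < s) (ht : t ∈ Ioc s h) (hx : x ∈ A)
    (hy : y ∈ B) (hmax : IsMaxOn (halfHolderGap v c t₀ h S κ) (A ×ˢ B ×ˢ Icc s h) (x, y, t)) :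
    b ≤ S * (h / t) * √‖x - y‖ / t := by
  have ht₀ : t ≠ 0 := (hs.trans ht.1).ne'
  have hshift : HasDerivAt (fun r => v y (t₀ + r)) b t := hv.hasDerivAt_time.comp_const_add t₀ t
  have hmod : HasDerivAt (fun r => S * (h / r) * √‖x - y‖) (-(S * (h / t) * √‖x - y‖ / t)) t :=
    ((((hasDerivAt_inv ht₀).const_mul h).const_mul S).mul_const _).congr_deriv (by field_simp)
  have hnonneg := nonneg_of_hasDerivAt_of_forall_le_left
    (((hshift.const_sub (v x t₀)).sub hmod).sub_const (κ * ‖x - c‖ ^ 2)) ht.1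
    fun r hr => hmax (show (x, y, r) ∈ A ×ˢ B ×ˢ Icc s h from
      ⟨hx, hy, hr.1.le, hr.2.le.trans ht.2⟩)
  linarith

theorem isLocalMax_of_isMaxOn_halfHolderGap {A B : Set (Euc N)} {I : Set ℝ} (hx : A ∈ 𝓝 x)
    (hy : B ∈ 𝓝 y) (ht : t ∈ I)
    (hmax : IsMaxOn (halfHolderGap v c t₀ h S κ) (A ×ˢ B ×ˢ I) (x, y, t)) :
    IsLocalMax (fun z : Euc N × Euc N => v z.1 t₀ - v z.2 (t₀ + t)
      - S * (h / t) * √√(‖z.1 - z.2‖ ^ 2) - κ * ‖z.1 - c‖ ^ 2) (x, y) := by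
  filter_upwards [prod_mem_nhds hx hy] with z hz
  have h := isMaxOn_iff.1 hmax (z.1, z.2, t) ⟨hz.1, hz.2, ht⟩
  simpa only [halfHolderGap, Real.sqrt_sq (norm_nonneg _)] using h

theorem IsDeadCoreOn.ne_of_halfHolderGap_pos
    (hv : IsDeadCoreOn N p q m M v (closedBall c d) (Icc t₀ (t₀ + h))) (hκ : 0 ≤ κ)
    (hy : y ∈ closedBall c d) (ht : 0 ≤ t) (hth : t ≤ h)
    (hpos : 0 < halfHolderGap v c t₀ h S κ (x, y, t)) : x ≠ y := by
  rintro rfl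
  have hmono : v x t₀ ≤ v x (t₀ + t) := hv.monotoneOn (convex_Icc _ _) hy
    ⟨le_rfl, by linarith⟩ ⟨by linarith, by linarith⟩ (by linarith)
  have hpen : 0 ≤ κ * ‖x - c‖ ^ 2 := by positivity
  simp only [halfHolderGap, sub_self, norm_zero, Real.sqrt_zero, mul_zero] at hpos
  linarith

theorem HalfHolderScale.norm_sub_lt {Λ ℓ K : ℝ} (hs : HalfHolderScale N p q M Λ ℓ K d h)
    (hpen : 4 * Λ * K / d ^ 2 * ‖x - c‖ ^ 2 < Λ * K) : ‖x - c‖ < d / 2 := by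
  have hd := hs.radius_pos
  have hΛK : 0 < Λ * K := mul_pos (by linarith [hs.one_le_ratio]) hs.height_pos
  refine lt_of_pow_lt_pow_left₀ 2 (by positivity) (lt_of_mul_lt_mul_left ?_
    (show 0 ≤ 4 * Λ * K / d ^ 2 by rw [mul_assoc 4]; positivity))
  calc 4 * Λ * K / d ^ 2 * ‖x - c‖ ^ 2 < Λ * K := hpen
    _ = 4 * Λ * K / d ^ 2 * (d / 2) ^ 2 := by field_simp; norm_num

theorem HalfHolderScale.norm_sub_lt_radius {Λ ℓ K : ℝ} (hs : HalfHolderScale N p q M Λ ℓ K d h)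
    (hNp : 3 ≤ N + p) (ht : 0 < t) (hth : t ≤ h) (hσ : 0 < √‖x - y‖)
    (hgap : ℓ * K * (h / t) * √‖x - y‖ < Λ * K) (hxc : ‖x - c‖ < d / 2) : ‖y - c‖ < d := by
  have hσd : 2 * √‖x - y‖ < √d := by nlinarith [hs.mul_lt_sqrt_radius ht hth hσ hgap]
  nlinarith [norm_sub_le_norm_sub_add_norm_sub y x c, norm_sub_rev x y,
    Real.sq_sqrt hs.radius_pos.le, Real.sq_sqrt (norm_nonneg (x - y))]

theorem HalfHolderScale.norm_penalty_gradient_le {Λ ℓ K σ : ℝ}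
    (hs : HalfHolderScale N p q M Λ ℓ K d h) (hNp : 3 ≤ N + p) (ht : 0 < t) (hth : t ≤ h)
    (hσ : 0 < σ) (hgap : ℓ * K * (h / t) * σ < Λ * K) (hxc : ‖x - c‖ ≤ d / 2) :
    ‖(2 * (4 * Λ * K / d ^ 2)) • (x - c)‖ ≤ ℓ * K * (h / t) / (2 * σ) / 2 := by
  refine le_trans ?_ (hs.penalty_gradient_le hNp ht hth hσ hgap)
  obtain ⟨hΛ, -, hK, hd, -⟩ := hs
  rw [norm_smul, Real.norm_of_nonneg (by positivity)]
  calc 2 * (4 * Λ * K / d ^ 2) * ‖x - c‖ ≤ 2 * (4 * Λ * K / d ^ 2) * (d / 2) := by gcongr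
    _ = 4 * Λ * K / d := by field_simp

theorem HalfHolderScale.not_isMaxOn_halfHolderGap {Λ ℓ K : ℝ}
    (hs : HalfHolderScale N p q M Λ ℓ K d h) (hN : 1 ≤ N) (hp : 2 ≤ p) (hq : 0 ≤ q) (hm : 0 ≤ m)
    (hM : 0 ≤ M) (hv : IsDeadCoreOn N p q m M v (closedBall c d) (Icc t₀ (t₀ + h)))
    (hbd : ∀ x ∈ closedBall c (d / 2), v x t₀ ≤ Λ * K) (hs₀ : 0 < s)
    (hx : x ∈ closedBall c (d / 2)) (hy : y ∈ closedBall c d) (ht : t ∈ Ioc s h)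
    (hpos : 0 < halfHolderGap v c t₀ h (ℓ * K) (4 * Λ * K / d ^ 2) (x, y, t)) :
    ¬ IsMaxOn (halfHolderGap v c t₀ h (ℓ * K) (4 * Λ * K / d ^ 2))
      (closedBall c (d / 2) ×ˢ closedBall c d ×ˢ Icc s h) (x, y, t) := by
  intro hmax
  have hNp : 3 ≤ N + p := by linarith [show (1 : ℝ) ≤ N by exact_mod_cast hN]
  obtain ⟨hΛ, hℓ, hK, hd, -, hh, -, -, -⟩ := id hs
  have ht₀ : 0 < t := hs₀.trans ht.1
  have hI : t₀ + t ∈ Icc t₀ (t₀ + h) := ⟨by linarith, by linarith [ht.2]⟩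
  have hσ : 0 < √‖x - y‖ := Real.sqrt_pos.2 (norm_sub_pos_iff.2
    (hv.ne_of_halfHolderGap_pos (by positivity) hy ht₀.le ht.2 hpos))
  have hlt := hv.lt_of_halfHolderGap_pos hbd hx hy ht₀.le ht.2 hpos
  have hgap : ℓ * K * (h / t) * √‖x - y‖ < Λ * K := by
    linarith [show 0 ≤ 4 * Λ * K / d ^ 2 * ‖x - c‖ ^ 2 by positivity]
  have hxc : ‖x - c‖ < d / 2 := hs.norm_sub_lt (by
    linarith [show 0 ≤ ℓ * K * (h / t) * √‖x - y‖ by positivity])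
  have hyc : ‖y - c‖ < d := hs.norm_sub_lt_radius hNp ht₀ ht.2 hσ hgap hxc
  obtain ⟨a₁, b₁, f₁, hjx⟩ :=
    hv.exists_jet x (closedBall_subset_closedBall (by linarith) hx) t₀ ⟨le_rfl, by linarith⟩
  obtain ⟨a₂, b₂, f₂, hjy⟩ := hv.exists_jet y hy _ hI
  have hineq := hjx.le_of_isLocalMax_half_holder hp hm (by positivity) hjy hσ
    (Real.sq_sqrt (norm_nonneg _)).symm
    (hs.norm_penalty_gradient_le hNp ht₀ ht.2 hσ hgap hxc.le)
    (isLocalMax_of_isMaxOn_halfHolderGap (I := Icc s h)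
      (closedBall_mem_nhds_of_mem (mem_ball_iff_norm.2 hxc))
      (closedBall_mem_nhds_of_mem (mem_ball_iff_norm.2 hyc)) ⟨ht.1.le, ht.2⟩ hmax)
  have hb : b₂ ≤ ℓ * K * (h / t) * √‖x - y‖ / t :=
    hjy.timeDeriv_le_of_isMaxOn_halfHolderGap hs₀ ht hx hy hmax
  have hf : f₂ ≤ M * (Λ * K) ^ q := by
    refine hjy.absorption_le.trans (mul_le_mul_of_nonneg_left (plusPowQ_le_rpow hq
      (by positivity) ?_) hM)
    have hmod : 0 ≤ ℓ * K * (h / t) * √‖x - y‖ + 4 * Λ * K / d ^ 2 * ‖x - c‖ ^ 2 := by positivity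
    simp only [halfHolderGap] at hpos
    linarith [hbd x hx]
  set P := (ℓ * K * (h / t) / (2 * √‖x - y‖)) ^ (2 - p)
  have hP : 0 ≤ P := by positivity
  linarith [hs.penalty_hessian_le hNp ht₀ ht.2 hσ hgap, hs.time_term_le hp hNp ht₀ ht.2 hσ hgap,
    hs.absorption_term_le hp hNp ht₀ ht.2 hσ hgap, mul_le_mul_of_nonneg_left hb hP,
    mul_le_mul_of_nonneg_left hf hP, show 0 < ℓ * K * (h / t) / √‖x - y‖ ^ 3 by positivity]

theorem IsDeadCoreOn.sub_le_sqrt_norm_sub {Λ ℓ K : ℝ} (hN : 1 ≤ N) (hp : 2 ≤ p) (hq : 0 ≤ q)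
    (hm : 0 ≤ m) (hM : 0 ≤ M)
    (hv : IsDeadCoreOn N p q m M v (closedBall c d) (Icc t₀ (t₀ + h)))
    (hs : HalfHolderScale N p q M Λ ℓ K d h)
    (hK : v c t₀ = K) (hbd : ∀ x ∈ closedBall c (d / 2), v x t₀ ≤ Λ * K) (hy : y ∈ closedBall c d) :
    K - v y (t₀ + h) ≤ ℓ * K * √‖c - y‖ := by
  obtain ⟨hΛ, hℓ, hK₀, hd, -, hh, -, -, -⟩ := id hs
  by_contra! hlt
  have hpos : 0 < halfHolderGap v c t₀ h (ℓ * K) (4 * Λ * K / d ^ 2) (c, y, h) := by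
    simp only [halfHolderGap, sub_self, norm_zero, div_self hh.ne', hK]
    linarith
  obtain ⟨s, hs₀, x', hx', y', hy', t', ht', hpos', hmax⟩ :=
    hv.exists_isMaxOn_halfHolderGap hbd hd hh (by positivity) (by positivity) (by positivity) hy
      hpos
  exact hs.not_isMaxOn_halfHolderGap hN hp hq hm hM hv hbd hs₀ hx' hy' ht' hpos' hmax

end HalfHolderGap

theorem HalfHolderScale.inv_slope_sq_le_radius {N : ℕ} {p q M Λ ℓ K d h : ℝ}
    (hs : HalfHolderScale N p q M Λ ℓ K d h) (hNp : 3 ≤ N + p) : 1 / (4 * ℓ ^ 2) ≤ d := by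
  have hℓ := hs.slope_pos
  have h24 : 24 ≤ ℓ * √d := by nlinarith [hs.localization, hs.one_le_ratio]
  rw [div_le_iff₀ (by positivity)]
  nlinarith [Real.sq_sqrt hs.radius_pos.le]

theorem IsDeadCoreOn.half_le_of_halfHolderScale {N : ℕ} {p q m M Λ ℓ K d h t₀ : ℝ}
    {v : Euc N → ℝ → ℝ} {c y : Euc N} (hN : 1 ≤ N) (hp : 2 ≤ p) (hq : 0 ≤ q)
    (hm : 0 ≤ m) (hM : 0 ≤ M)
    (hv : IsDeadCoreOn N p q m M v (closedBall c d) (Icc t₀ (t₀ + h)))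
    (hs : HalfHolderScale N p q M Λ ℓ K d h)
    (hK : v c t₀ = K) (hbd : ∀ x ∈ closedBall c (d / 2), v x t₀ ≤ Λ * K)
    (hy : y ∈ closedBall c (1 / (4 * ℓ ^ 2))) : K / 2 ≤ v y (t₀ + h) := by
  have hℓ := hs.slope_pos
  have hK₀ := hs.height_pos
  have hNp : 3 ≤ N + p := by linarith [show (1 : ℝ) ≤ N by exact_mod_cast hN]
  have hroot : √‖c - y‖ ≤ 1 / (2 * ℓ) := by
    refine Real.sqrt_le_iff.2 ⟨by positivity, ?_⟩
    rw [mem_closedBall_iff_norm'] at hy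
    exact hy.trans_eq (by field_simp; norm_num)
  have hmod : ℓ * K * √‖c - y‖ ≤ K / 2 := by
    calc ℓ * K * √‖c - y‖ ≤ ℓ * K * (1 / (2 * ℓ)) := by gcongr
      _ = K / 2 := by field_simp
  linarith [hv.sub_le_sqrt_norm_sub hN hp hq hm hM hs hK hbd
    (closedBall_subset_closedBall (hs.inv_slope_sq_le_radius hNp) hy)]

/-! ### Spreading of positivity by subsolutions -/

/-- The radial function `(x, t) ↦ W (‖x‖ ^ 2) t` is a strict subsolution of
`Δ_p w - ∂ₜ w = M w₊^q` at `‖x‖ = s` and time `t`, the equation not being degenerate there. -/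
def IsStrictRadialSubsolutionAt (N : ℕ) (p q M : ℝ) (W : ℝ → ℝ → ℝ) (s t : ℝ) : Prop :=
  ∃ F₁ F₂ Wt : ℝ, HasSecondDerivAt (fun r => W r t) F₁ F₂ (s ^ 2) ∧ HasDerivAt (W (s ^ 2)) Wt t ∧
    (F₁ ≠ 0 ∧ s ≠ 0 ∨ p = 2) ∧ Wt + M * W (s ^ 2) t ^ q < radialPLap N p F₁ F₂ s

theorem DeadCoreJet.not_isLocalMin_sub_barrier {N : ℕ} {p q m M ta t b f : ℝ}
    {v : Euc N → ℝ → ℝ} {W : ℝ → ℝ → ℝ} {x c a : Euc N} (hp : 2 ≤ p) (hq : 0 ≤ q) (hM : 0 ≤ M)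
    (hv : DeadCoreJet N p q m M v x t a b f)
    (hW : IsStrictRadialSubsolutionAt N p q M W ‖x - c‖ t) (hta : ta < t)
    (hlt : v x t < W (‖x - c‖ ^ 2) t)
    (hpast : ∀ s ∈ Ioo ta t, v x t - W (‖x - c‖ ^ 2) t ≤ v x s - W (‖x - c‖ ^ 2) s) :
    ¬ IsLocalMin (fun y => v y t - W (‖y - c‖ ^ 2) t) x := by
  intro hmin
  obtain ⟨F₁, F₂, Wt, hF, hWt, hnd, hstrict⟩ := hW
  have ha := hv.gradient_eq_of_isLocalExtr_sub_radial hF (.inl hmin)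
  have hspace : radialPLap N p F₁ F₂ ‖x - c‖ ≤ b + f := by
    refine hv.le_add_of_isLocalMin_sub_radial hp hF hmin (hnd.imp_left fun h => ?_)
    rw [ha]
    exact smul_ne_zero (mul_ne_zero two_ne_zero h.1) (norm_ne_zero_iff.1 h.2)
  have htime : 0 ≤ Wt - b := nonneg_of_hasDerivAt_of_forall_le_left
    (hWt.fun_sub hv.hasDerivAt_time) hta fun s hs => by linarith [hpast s hs]
  have habs : f ≤ M * W (‖x - c‖ ^ 2) t ^ q := hv.absorption_le.trans <|
    mul_le_mul_of_nonneg_left (plusPowQ_le_rpow hq (hv.nonneg.trans hlt.le) hlt.le) hM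
  linarith

theorem IsDeadCoreOn.barrier_le {N : ℕ} {p q m M ρ R ta tb : ℝ} {v : Euc N → ℝ → ℝ} {c : Euc N}
    {W : ℝ → ℝ → ℝ} (hp : 2 ≤ p) (hq : 0 ≤ q) (hM : 0 ≤ M)
    (hv : IsDeadCoreOn N p q m M v (closedBall c R) (Icc ta tb))
    (hW : ContinuousOn (fun z : ℝ × ℝ => W (z.1 ^ 2) z.2) (Icc ρ R ×ˢ Icc ta tb))
    (hinit : ∀ x, ‖x - c‖ ∈ Icc ρ R → W (‖x - c‖ ^ 2) ta ≤ v x ta)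
    (hinner : ∀ x, ‖x - c‖ = ρ → ∀ t ∈ Icc ta tb, W (‖x - c‖ ^ 2) t ≤ v x t)
    (houter : ∀ t ∈ Icc ta tb, W (R ^ 2) t ≤ 0)
    (hsub : ∀ s ∈ Ioo ρ R, ∀ t ∈ Ioc ta tb, 0 < W (s ^ 2) t →
      IsStrictRadialSubsolutionAt N p q M W s t) :
    ∀ x, ‖x - c‖ ∈ Icc ρ R → ∀ t ∈ Icc ta tb, W (‖x - c‖ ^ 2) t ≤ v x t := by
  intro x₁ hx₁ t₁ ht₁
  by_contra! hlt₁
  have hmem {x : Euc N} (hx : ‖x - c‖ ∈ Icc ρ R) : x ∈ closedBall c R :=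
    mem_closedBall_iff_norm.2 hx.2
  have hS : IsCompact ({x : Euc N | ‖x - c‖ ∈ Icc ρ R} ×ˢ Icc ta tb) :=
    ((isCompact_closedBall c R).of_isClosed_subset (isClosed_Icc.preimage (by fun_prop))
      fun x hx => hmem hx).prod isCompact_Icc
  have hcont : ContinuousOn (fun z : Euc N × ℝ => v z.1 z.2 - W (‖z.1 - c‖ ^ 2) z.2)
      ({x : Euc N | ‖x - c‖ ∈ Icc ρ R} ×ˢ Icc ta tb) :=
    (hv.continuousOn.mono fun z hz => ⟨hmem hz.1, hz.2⟩).sub <|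
      hW.comp (f := fun z : Euc N × ℝ => (‖z.1 - c‖, z.2)) (by fun_prop) fun z hz => hz
  obtain ⟨⟨x, t⟩, ⟨hx, ht⟩, hmin⟩ := hS.exists_isMinOn ⟨(x₁, t₁), hx₁, ht₁⟩ hcont
  simp only [mem_ofPred_eq] at hx ht
  have hmin {y s} (hy : ‖y - c‖ ∈ Icc ρ R) (hs : s ∈ Icc ta tb) :
      v x t - W (‖x - c‖ ^ 2) t ≤ v y s - W (‖y - c‖ ^ 2) s :=
    isMinOn_iff.1 hmin (y, s) ⟨hy, hs⟩
  have hlt : v x t < W (‖x - c‖ ^ 2) t := by linarith [hmin hx₁ ht₁]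
  have hpos : 0 < W (‖x - c‖ ^ 2) t := (hv.nonneg (hmem hx) ht).trans_lt hlt
  have hlower : ρ < ‖x - c‖ := hx.1.lt_of_ne fun h => hlt.not_ge (hinner x h.symm t ht)
  have hupper : ‖x - c‖ < R := hx.2.lt_of_ne fun h => hpos.not_ge (h ▸ houter t ht)
  have hta : ta < t := ht.1.lt_of_ne fun h => hlt.not_ge (h ▸ hinit x hx)
  obtain ⟨a, b, f, hjet⟩ := hv.exists_jet x (hmem hx) t ht
  refine hjet.not_isLocalMin_sub_barrier hp hq hM (hsub _ ⟨hlower, hupper⟩ t ⟨hta, ht.2⟩ hpos) hta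
    hlt (fun s hs => hmin hx ⟨hs.1.le, hs.2.le.trans ht.2⟩) ?_
  have hnorm : Tendsto (fun y : Euc N => ‖y - c‖) (𝓝 x) (𝓝 ‖x - c‖) :=
    (by fun_prop : Continuous fun y : Euc N => ‖y - c‖).tendsto x
  filter_upwards [hnorm.eventually (Icc_mem_nhds hlower hupper)] with y hy using hmin hy ht

theorem sq_rpow_neg_half {s : ℝ} (hs : 0 < s) (N : ℕ) : (s ^ 2) ^ (-(N / 2) : ℝ) = (s ^ N)⁻¹ := by
  rw [Real.rpow_neg (by positivity), ← Real.rpow_natCast s 2, ← Real.rpow_mul hs.le,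
    ← Real.rpow_natCast s N]
  congr 2
  push_cast
  ring

theorem rpow_le_radialPLap_rpow_neg_half {N : ℕ} {p B s : ℝ} (hN : 1 ≤ N) (hp : 2 ≤ p)
    (hB : 0 < B) (hs : 0 < s) (hs₂ : s ≤ 2) :
    (2 * B / 2 ^ (N + 2)) ^ (p - 1) ≤
      radialPLap N p (B * (-(N / 2) * (s ^ 2) ^ (-(N / 2) - 1 : ℝ)))
        (B * (-(N / 2) * (-(N / 2) - 1) * (s ^ 2) ^ (-(N / 2) - 2 : ℝ))) s := by
  have hN' : (1 : ℝ) ≤ N := by exact_mod_cast hN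
  set Z := 2 * B / 2 ^ (N + 2) with hZ
  have hZ₀ : 0 < Z := by positivity
  have hY₂ : (s ^ 2) ^ (-(N / 2) - 2 : ℝ) = (s ^ (N + 4))⁻¹ := by
    rw [← sq_rpow_neg_half hs]; congr 1; push_cast; ring
  have hY₁ : (s ^ 2) ^ (-(N / 2) - 1 : ℝ) = (s ^ (N + 2))⁻¹ := by
    rw [← sq_rpow_neg_half hs]; congr 1; push_cast; ring
  have hslope : Z ≤ 2 * |B * (-(N / 2) * (s ^ 2) ^ (-(N / 2) - 1 : ℝ))| * s := by
    have hpow : s ^ (N + 1) ≤ 2 ^ (N + 1) := pow_le_pow_left₀ hs.le hs₂ _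
    calc Z = B * 1 / 2 ^ (N + 1) := by rw [hZ]; field_simp; ring
      _ ≤ B * N / s ^ (N + 1) := by gcongr
      _ = _ := by
        rw [hY₁, neg_mul, mul_neg, abs_neg, abs_of_pos (by positivity)]
        field_simp
        ring
  have hlap : Z ≤ 4 * (B * (-(N / 2) * (-(N / 2) - 1) * (s ^ 2) ^ (-(N / 2) - 2 : ℝ))) * s ^ 2 *
      (p - 1) + 2 * (B * (-(N / 2) * (s ^ 2) ^ (-(N / 2) - 1 : ℝ))) * (N + p - 2) := by
    have hpow : s ^ (N + 2) ≤ 2 ^ (N + 2) := pow_le_pow_left₀ hs.le hs₂ _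
    have hcoeff : 2 ≤ N * (N * (p - 2) + p) := by
      nlinarith [mul_nonneg (zero_le_one.trans hN') (sub_nonneg.2 hp)]
    calc Z = B * 2 / 2 ^ (N + 2) := by rw [hZ]; ring
      _ ≤ B * (N * (N * (p - 2) + p)) / s ^ (N + 2) := by gcongr
      _ = _ := by
        rw [hY₁, hY₂]
        field_simp
        ring
  calc Z ^ (p - 1) = Z ^ (p - 2) * Z := by rw [← Real.rpow_add_one hZ₀.ne']; congr 1; ring
    _ ≤ _ := mul_le_mul (Real.rpow_le_rpow hZ₀.le hslope (by linarith)) hlap hZ₀.le (by positivity)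

/-- The barrier `K / 2 * ((ρ / ‖x‖) ^ N - φ t)`, as a function of `‖x‖ ^ 2` and `t`, where `φ`
decreases linearly from `1` at time `ta` to `(ρ / 2) ^ N` at time `tb`. -/
def sinkingPowerBarrier (N : ℕ) (K ρ ta tb r t : ℝ) : ℝ :=
  K / 2 * (ρ ^ N * r ^ (-(N / 2) : ℝ) -
    ((ρ / 2) ^ N + (1 - (ρ / 2) ^ N) * ((tb - t) / (tb - ta))))

section SinkingPowerBarrier

variable {N : ℕ} {p q M K ρ ta tb s t : ℝ}

theorem sinkingPowerBarrier_sq_le (hK : 0 < K) (hρ : 0 < ρ) (hρ₁ : ρ ≤ 1) (hT : ta < tb)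
    (hs : 0 < s) (ht : t ≤ tb) :
    sinkingPowerBarrier N K ρ ta tb (s ^ 2) t ≤ K / 2 * ((ρ / s) ^ N - (ρ / 2) ^ N) := by
  have hle : (ρ / 2) ^ N ≤ 1 := pow_le_one₀ (by positivity) (by linarith)
  have hφ : 0 ≤ (1 - (ρ / 2) ^ N) * ((tb - t) / (tb - ta)) :=
    mul_nonneg (by linarith) (div_nonneg (by linarith) (by linarith))
  rw [sinkingPowerBarrier, sq_rpow_neg_half hs, ← div_eq_mul_inv, ← div_pow]
  exact mul_le_mul_of_nonneg_left (by linarith) (by positivity)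

theorem sinkingPowerBarrier_sq_le_half (hK : 0 < K) (hρ : 0 < ρ) (hρ₁ : ρ ≤ 1) (hT : ta < tb)
    (hs : ρ ≤ s) (ht : t ≤ tb) : sinkingPowerBarrier N K ρ ta tb (s ^ 2) t ≤ K / 2 := by
  have hs₀ : 0 < s := hρ.trans_le hs
  have hpow : (ρ / s) ^ N ≤ 1 := pow_le_one₀ (by positivity) ((div_le_one hs₀).2 hs)
  calc _ ≤ K / 2 * ((ρ / s) ^ N - (ρ / 2) ^ N) := sinkingPowerBarrier_sq_le hK hρ hρ₁ hT hs₀ ht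
    _ ≤ K / 2 * 1 := mul_le_mul_of_nonneg_left
      (by linarith [pow_pos (half_pos hρ) N]) (by positivity)
    _ = K / 2 := mul_one _

theorem sinkingPowerBarrier_sq_start (hT : ta < tb) (hs : 0 < s) :
    sinkingPowerBarrier N K ρ ta tb (s ^ 2) ta = K / 2 * ((ρ / s) ^ N - 1) := by
  rw [sinkingPowerBarrier, sq_rpow_neg_half hs, ← div_eq_mul_inv, ← div_pow,
    div_self (sub_pos.2 hT).ne']
  ring

theorem sinkingPowerBarrier_sq_end_pos (hN : 1 ≤ N) (hK : 0 < K) (hρ : 0 < ρ) (hs : 0 < s)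
    (hs₂ : s < 2) : 0 < sinkingPowerBarrier N K ρ ta tb (s ^ 2) tb := by
  rw [sinkingPowerBarrier, sq_rpow_neg_half hs, ← div_eq_mul_inv, ← div_pow, sub_self, zero_div,
    mul_zero, add_zero]
  have : (ρ / 2) ^ N < (ρ / s) ^ N := by gcongr
  exact mul_pos (by positivity) (sub_pos.2 this)

theorem isStrictRadialSubsolutionAt_sinkingPowerBarrier (hN : 1 ≤ N) (hp : 2 ≤ p) (hq : 0 ≤ q)
    (hM : 0 ≤ M) (hK : 0 < K) (hρ : 0 < ρ) (hρ₁ : ρ ≤ 1) (hT : ta < tb)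
    (hcond : K / (2 * (tb - ta)) + M * K ^ q < (K * ρ ^ N / 2 ^ (N + 2)) ^ (p - 1))
    (hs : s ∈ Ioo ρ 2) (ht : t ≤ tb) (hpos : 0 < sinkingPowerBarrier N K ρ ta tb (s ^ 2) t) :
    IsStrictRadialSubsolutionAt N p q M (sinkingPowerBarrier N K ρ ta tb) s t := by
  have hs₀ : 0 < s := hρ.trans hs.1
  have hN₀ : (0 : ℝ) < N := by exact_mod_cast hN
  have hspace : HasSecondDerivAt (fun r => sinkingPowerBarrier N K ρ ta tb r t) _ _ (s ^ 2) :=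
    ((((hasSecondDerivAt_rpow_const (by positivity)).const_mul (ρ ^ N)).sub
      (.const _ _)).const_mul (K / 2)).congr
      (b' := K / 2 * ρ ^ N * (-(N / 2) * (s ^ 2) ^ (-(N / 2) - 1 : ℝ)))
      (c' := K / 2 * ρ ^ N * (-(N / 2) * (-(N / 2) - 1) * (s ^ 2) ^ (-(N / 2) - 2 : ℝ)))
      (by ring) (by ring)
  have htime : HasDerivAt (sinkingPowerBarrier N K ρ ta tb (s ^ 2))
      (K / (2 * (tb - ta)) * (1 - (ρ / 2) ^ N)) t := by
    refine (((((hasDerivAt_id t).const_sub tb).div_const (tb - ta)).const_mul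
      (1 - (ρ / 2) ^ N)).const_add ((ρ / 2) ^ N) |>.const_sub _ |>.const_mul (K / 2)).congr_deriv ?_
    field_simp
  refine ⟨_, _, _, hspace, htime, .inl ⟨?_, hs₀.ne'⟩, ?_⟩
  · exact mul_ne_zero (by positivity) (mul_ne_zero (by simpa using hN₀.ne') (by positivity))
  have hlap := rpow_le_radialPLap_rpow_neg_half hN hp (B := K / 2 * ρ ^ N) (by positivity) hs₀
    hs.2.le
  have htime_le : K / (2 * (tb - ta)) * (1 - (ρ / 2) ^ N) ≤ K / (2 * (tb - ta)) :=
    mul_le_of_le_one_right (div_nonneg hK.le (by linarith)) (by linarith [pow_pos (half_pos hρ) N])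
  have habs : M * sinkingPowerBarrier N K ρ ta tb (s ^ 2) t ^ q ≤ M * K ^ q := by
    have := sinkingPowerBarrier_sq_le_half (N := N) hK hρ hρ₁ hT hs.1.le ht
    gcongr
    linarith
  rw [show 2 * (K / 2 * ρ ^ N) = K * ρ ^ N by ring] at hlap
  linarith

theorem continuousOn_sinkingPowerBarrier (hρ : 0 < ρ) :
    ContinuousOn (fun z : ℝ × ℝ => sinkingPowerBarrier N K ρ ta tb (z.1 ^ 2) z.2)
      (Icc ρ 2 ×ˢ Icc ta tb) := by
  refine continuousOn_const.mul ((continuousOn_const.mul ?_).sub (by fun_prop))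
  exact ContinuousOn.rpow_const (by fun_prop) fun z hz =>
    .inl (pow_ne_zero 2 (hρ.trans_le hz.1.1).ne')

end SinkingPowerBarrier

theorem IsDeadCoreOn.pos_of_half_le_closedBall {N : ℕ} {p q m M ρ K ta tb : ℝ} {v : Euc N → ℝ → ℝ}
    {c y : Euc N} (hN : 1 ≤ N) (hp : 2 ≤ p) (hq : 0 ≤ q) (hM : 0 ≤ M)
    (hv : IsDeadCoreOn N p q m M v (closedBall c 2) (Icc ta tb))
    (hρ : 0 < ρ) (hρ₁ : ρ ≤ 1) (hK : 0 < K) (hT : ta < tb)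
    (hhalf : ∀ x ∈ closedBall c ρ, ∀ t ∈ Icc ta tb, K / 2 ≤ v x t)
    (hcond : K / (2 * (tb - ta)) + M * K ^ q < (K * ρ ^ N / 2 ^ (N + 2)) ^ (p - 1))
    (hy : y ∈ ball c 1) : 0 < v y tb := by
  have htb : tb ∈ Icc ta tb := right_mem_Icc.2 hT.le
  rcases le_or_gt ‖y - c‖ ρ with hyρ | hyρ
  · linarith [hhalf y (mem_closedBall_iff_norm.2 hyρ) tb htb]
  have hy₁ : ‖y - c‖ < 1 := mem_ball_iff_norm.1 hy
  refine (sinkingPowerBarrier_sq_end_pos hN hK hρ (hρ.trans hyρ) (by linarith)).trans_le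
    (hv.barrier_le hp hq hM (continuousOn_sinkingPowerBarrier hρ) ?_ ?_ ?_
      (fun s hs t ht => isStrictRadialSubsolutionAt_sinkingPowerBarrier hN hp hq hM hK hρ hρ₁ hT
        hcond hs ht.2) y ⟨hyρ.le, by linarith⟩ tb htb)
  · intro x hx
    have hx₀ : 0 < ‖x - c‖ := hρ.trans_le hx.1
    have hpow : (ρ / ‖x - c‖) ^ N ≤ 1 := pow_le_one₀ (by positivity) ((div_le_one hx₀).2 hx.1)
    rw [sinkingPowerBarrier_sq_start hT hx₀]
    exact (mul_nonpos_of_nonneg_of_nonpos (by positivity) (by linarith)).trans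
      (hv.nonneg (mem_closedBall_iff_norm.2 hx.2) (left_mem_Icc.2 hT.le))
  · exact fun x hx t ht => (sinkingPowerBarrier_sq_le_half hK hρ hρ₁ hT hx.ge ht.2).trans
      (hhalf x (mem_closedBall_iff_norm.2 hx.le) t ht)
  · exact fun t ht => (sinkingPowerBarrier_sq_le hK hρ hρ₁ hT two_pos ht.2).trans (by simp)

/-- The barrier `g(t) (R(t)² - ‖x‖²)₊²`, as a function of `‖x‖ ^ 2` and `t`, supported in the ball
of radius `R(t)`. -/
def expandingBarrier (g R : ℝ → ℝ) (r t : ℝ) : ℝ := g t * max (R t ^ 2 - r) 0 ^ 2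

section ExpandingBarrier

variable {g R : ℝ → ℝ} {g' R' r s t : ℝ}

theorem expandingBarrier_of_le (h : R t ^ 2 ≤ r) : expandingBarrier g R r t = 0 := by
  simp [expandingBarrier, max_eq_right (sub_nonpos.2 h)]

theorem expandingBarrier_of_ge (h : r ≤ R t ^ 2) :
    expandingBarrier g R r t = g t * (R t ^ 2 - r) ^ 2 := by
  rw [expandingBarrier, max_eq_left (sub_nonneg.2 h)]

theorem expandingBarrier_pos (hg : 0 < g t) (h : r < R t ^ 2) : 0 < expandingBarrier g R r t := by
  rw [expandingBarrier_of_ge h.le]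
  exact mul_pos hg (pow_pos (sub_pos.2 h) 2)

theorem lt_of_expandingBarrier_pos (h : 0 < expandingBarrier g R r t) : r < R t ^ 2 := by
  by_contra! hle
  exact h.ne' (expandingBarrier_of_le hle)

theorem expandingBarrier_le (hg : 0 ≤ g t) (hr : 0 ≤ r) :
    expandingBarrier g R r t ≤ g t * R t ^ 4 := by
  have hmax : max (R t ^ 2 - r) 0 ≤ R t ^ 2 := max_le (by linarith) (sq_nonneg _)
  calc _ ≤ g t * (R t ^ 2) ^ 2 := by unfold expandingBarrier; gcongr
    _ = _ := by ring

theorem hasSecondDerivAt_expandingBarrier (hr : r < R t ^ 2) :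
    HasSecondDerivAt (fun r => expandingBarrier g R r t) (-(2 * g t * (R t ^ 2 - r))) (2 * g t)
      r := by
  refine ⟨fun x => -(2 * g t * (R t ^ 2 - x)), ?_, rfl, ?_⟩
  · filter_upwards [gt_mem_nhds hr] with x hx
    have hsq : HasDerivAt (fun y => g t * (R t ^ 2 - y) ^ 2) (-(2 * g t * (R t ^ 2 - x))) x :=
      ((((hasDerivAt_id x).const_sub (R t ^ 2)).pow 2).const_mul (g t)).congr_deriv
        (by simp; ring)
    refine hsq.congr_of_eventuallyEq ?_
    filter_upwards [gt_mem_nhds hx] with y hy using expandingBarrier_of_ge hy.le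
  · exact ((((hasDerivAt_id r).const_sub (R t ^ 2)).const_mul (2 * g t)).neg).congr_deriv (by ring)

theorem hasDerivAt_expandingBarrier (hg : HasDerivAt g g' t) (hR : HasDerivAt R R' t)
    (hr : r < R t ^ 2) :
    HasDerivAt (expandingBarrier g R r)
      (g' * (R t ^ 2 - r) ^ 2 + g t * (4 * R t * R' * (R t ^ 2 - r))) t := by
  have hprod := hg.fun_mul (((hR.fun_pow 2).sub_const r).fun_pow 2)
  refine (hprod.congr_of_eventuallyEq ?_).congr_deriv (by simp only [Nat.cast_ofNat]; ring)
  filter_upwards [(hR.continuousAt.pow 2).eventually (lt_mem_nhds hr)] with x hx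
    using expandingBarrier_of_ge hx.le

-- With `G = R² - ‖x‖²` and `β = N + 2 + R R'`, the linear part of the operator is at least
-- `g (8 R² - 4 β G + (β G / R)²) = g (4 R² + (β G / R - 2 R)²)`.
theorem isStrictRadialSubsolutionAt_expandingBarrier {N : ℕ} {q M lam : ℝ} (hq : 0 ≤ q)
    (hM : 0 ≤ M) (hg₀ : 0 < g t) (hR₀ : 0 < R t) (hg : HasDerivAt g (-(lam * g t)) t)
    (hR : HasDerivAt R R' t) (hlam : (N + 2 + R t * R') ^ 2 ≤ lam * R t ^ 2)
    (hcond : M * (g t * R t ^ 4) ^ q < 4 * R t ^ 2 * g t)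
    (hpos : 0 < expandingBarrier g R (s ^ 2) t) :
    IsStrictRadialSubsolutionAt N 2 q M (expandingBarrier g R) s t := by
  have hlt := lt_of_expandingBarrier_pos hpos
  refine ⟨_, _, _, hasSecondDerivAt_expandingBarrier hlt, hasDerivAt_expandingBarrier hg hR hlt,
    .inr rfl, ?_⟩
  have habs : M * expandingBarrier g R (s ^ 2) t ^ q ≤ M * (g t * R t ^ 4) ^ q := by
    gcongr
    exact expandingBarrier_le hg₀.le (sq_nonneg s)
  rw [radialPLap, sub_self, Real.rpow_zero, one_mul]
  set G := R t ^ 2 - s ^ 2 with hG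
  have hlamG : (N + 2 + R t * R') ^ 2 * G ^ 2 / R t ^ 2 ≤ lam * G ^ 2 := by
    rw [div_le_iff₀ (by positivity)]
    nlinarith [mul_le_mul_of_nonneg_right hlam (sq_nonneg G)]
  have hquad : 4 * R t ^ 2 ≤
      8 * R t ^ 2 - 4 * (N + 2 + R t * R') * G + (N + 2 + R t * R') ^ 2 * G ^ 2 / R t ^ 2 := by
    have hsq : (N + 2 + R t * R') ^ 2 * G ^ 2 / R t ^ 2 - 4 * (N + 2 + R t * R') * G
        + 4 * R t ^ 2 = ((N + 2 + R t * R') * G / R t - 2 * R t) ^ 2 := by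
      field_simp
      ring
    linarith [sq_nonneg ((N + 2 + R t * R') * G / R t - 2 * R t)]
  have hs : s ^ 2 = R t ^ 2 - G := by rw [hG]; ring
  rw [hs] at habs ⊢
  linarith [mul_le_mul_of_nonneg_left (hquad.trans (add_le_add_right hlamG _)) hg₀.le]

end ExpandingBarrier

/-- A radius growing from `ρ` at time `t = 0` to more than `1` at time `T`: diffusively at first,
then with speed `1 / T`. -/
def spreadingRadius (ρ T t : ℝ) : ℝ := √(ρ ^ 2 + t) + t / T

/-- The decay of a solution of the heat equation that spreads as fast as `spreadingRadius ρ T`. -/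
def spreadingDecay (n : ℕ) (ρ T t : ℝ) : ℝ :=
  Real.exp (-(2 * t / T ^ 2)) * (ρ ^ 2 / (ρ ^ 2 + t)) ^ n

section Spreading

variable {n : ℕ} {ρ T t : ℝ}

theorem hasDerivAt_spreadingRadius (hρ : 0 < ρ) (ht : 0 ≤ t) :
    HasDerivAt (spreadingRadius ρ T) (1 / (2 * √(ρ ^ 2 + t)) + 1 / T) t :=
  (((hasDerivAt_id t).const_add (ρ ^ 2)).sqrt (by simp only [id]; positivity)).add
    ((hasDerivAt_id t).div_const T)

theorem hasDerivAt_spreadingDecay (hρ : 0 < ρ) (ht : 0 ≤ t) :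
    HasDerivAt (spreadingDecay n ρ T)
      (-((2 / T ^ 2 + n / (ρ ^ 2 + t)) * spreadingDecay n ρ T t)) t := by
  have hw : ρ ^ 2 + t ≠ 0 := by positivity
  have h := (((((hasDerivAt_id t).const_mul 2).div_const (T ^ 2)).fun_neg).exp).fun_mul
    ((((hasDerivAt_const t (ρ ^ 2)).fun_div ((hasDerivAt_id t).const_add (ρ ^ 2)) hw)).fun_pow n)
  refine h.congr_deriv ?_
  rcases n with _ | n
  · simp [spreadingDecay]
    ring
  · simp only [spreadingDecay, id, Nat.add_sub_cancel, pow_succ]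
    field_simp
    ring

theorem spreadingRadius_rate_le {N : ℕ} (hρ : 0 < ρ) (hT : 0 < T) (ht : 0 ≤ t) :
    (N + 2 + spreadingRadius ρ T t * (1 / (2 * √(ρ ^ 2 + t)) + 1 / T)) ^ 2 ≤
      (2 / T ^ 2 + (2 * (N + 3) ^ 2 : ℕ) / (ρ ^ 2 + t)) * spreadingRadius ρ T t ^ 2 := by
  set w := √(ρ ^ 2 + t)
  have hw₀ : 0 < w := Real.sqrt_pos.2 (by positivity)
  have hww : ρ ^ 2 + t = w ^ 2 := (Real.sq_sqrt (by positivity)).symm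
  have hwR : w ≤ spreadingRadius ρ T t := le_add_of_nonneg_right (by positivity)
  set R := spreadingRadius ρ T t
  have hR₀ : 0 < R := hw₀.trans_le hwR
  have hlin : N + 2 + R * (1 / (2 * w) + 1 / T) ≤ R * ((N + 3) / w + 1 / T) := by
    have hN : (N + 2 : ℝ) ≤ R * ((N + 2) / w) := by
      rw [mul_div_assoc', le_div_iff₀ hw₀, mul_comm]
      gcongr
    have hhalf : 0 ≤ R * (1 / (2 * w)) := by positivity
    have : R * ((N + 3) / w + 1 / T) =
        R * ((N + 2) / w) + R * (1 / (2 * w)) + R * (1 / (2 * w) + 1 / T) := by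
      field_simp
      ring
    linarith
  have hsq : ((N + 3) / w + 1 / T) ^ 2 ≤ 2 / T ^ 2 + (2 * (N + 3) ^ 2 : ℕ) / w ^ 2 := by
    have := add_sq_le (a := (N + 3) / w) (b := 1 / T)
    push_cast
    calc _ ≤ 2 * (((N + 3) / w) ^ 2 + (1 / T) ^ 2) := this
      _ = _ := by field_simp; ring
  rw [hww, mul_comm _ (R ^ 2)]
  calc _ ≤ (R * ((N + 3) / w + 1 / T)) ^ 2 := pow_le_pow_left₀ (by positivity) hlin 2
    _ = R ^ 2 * ((N + 3) / w + 1 / T) ^ 2 := mul_pow ..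
    _ ≤ _ := by gcongr

theorem continuous_spreadingRadius : Continuous (spreadingRadius ρ T) := by
  unfold spreadingRadius
  fun_prop

theorem le_spreadingRadius (hT : 0 < T) (ht : 0 ≤ t) : ρ ≤ spreadingRadius ρ T t :=
  (Real.le_sqrt_of_sq_le (by linarith)).trans (le_add_of_nonneg_right (by positivity))

theorem spreadingRadius_le_two (hρT : ρ ^ 2 + T ≤ 1) (hT : 0 < T) (ht : t ≤ T) :
    spreadingRadius ρ T t ≤ 2 := by
  have h₁ : √(ρ ^ 2 + t) ≤ 1 := Real.sqrt_le_one.2 (by linarith)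
  have h₂ : t / T ≤ 1 := (div_le_one hT).2 ht
  unfold spreadingRadius
  linarith

theorem one_lt_spreadingRadius (hρ : 0 < ρ) (hT : 0 < T) : 1 < spreadingRadius ρ T T := by
  rw [spreadingRadius, div_self hT.ne']
  exact lt_add_of_pos_left 1 (Real.sqrt_pos.2 (by positivity))

theorem spreadingDecay_pos (hρ : 0 < ρ) (ht : 0 ≤ t) : 0 < spreadingDecay n ρ T t := by
  unfold spreadingDecay
  positivity

theorem spreadingDecay_le_one (ht : 0 ≤ t) : spreadingDecay n ρ T t ≤ 1 :=
  mul_le_one₀ (Real.exp_le_one_iff.2 (neg_nonpos.2 (by positivity))) (by positivity)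
    (pow_le_one₀ (by positivity) (div_le_one_of_le₀ (by linarith) (by positivity)))

theorem le_spreadingDecay (hρ : 0 < ρ) (hT : 0 < T) (hρT : ρ ^ 2 + T ≤ 1) (ht : 0 ≤ t)
    (htT : t ≤ T) : Real.exp (-(2 / T)) * ρ ^ (2 * n) ≤ spreadingDecay n ρ T t := by
  have hexp : 2 * t / T ^ 2 ≤ 2 / T := by
    rw [div_le_div_iff₀ (by positivity) hT]
    nlinarith
  rw [pow_mul]
  refine mul_le_mul (Real.exp_le_exp.2 (neg_le_neg hexp)) (pow_le_pow_left₀ (by positivity) ?_ n)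
    (by positivity) (Real.exp_pos _).le
  exact le_div_self (by positivity) (by positivity) (by linarith)

theorem spreadingRadius_zero (hρ : 0 ≤ ρ) : spreadingRadius ρ T 0 = ρ := by
  simp [spreadingRadius, Real.sqrt_sq hρ]

theorem spreadingDecay_zero (hρ : 0 < ρ) : spreadingDecay n ρ T 0 = 1 := by
  simp [spreadingDecay, div_self (pow_pos hρ 2).ne']

theorem continuousOn_spreadingDecay (hρ : 0 < ρ) : ContinuousOn (spreadingDecay n ρ T) (Ici 0) :=
  fun _ ht => (hasDerivAt_spreadingDecay hρ ht).continuousAt.continuousWithinAt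

end Spreading

/-- The barrier with which positivity on a ball of radius `ρ` spreads to the unit ball in time `T`,
if the diffusion is linear. -/
def spreadingBarrier (n : ℕ) (A ρ T : ℝ) : ℝ → ℝ → ℝ :=
  expandingBarrier (fun t => A * spreadingDecay n ρ T t) (spreadingRadius ρ T)

section SpreadingBarrier

variable {n N : ℕ} {A ρ T q M s t : ℝ}

theorem isStrictRadialSubsolutionAt_spreadingBarrier (hq : 0 ≤ q) (hM : 0 ≤ M) (hA : 0 < A)
    (hρ : 0 < ρ) (hT : 0 < T) (hρT : ρ ^ 2 + T ≤ 1) (ht : 0 ≤ t) (htT : t ≤ T)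
    (hcond : M * (A * 2 ^ 4) ^ q <
      4 * ρ ^ 2 * (A * (Real.exp (-(2 / T)) * ρ ^ (2 * (2 * (N + 3) ^ 2)))))
    (hpos : 0 < spreadingBarrier (2 * (N + 3) ^ 2) A ρ T (s ^ 2) t) :
    IsStrictRadialSubsolutionAt N 2 q M (spreadingBarrier (2 * (N + 3) ^ 2) A ρ T) s t := by
  have hdecay : 0 < spreadingDecay (2 * (N + 3) ^ 2) ρ T t := spreadingDecay_pos hρ ht
  have hR : 0 < spreadingRadius ρ T t := hρ.trans_le (le_spreadingRadius hT ht)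
  refine isStrictRadialSubsolutionAt_expandingBarrier hq hM (mul_pos hA hdecay) hR
    (((hasDerivAt_spreadingDecay hρ ht).const_mul A).congr_deriv (by ring))
    (hasDerivAt_spreadingRadius hρ ht) (spreadingRadius_rate_le hρ hT ht) ?_ hpos
  calc _ ≤ M * (A * 1 * 2 ^ 4) ^ q := by
        gcongr
        · exact spreadingDecay_le_one ht
        · exact spreadingRadius_le_two hρT hT htT
    _ < _ := by rwa [mul_one]
    _ ≤ 4 * spreadingRadius ρ T t ^ 2 * (A * spreadingDecay (2 * (N + 3) ^ 2) ρ T t) := by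
        gcongr
        · exact le_spreadingRadius hT ht
        · exact le_spreadingDecay hρ hT hρT ht htT

theorem continuousOn_spreadingBarrier (hρ : 0 < ρ) :
    ContinuousOn (fun z : ℝ × ℝ => spreadingBarrier n A ρ T (z.1 ^ 2) z.2) (univ ×ˢ Ici 0) := by
  have hdecay : ContinuousOn (fun z : ℝ × ℝ => spreadingDecay n ρ T z.2) (univ ×ˢ Ici 0) :=
    (continuousOn_spreadingDecay hρ).comp continuousOn_snd fun z hz => hz.2
  have hradius : Continuous fun z : ℝ × ℝ => spreadingRadius ρ T z.2 :=
    continuous_spreadingRadius.comp continuous_snd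
  exact (continuousOn_const.mul hdecay).mul (by fun_prop)

theorem spreadingBarrier_zero_le {v : ℝ} (hA : 0 ≤ A) (hρ : 0 < ρ) (hv₀ : 0 ≤ v)
    (hv : s ≤ ρ → A * ρ ^ 4 ≤ v) : spreadingBarrier n A ρ T (s ^ 2) 0 ≤ v := by
  have hradius := spreadingRadius_zero (T := T) hρ.le
  rcases le_or_gt s ρ with hsρ | hsρ
  · refine le_trans (expandingBarrier_le ?_ (sq_nonneg s)) ?_ <;>
      simpa [spreadingDecay_zero hρ, hradius] using by first | exact hA | exact hv hsρ
  · refine (expandingBarrier_of_le ?_).trans_le hv₀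
    rw [hradius]
    gcongr

end SpreadingBarrier

theorem IsDeadCoreOn.pos_of_half_le_closedBall_two {N : ℕ} {q m M K ρ ta tb : ℝ}
    {v : Euc N → ℝ → ℝ} {c y : Euc N} (hq : 0 ≤ q) (hM : 0 ≤ M)
    (hv : IsDeadCoreOn N 2 q m M v (closedBall c 2) (Icc ta tb)) (hρ : 0 < ρ) (hK : 0 < K)
    (hT : ta < tb) (hρT : ρ ^ 2 + (tb - ta) ≤ 1) (hhalf : ∀ x ∈ closedBall c ρ, K / 2 ≤ v x ta)
    (hcond : M * (K / (2 * ρ ^ 4) * 2 ^ 4) ^ q < 4 * ρ ^ 2 * (K / (2 * ρ ^ 4) *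
      (Real.exp (-(2 / (tb - ta))) * ρ ^ (2 * (2 * (N + 3) ^ 2)))))
    (hy : y ∈ ball c 1) : 0 < v y tb := by
  set T := tb - ta
  have hT₀ : 0 < T := sub_pos.2 hT
  set A := K / (2 * ρ ^ 4) with hA
  have hA₀ : 0 < A := by positivity
  set W := spreadingBarrier (2 * (N + 3) ^ 2) A ρ T
  have hyc := mem_ball_iff_norm.1 hy
  have hend : 0 < W (‖y - c‖ ^ 2) (tb - ta) := by
    refine expandingBarrier_pos (mul_pos hA₀ (spreadingDecay_pos hρ hT₀.le)) ?_
    exact pow_lt_pow_left₀ (hyc.trans (one_lt_spreadingRadius hρ hT₀)) (norm_nonneg _) two_ne_zero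
  refine hend.trans_le (hv.barrier_le (ρ := -1) (W := fun r t => W r (t - ta)) le_rfl hq hM ?_ ?_
    (fun x hx => absurd hx (by linarith [norm_nonneg (x - c)])) ?_ ?_ y
    ⟨by linarith [norm_nonneg (y - c)], by linarith⟩ tb (right_mem_Icc.2 hT.le))
  · exact (continuousOn_spreadingBarrier hρ).comp
      (f := fun z : ℝ × ℝ => (z.1, z.2 - ta)) (by fun_prop)
      fun z hz => ⟨mem_univ _, sub_nonneg.2 hz.2.1⟩
  · intro x hx
    rw [sub_self]
    refine spreadingBarrier_zero_le hA₀.le hρ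
      (hv.nonneg (mem_closedBall_iff_norm.2 hx.2) (left_mem_Icc.2 hT.le)) (fun hxρ => ?_)
    exact le_trans (by rw [hA]; field_simp; rfl) (hhalf x (mem_closedBall_iff_norm.2 hxρ))
  · intro t ht
    refine (expandingBarrier_of_le ?_).le
    have hle := spreadingRadius_le_two hρT hT₀ (sub_le_sub_right ht.2 ta)
    have hge := hρ.trans_le (le_spreadingRadius (ρ := ρ) hT₀ (sub_nonneg.2 ht.1))
    gcongr
  · intro s _ t ht hpos
    obtain ⟨F₁, F₂, Wt, hF, hWt, hrest⟩ := isStrictRadialSubsolutionAt_spreadingBarrier hq hM hA₀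
      hρ hT₀ hρT (sub_nonneg.2 ht.1.le) (sub_le_sub_right ht.2 ta) hcond hpos
    exact ⟨F₁, F₂, Wt, hF, hWt.comp_sub_const t ta, hrest⟩

/-! ### Bounds in the past of a time with many zeros -/

theorem exists_pow_mul_le_of_continuousOn_closedBall {X : Type*} [PseudoMetricSpace X]
    [ProperSpace X] {g : X → ℝ} {x₀ : X} {k : ℕ} (hk : k ≠ 0)
    (hg : ContinuousOn g (closedBall x₀ 1)) (hpos : 0 < g x₀)
    (hnonneg : ∀ x ∈ closedBall x₀ 1, 0 ≤ g x) :
    ∃ c ∈ closedBall x₀ 1, ∃ d ∈ Ioc (0 : ℝ) 1, closedBall c d ⊆ closedBall x₀ 1 ∧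
      g x₀ ≤ g c * d ^ k ∧ ∀ x ∈ closedBall c (d / 2), g x ≤ 2 ^ k * g c := by
  have hx₀ : x₀ ∈ closedBall x₀ (1 : ℝ) := mem_closedBall_self zero_le_one
  obtain ⟨c, hc, hmax⟩ := (isCompact_closedBall x₀ (1 : ℝ)).exists_isMaxOn ⟨x₀, hx₀⟩
    (f := fun x => g x * (1 - dist x x₀) ^ k) (hg.mul (by fun_prop))
  replace hmax := isMaxOn_iff.1 hmax
  have hc₁ : dist c x₀ ≤ 1 := mem_closedBall.1 hc
  have hle : g x₀ ≤ g c * (1 - dist c x₀) ^ k := by simpa using hmax x₀ hx₀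
  have hd : 0 < 1 - dist c x₀ := by
    refine (sub_nonneg.2 hc₁).lt_of_ne fun h => ?_
    rw [← h, zero_pow hk, mul_zero] at hle
    exact hpos.not_ge hle
  refine ⟨c, hc, 1 - dist c x₀, ⟨hd, sub_le_self 1 dist_nonneg⟩,
    closedBall_subset_closedBall' (by linarith), hle, fun x hx => ?_⟩
  have hxx₀ : dist x x₀ ≤ (1 + dist c x₀) / 2 := by
    linarith [dist_triangle x c x₀, mem_closedBall.1 hx]
  have hx₁ : x ∈ closedBall x₀ 1 := mem_closedBall.2 (by linarith)
  refine le_of_mul_le_mul_right ?_ (pow_pos (half_pos hd) k)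
  calc g x * ((1 - dist c x₀) / 2) ^ k ≤ g x * (1 - dist x x₀) ^ k := by
        gcongr
        · exact hnonneg x hx₁
        · linarith
    _ ≤ g c * (1 - dist c x₀) ^ k := hmax x hx₁
    _ = 2 ^ k * g c * ((1 - dist c x₀) / 2) ^ k := by
        rw [div_pow]
        field_simp

/-- The proportion of the localization radius on which the half-Hölder estimate keeps a solution
above half of its maximum, when its relative growth is at most `2 ^ k`. -/
def halfHeightRatio (N : ℕ) (p : ℝ) (k : ℕ) : ℝ := 1 / (4 * (8 * 2 ^ k * (N + p)) ^ 2)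

theorem halfHeightRatio_pos {N k : ℕ} {p : ℝ} (hp : 0 < p) : 0 < halfHeightRatio N p k := by
  unfold halfHeightRatio
  positivity

theorem halfHeightRatio_le {N k : ℕ} {p : ℝ} (hp : 2 ≤ p) : halfHeightRatio N p k ≤ 1 / 2 := by
  have hΛ : (1 : ℝ) ≤ 2 ^ k := one_le_pow₀ one_le_two
  have hNp : 2 ≤ N + p := by linarith [N.cast_nonneg (α := ℝ)]
  unfold halfHeightRatio
  gcongr
  nlinarith [mul_le_mul hΛ hNp zero_le_two (by positivity)]

theorem halfHolderScale_of_le {N k : ℕ} {p q M K d s τ : ℝ} (hNp : 3 ≤ N + p) (hp : 2 ≤ p)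
    (hK : 0 < K) (hd : d ∈ Ioc (0 : ℝ) 1) (hs : s ∈ Ioc (0 : ℝ) 1) (hτ : 0 < τ)
    (hsK : s ≤ τ * K ^ (p - 2)) (hMK : M * (2 ^ k) ^ q ≤ K ^ (p - 1 - q)) :
    HalfHolderScale N p q M (2 ^ k) (8 * 2 ^ k * (N + p) / √(d * s)) K d (τ / 2) := by
  have hd₀ := hd.1
  have hs₀ := hs.1
  have hΛ : (1 : ℝ) ≤ 2 ^ k := one_le_pow₀ one_le_two
  refine ⟨hΛ, by positivity, hK, hd₀, hd.2, half_pos hτ, ?_, ?_, ?_⟩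
  · rw [div_mul_eq_mul_div, le_div_iff₀ (by positivity)]
    gcongr
    exact mul_le_of_le_one_right hd₀.le hs.2
  · have hds : (√(d * s)) ^ 4 ≤ s := by
      rw [show 4 = 2 * 2 from rfl, pow_mul, Real.sq_sqrt (by positivity)]
      have : d * s ≤ 1 * s := by gcongr; exact hd.2
      nlinarith [hs.2, mul_pos hd₀ hs₀]
    have hNp4 : (3 : ℝ) ^ 4 ≤ (N + p) ^ 4 := pow_le_pow_left₀ (by norm_num) hNp 4
    rw [div_pow, div_mul_eq_mul_div, div_mul_eq_mul_div, le_div_iff₀ (by positivity)]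
    calc 4 * (2 ^ k) ^ 4 * √(d * s) ^ 4 ≤ 4 * (2 ^ k) ^ 4 * (τ * K ^ (p - 2)) := by
          gcongr
          exact hds.trans hsK
      _ ≤ 8 ^ 4 * (2 ^ k) ^ 4 * (N + p) ^ 4 * (τ * K ^ (p - 2)) / 2 := by
          rw [le_div_iff₀ two_pos]
          have : 0 ≤ (2 ^ k) ^ 4 * (τ * K ^ (p - 2)) := by positivity
          nlinarith
      _ = _ := by ring
  · rw [Real.mul_rpow (by positivity) hK.le, ← mul_assoc,
      show p - 1 = (p - 1 - q) + q by ring, Real.rpow_add hK]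
    gcongr

theorem IsDeadCoreOn.exists_half_le {N k : ℕ} {p q m M s τ : ℝ} {v : Euc N → ℝ → ℝ} {x₀ : Euc N}
    (hN : 1 ≤ N) (hp : 2 ≤ p) (hq : 0 ≤ q) (hq₁ : q < 1) (hm : 0 ≤ m) (hM : 0 ≤ M) (hk : k ≠ 0)
    (hv : IsDeadCoreOn N p q m M v (closedBall x₀ 1) (Icc (-1) 0))
    (hs : s ∈ Ioc (0 : ℝ) 1) (hτ : τ ∈ Ioc (0 : ℝ) 1) (hpos : 0 < v x₀ (-τ))
    (hsK : s ≤ τ * v x₀ (-τ) ^ (p - 2)) (hMK : M * (2 ^ k) ^ q ≤ v x₀ (-τ) ^ (p - 1 - q)) :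
    ∃ c ∈ closedBall x₀ 1, ∃ d ∈ Ioc (0 : ℝ) 1, ∃ K, v x₀ (-τ) ≤ K * d ^ k ∧
      ∀ y ∈ closedBall c (halfHeightRatio N p k * (d * s)), ∀ t ∈ Icc (-(τ / 2)) 0,
        K / 2 ≤ v y t := by
  have hτ₀ := hτ.1
  have hτI : -τ ∈ Icc (-1 : ℝ) 0 := ⟨neg_le_neg hτ.2, neg_nonpos.2 hτ₀.le⟩
  obtain ⟨c, hc, d, hd, hsub, hKd, hgrowth⟩ := exists_pow_mul_le_of_continuousOn_closedBall hk
    (hv.continuousOn_slice hτI) hpos fun x hx => hv.nonneg hx hτI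
  have hK₀K : v x₀ (-τ) ≤ v c (-τ) :=
    hKd.trans (mul_le_of_le_one_right (hv.nonneg hc hτI) (pow_le_one₀ hd.1.le hd.2))
  have hK := hpos.trans_le hK₀K
  have hNp : 3 ≤ N + p := by linarith [show (1 : ℝ) ≤ N by exact_mod_cast hN]
  have hscale := halfHolderScale_of_le (M := M) (q := q) (k := k) hNp hp hK hd hs hτ₀
    (hsK.trans (by gcongr)) (hMK.trans (Real.rpow_le_rpow hpos.le hK₀K (by linarith)))
  have hradius : 1 / (4 * (8 * 2 ^ k * (N + p) / √(d * s)) ^ 2) =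
      halfHeightRatio N p k * (d * s) := by
    rw [div_pow, Real.sq_sqrt (mul_pos hd.1 hs.1).le, halfHeightRatio]
    field_simp
  refine ⟨c, hc, d, hd, v c (-τ), hKd, fun y hy t ht => ?_⟩
  rw [← hradius] at hy
  have hyS := hsub (closedBall_subset_closedBall (hscale.inv_slope_sq_le_radius hNp) hy)
  have hhalf := (hv.mono hsub (Icc_subset_Icc hτI.1 (by linarith))).half_le_of_halfHolderScale
    (t₀ := -τ) hN hp hq hm hM hscale rfl hgrowth hy
  exact hhalf.trans (hv.monotoneOn (convex_Icc _ _) hyS ⟨by linarith [hτ.2], by linarith⟩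
    ⟨by linarith [hτ.2, ht.1], ht.2⟩ (by linarith [ht.1]))

section PastBounds

variable {N : ℕ} {p q m M : ℝ}

theorem div_add_mul_rpow_lt_of_scale {k : ℕ} {a d K K₀ τ : ℝ} (hp : 2 < p) (hq₁ : q ≤ 1)
    (hM : 0 ≤ M) (ha : 0 < a) (hd : d ∈ Ioc (0 : ℝ) 1) (hK : 1 ≤ K) (hτ : τ ∈ Ioc (0 : ℝ) 1)
    (hk : N * (p - 1) ≤ k * (p - 2)) (hK₀ : 0 ≤ K₀) (hKd : K₀ ≤ K * d ^ k)
    (hlarge : 2 + M ≤ (a ^ N / 2 ^ (N + 2)) ^ (p - 1) * (τ * K₀ ^ (p - 2))) :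
    K / (2 * (τ / 2)) + M * K ^ q < (K * (a * d) ^ N / 2 ^ (N + 2)) ^ (p - 1) := by
  have hK' : 0 < K := one_pos.trans_le hK
  have hd₀ := hd.1
  have hτ₀ := hτ.1
  set B := (a ^ N / 2 ^ (N + 2)) ^ (p - 1) with hB
  have habs : τ * (M * K ^ q) ≤ K * M := by
    have : K ^ q ≤ K := Real.rpow_le_self_of_one_le hK hq₁
    calc τ * (M * K ^ q) ≤ 1 * (M * K) := by gcongr; exact hτ.2
      _ = K * M := by ring
  have hheight : K * K₀ ^ (p - 2) ≤ (K * d ^ N) ^ (p - 1) := by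
    have hdk : d ^ (k * (p - 2)) ≤ d ^ (N * (p - 1)) :=
      Real.rpow_le_rpow_of_exponent_ge hd₀ hd.2 hk
    calc K * K₀ ^ (p - 2) ≤ K * (K * d ^ k) ^ (p - 2) := by gcongr
      _ = K ^ (1 + (p - 2)) * d ^ (k * (p - 2)) := by
        rw [Real.mul_rpow hK'.le (by positivity), Real.rpow_one_add' hK'.le (by linarith),
          Real.rpow_natCast_mul hd₀.le, mul_assoc]
      _ ≤ K ^ (1 + (p - 2)) * d ^ (N * (p - 1)) := by gcongr
      _ = (K * d ^ N) ^ (p - 1) := by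
        rw [Real.mul_rpow hK'.le (by positivity), Real.rpow_natCast_mul hd₀.le]
        ring_nf
  have hsplit : (K * (a * d) ^ N / 2 ^ (N + 2)) ^ (p - 1) = B * (K * d ^ N) ^ (p - 1) := by
    rw [hB, ← Real.mul_rpow (by positivity) (by positivity)]
    ring_nf
  rw [hsplit, mul_div_cancel₀ _ (two_ne_zero' ℝ), ← mul_lt_mul_iff_right₀ hτ₀]
  calc τ * (K / τ + M * K ^ q) = K + τ * (M * K ^ q) := by field_simp
    _ < K * (2 + M) := by linarith
    _ ≤ K * (B * (τ * K₀ ^ (p - 2))) := by gcongr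
    _ = τ * (B * (K * K₀ ^ (p - 2))) := by ring
    _ ≤ τ * (B * (K * d ^ N) ^ (p - 1)) := by gcongr

theorem IsDeadCoreOn.exists_forall_ball_pos {k : ℕ} {v : Euc N → ℝ → ℝ} {x₀ : Euc N} {τ : ℝ}
    (hN : 1 ≤ N) (hp : 2 < p) (hq : 0 ≤ q) (hq₁ : q < 1) (hm : 0 ≤ m) (hM : 0 ≤ M) (hk₀ : k ≠ 0)
    (hk : N * (p - 1) ≤ k * (p - 2))
    (hv : IsDeadCoreOn N p q m M v (closedBall x₀ 3) (Icc (-1) 0)) (hτ : τ ∈ Ioc (0 : ℝ) 1)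
    (hK₁ : 1 ≤ v x₀ (-τ)) (hτK : 1 ≤ τ * v x₀ (-τ) ^ (p - 2))
    (hMK : M * (2 ^ k) ^ q ≤ v x₀ (-τ) ^ (p - 1 - q))
    (hlarge : 2 + M ≤ (halfHeightRatio N p k ^ N / 2 ^ (N + 2)) ^ (p - 1) *
      (τ * v x₀ (-τ) ^ (p - 2))) :
    ∃ c ∈ closedBall x₀ 1, ∀ y ∈ ball c 1, 0 < v y 0 := by
  obtain ⟨c, hc, d, hd, K, hKd, hhalf⟩ := (hv.mono (closedBall_subset_closedBall (by norm_num))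
    subset_rfl).exists_half_le (s := 1) hN hp.le hq hq₁ hm hM hk₀ ⟨one_pos, le_rfl⟩ hτ
    (one_pos.trans_le hK₁) hτK hMK
  have hτ₀ := hτ.1
  have ha : 0 < halfHeightRatio N p k := halfHeightRatio_pos (by linarith)
  have ha₁ : halfHeightRatio N p k ≤ 1 := by linarith [halfHeightRatio_le (N := N) (k := k) hp.le]
  have hK : 1 ≤ K := by
    nlinarith [pow_le_one₀ hd.1.le hd.2 (n := k), pow_pos hd.1 k]
  rw [mul_one] at hhalf
  refine ⟨c, hc, fun y hy => ?_⟩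
  refine IsDeadCoreOn.pos_of_half_le_closedBall (K := K) hN hp.le hq hM
    (hv.mono (closedBall_subset_closedBall' (by linarith [mem_closedBall.1 hc]))
      (Icc_subset_Icc_left (by linarith [hτ.2]))) (mul_pos ha hd.1) (mul_le_one₀ ha₁ hd.1.le hd.2)
    (by linarith) (by linarith) hhalf ?_ hy
  rw [zero_sub, neg_neg]
  exact div_add_mul_rpow_lt_of_scale hp hq₁.le hM ha hd hK hτ hk (by linarith) hKd hlarge

theorem rpow_le_mul_rpow_of_mul_rpow_neg_inv_le {a C K τ : ℝ} (ha : 0 < a) (hC : 0 ≤ C) (hτ : 0 < τ)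
    (h : C * τ ^ (-1 / a) ≤ K) : C ^ a ≤ τ * K ^ a := by
  calc C ^ a = τ * (C * τ ^ (-1 / a)) ^ a := by
        rw [Real.mul_rpow hC (by positivity), ← Real.rpow_mul hτ.le, div_mul_cancel₀ _ ha.ne',
          Real.rpow_neg_one]
        field_simp
    _ ≤ τ * K ^ a := by gcongr

theorem IsDeadCoreOn.exists_forall_le_mul_rpow (hN : 1 ≤ N) (hp : 2 < p) (hq : 0 ≤ q)
    (hq₁ : q < 1) (hm : 0 ≤ m) (hM : 0 ≤ M) : ∃ C : ℝ, 1 ≤ C ∧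
    ∀ (v : Euc N → ℝ → ℝ) (x₀ : Euc N),
      IsDeadCoreOn N p q m M v (closedBall x₀ 3) (Icc (-1) 0) →
      (∀ x ∈ closedBall x₀ 1, ∃ y ∈ ball x 1, v y 0 = 0) →
      ∀ τ ∈ Ioc (0 : ℝ) 1, v x₀ (-τ) ≤ C * τ ^ (-1 / (p - 2)) := by
  have hp₂ : 0 < p - 2 := sub_pos.2 hp
  obtain ⟨k, hk⟩ := exists_nat_gt (max 0 (N * (p - 1) / (p - 2)))
  have hk₀ : k ≠ 0 := by
    rintro rfl
    exact hk.not_ge (by simp)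
  have hk₂ := ((le_max_right _ _).trans hk.le)
  rw [div_le_iff₀ hp₂] at hk₂
  have ha : 0 < halfHeightRatio N p k := halfHeightRatio_pos (by linarith)
  set B := (halfHeightRatio N p k ^ N / 2 ^ (N + 2)) ^ (p - 1)
  have hB : 0 < B := by positivity
  obtain ⟨C, hC₁, hCB, hCM⟩ := ((eventually_ge_atTop 1).and
    (((tendsto_rpow_atTop hp₂).eventually_ge_atTop ((2 + M) / B)).and
    ((tendsto_rpow_atTop (show 0 < p - 1 - q by linarith)).eventually_ge_atTop
      (M * (2 ^ k) ^ q)))).exists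
  refine ⟨C, hC₁, fun v x₀ hv hholes τ hτ => ?_⟩
  by_contra! hlt
  have hτpow : 1 ≤ τ ^ (-1 / (p - 2)) := Real.one_le_rpow_of_pos_of_le_one_of_nonpos hτ.1 hτ.2
    (div_nonpos_of_nonpos_of_nonneg (by norm_num) hp₂.le)
  have hC₀ : 0 ≤ C := by linarith
  have hCK : C ≤ v x₀ (-τ) := (le_mul_of_one_le_right hC₀ hτpow).trans hlt.le
  have hCτ := rpow_le_mul_rpow_of_mul_rpow_neg_inv_le hp₂ hC₀ hτ.1 hlt.le
  have hlarge : 2 + M ≤ B * (τ * v x₀ (-τ) ^ (p - 2)) := by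
    rw [div_le_iff₀' hB] at hCB
    exact hCB.trans (by gcongr)
  obtain ⟨c, hc, hcpos⟩ := hv.exists_forall_ball_pos hN hp hq hq₁ hm hM hk₀ hk₂ hτ
    (hC₁.trans hCK) ((Real.one_le_rpow hC₁ hp₂.le).trans hCτ)
    (hCM.trans (Real.rpow_le_rpow hC₀ hCK (by linarith))) hlarge
  obtain ⟨y, hy, hy₀⟩ := hholes c hc
  exact (hcpos y hy).ne' hy₀

theorem mul_div_pow_rpow_le {j : ℕ} {b K ρ : ℝ} (hq₁ : q ≤ 1) (hb : 1 ≤ b)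
    (hK : 0 ≤ K) (hρ : 0 < ρ) (hρ₁ : ρ ≤ 1) : (b * K / ρ ^ j) ^ q ≤ b * K ^ q / ρ ^ j := by
  have hone : 1 ≤ b / ρ ^ j :=
    (one_le_div (by positivity)).2 ((pow_le_one₀ hρ.le hρ₁).trans hb)
  calc (b * K / ρ ^ j) ^ q = (b / ρ ^ j) ^ q * K ^ q := by
        rw [← Real.mul_rpow (by positivity) hK]
        ring_nf
    _ ≤ b / ρ ^ j * K ^ q := by
        gcongr
        exact Real.rpow_le_self_of_one_le hone hq₁
    _ = _ := by ring

theorem mul_rpow_lt_of_spreading_scale {n : ℕ} {K ρ E : ℝ} (hq₁ : q ≤ 1) (hM : 0 ≤ M) (hK : 0 < K)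
    (hρ : 0 < ρ) (hρ₁ : ρ ≤ 1)
    (h : 4 * M < K ^ (1 - q) * ρ ^ (2 * n + 2) * E) :
    M * (K / (2 * ρ ^ 4) * 2 ^ 4) ^ q < 4 * ρ ^ 2 * (K / (2 * ρ ^ 4) * (E * ρ ^ (2 * n))) := by
  have hKq : K = K ^ (1 - q) * K ^ q := by
    rw [← Real.rpow_add hK, sub_add_cancel, Real.rpow_one]
  have habs := mul_div_pow_rpow_le (j := 4) hq₁ (b := 8) (by norm_num) hK.le hρ hρ₁
  calc M * (K / (2 * ρ ^ 4) * 2 ^ 4) ^ q = M * (8 * K / ρ ^ 4) ^ q := by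
        congr 2
        field_simp
        norm_num
    _ ≤ M * (8 * K ^ q / ρ ^ 4) := by gcongr
    _ = 4 * M * (2 * K ^ q / ρ ^ 4) := by ring
    _ < K ^ (1 - q) * ρ ^ (2 * n + 2) * E * (2 * K ^ q / ρ ^ 4) := by gcongr
    _ = (K ^ (1 - q) * K ^ q) * (2 * ρ ^ (2 * n + 2) * E / ρ ^ 4) := by ring
    _ = _ := by
        rw [← hKq]
        field_simp
        ring

theorem exp_neg_div_factorial_le_pow {τ : ℝ} (j : ℕ) (hτ : 0 < τ) :
    Real.exp (-(1 / τ)) / j.factorial ≤ τ ^ j := by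
  have h := Real.pow_div_factorial_le_exp (1 / τ) (by positivity) j
  rw [Real.exp_neg, div_le_iff₀ (by positivity), inv_le_comm₀ (Real.exp_pos _) (by positivity)]
  refine le_of_eq_of_le ?_ h
  rw [mul_inv, one_div, inv_pow, div_eq_mul_inv]

theorem lt_mul_pow_mul_exp_of_scale {j k : ℕ} {a d B K K₀ τ : ℝ} (hq₁ : q < 1) (ha : 0 < a)
    (hd : d ∈ Ioc (0 : ℝ) 1) (hK : 0 < K) (hτ : 0 < τ) (hk : j ≤ k * (1 - q)) (hK₀ : 0 ≤ K₀)
    (hKd : K₀ ≤ K * d ^ k)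
    (hlarge : B * Real.exp (5 / τ) < a ^ j / j.factorial * K₀ ^ (1 - q)) :
    B < K ^ (1 - q) * (a * (d * τ)) ^ j * Real.exp (-(2 / (τ / 2))) := by
  have hd₀ := hd.1
  have hheight : K₀ ^ (1 - q) ≤ K ^ (1 - q) * d ^ j := by
    calc K₀ ^ (1 - q) ≤ (K * d ^ k) ^ (1 - q) := by gcongr
      _ = K ^ (1 - q) * d ^ (k * (1 - q)) := by
        rw [Real.mul_rpow hK.le (by positivity), Real.rpow_natCast_mul hd₀.le]
      _ ≤ K ^ (1 - q) * d ^ (j : ℝ) := by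
        gcongr 1
        exact Real.rpow_le_rpow_of_exponent_ge hd₀ hd.2 hk
      _ = _ := by rw [Real.rpow_natCast]
  have hexp : Real.exp (-(5 / τ)) = Real.exp (-(1 / τ)) * Real.exp (-(2 / (τ / 2))) := by
    rw [← Real.exp_add]
    congr 1
    field_simp
    norm_num
  calc B = B * Real.exp (5 / τ) * Real.exp (-(5 / τ)) := by
        rw [mul_assoc, ← Real.exp_add, add_neg_cancel, Real.exp_zero, mul_one]
    _ < a ^ j / j.factorial * K₀ ^ (1 - q) * Real.exp (-(5 / τ)) := by gcongr
    _ ≤ a ^ j / j.factorial * (K ^ (1 - q) * d ^ j) * Real.exp (-(5 / τ)) := by gcongr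
    _ = K ^ (1 - q) * (a * d) ^ j * (Real.exp (-(1 / τ)) / j.factorial) *
        Real.exp (-(2 / (τ / 2))) := by
      rw [hexp]
      ring
    _ ≤ K ^ (1 - q) * (a * d) ^ j * τ ^ j * Real.exp (-(2 / (τ / 2))) := by
      gcongr
      exact exp_neg_div_factorial_le_pow j hτ
    _ = _ := by ring

theorem IsDeadCoreOn.exists_forall_ball_pos_two {k : ℕ} {v : Euc N → ℝ → ℝ} {x₀ : Euc N} {τ : ℝ}
    (hN : 1 ≤ N) (hq : 0 ≤ q) (hq₁ : q < 1) (hm : 0 ≤ m) (hM : 0 ≤ M) (hk₀ : k ≠ 0)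
    (hk : (2 * (2 * (N + 3) ^ 2) + 2 : ℕ) ≤ k * (1 - q))
    (hv : IsDeadCoreOn N 2 q m M v (closedBall x₀ 3) (Icc (-1) 0)) (hτ : τ ∈ Ioc (0 : ℝ) 1)
    (hpos : 0 < v x₀ (-τ)) (hMK : M * (2 ^ k) ^ q ≤ v x₀ (-τ) ^ (1 - q))
    (hlarge : 4 * M * Real.exp (5 / τ) < halfHeightRatio N 2 k ^ (2 * (2 * (N + 3) ^ 2) + 2) /
      (2 * (2 * (N + 3) ^ 2) + 2).factorial * v x₀ (-τ) ^ (1 - q)) :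
    ∃ c ∈ closedBall x₀ 1, ∀ y ∈ ball c 1, 0 < v y 0 := by
  have hτ₀ := hτ.1
  obtain ⟨c, hc, d, hd, K, hKd, hhalf⟩ := (hv.mono (closedBall_subset_closedBall (by norm_num))
    subset_rfl).exists_half_le (s := τ) hN le_rfl hq hq₁ hm hM hk₀ hτ hτ hpos (by simp)
    (hMK.trans_eq (by norm_num))
  have ha : 0 < halfHeightRatio N 2 k := halfHeightRatio_pos two_pos
  have hK : 0 < K := pos_of_mul_pos_left (hpos.trans_le hKd) (pow_pos hd.1 k).le
  have hρ : 0 < halfHeightRatio N 2 k * (d * τ) := mul_pos ha (mul_pos hd.1 hτ₀)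
  have hρ₁ : halfHeightRatio N 2 k * (d * τ) ≤ 1 / 2 :=
    (mul_le_of_le_one_right ha.le (mul_le_one₀ hd.2 hτ₀.le hτ.2)).trans (halfHeightRatio_le le_rfl)
  refine ⟨c, hc, fun y hy => ?_⟩
  have hT : 0 - -(τ / 2) = τ / 2 := by ring
  refine IsDeadCoreOn.pos_of_half_le_closedBall_two hq hM
    (hv.mono (closedBall_subset_closedBall' (by linarith [mem_closedBall.1 hc]))
      (Icc_subset_Icc_left (by linarith [hτ.2]))) hρ hK (by linarith) ?_
    (fun x hx => hhalf x hx _ (left_mem_Icc.2 (by linarith))) ?_ hy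
  · rw [hT]
    nlinarith [hτ.2]
  · rw [hT]
    exact mul_rpow_lt_of_spreading_scale hq₁.le hM hK hρ (by linarith)
      (lt_mul_pow_mul_exp_of_scale hq₁ ha hd hK hτ₀ hk hpos.le hKd hlarge)

theorem IsDeadCoreOn.exists_forall_le_mul_exp (hN : 1 ≤ N) (hq : 0 ≤ q) (hq₁ : q < 1)
    (hm : 0 ≤ m) (hM : 0 ≤ M) : ∃ C : ℝ, 1 ≤ C ∧ ∀ (v : Euc N → ℝ → ℝ) (x₀ : Euc N),
      IsDeadCoreOn N 2 q m M v (closedBall x₀ 3) (Icc (-1) 0) →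
      (∀ x ∈ closedBall x₀ 1, ∃ y ∈ ball x 1, v y 0 = 0) →
      ∀ τ ∈ Ioc (0 : ℝ) 1, v x₀ (-τ) ≤ C * Real.exp (5 / (1 - q) / τ) := by
  have hq₂ : 0 < 1 - q := sub_pos.2 hq₁
  set j := 2 * (2 * (N + 3) ^ 2) + 2
  obtain ⟨k, hk⟩ := exists_nat_ge (j / (1 - q))
  rw [div_le_iff₀ hq₂] at hk
  have hk₀ : k ≠ 0 := by
    rintro rfl
    rw [Nat.cast_zero, zero_mul] at hk
    exact absurd (by exact_mod_cast hk) (show ¬ j ≤ 0 by omega)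
  have ha : 0 < halfHeightRatio N 2 k := halfHeightRatio_pos two_pos
  set B := halfHeightRatio N 2 k ^ j / j.factorial
  have hB : 0 < B := by positivity
  obtain ⟨C, hC₁, hCB, hCM⟩ := ((eventually_ge_atTop 1).and
    (((tendsto_rpow_atTop hq₂).eventually_ge_atTop (4 * M / B)).and
    ((tendsto_rpow_atTop hq₂).eventually_ge_atTop (M * (2 ^ k) ^ q)))).exists
  refine ⟨C, hC₁, fun v x₀ hv hholes τ hτ => ?_⟩
  by_contra! hlt
  have hτ₀ := hτ.1
  have hC₀ : 0 < C := by linarith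
  have hCK : C ≤ v x₀ (-τ) :=
    (le_mul_of_one_le_right hC₀.le (Real.one_le_exp (by positivity))).trans hlt.le
  have hlarge : 4 * M * Real.exp (5 / τ) < B * v x₀ (-τ) ^ (1 - q) := by
    rw [div_le_iff₀' hB] at hCB
    calc 4 * M * Real.exp (5 / τ) ≤ B * C ^ (1 - q) * Real.exp (5 / τ) := by gcongr
      _ = B * (C * Real.exp (5 / (1 - q) / τ)) ^ (1 - q) := by
        rw [Real.mul_rpow hC₀.le (Real.exp_pos _).le, ← Real.exp_mul, mul_assoc]
        congr 3
        field_simp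
      _ < _ := by gcongr
  obtain ⟨c, hc, hcpos⟩ := hv.exists_forall_ball_pos_two hN hq hq₁ hm hM hk₀ hk hτ
    (hC₀.trans_le hCK) (hCM.trans (by gcongr)) hlarge
  obtain ⟨y, hy, hy₀⟩ := hholes c hc
  exact (hcpos y hy).ne' hy₀

end PastBounds

/-! ### Supersolutions, nondegeneracy and bounds at later times -/

/-- The radial function `x ↦ φ (‖x‖ ^ 2)` satisfies `Δ_p φ ≤ h` at `‖x‖ = s`; where the operator
degenerates, it must instead be flat enough to be tested against. -/
def IsRadialSupersolutionAt (N : ℕ) (p : ℝ) (φ : ℝ → ℝ) (h s : ℝ) : Prop :=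
  ∃ F₁ F₂ : ℝ, HasSecondDerivAt φ F₁ F₂ (s ^ 2) ∧ radialPLap N p F₁ F₂ s ≤ h ∧
    (p = 2 ∨ F₁ ≠ 0 ∧ s ≠ 0 ∨
      s = 0 ∧ ∃ C κ, p / (p - 1) < κ ∧ ∀ r, 0 ≤ r → φ (r ^ 2) ≤ φ 0 + C * r ^ κ)

theorem IsRadialSupersolutionAt.mono {N : ℕ} {p h h' s : ℝ} {φ : ℝ → ℝ}
    (hφ : IsRadialSupersolutionAt N p φ h s) (hh : h ≤ h') :
    IsRadialSupersolutionAt N p φ h' s := by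
  obtain ⟨F₁, F₂, hF, hle, hnd⟩ := hφ
  exact ⟨F₁, F₂, hF, hle.trans hh, hnd⟩

theorem DeadCoreJet.not_isLocalMax_sub_radial {N : ℕ} {p q m M t b f h : ℝ}
    {v : Euc N → ℝ → ℝ} {φ : ℝ → ℝ} {x c a : Euc N} (hp : 2 ≤ p)
    (hv : DeadCoreJet N p q m M v x t a b f) (hφ : IsRadialSupersolutionAt N p φ h ‖x - c‖)
    (hf : 0 < f) (hh : h < b + f) : ¬ IsLocalMax (fun y => v y t - φ (‖y - c‖ ^ 2)) x := by
  intro hmax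
  obtain ⟨F₁, F₂, hF, hsuper, hnd⟩ := hφ
  have ha := hv.gradient_eq_of_isLocalExtr_sub_radial hF (.inr hmax)
  by_cases hcase : a ≠ 0 ∨ p = 2
  · linarith [hv.add_le_of_isLocalMax_sub_radial hp hF hmax hcase]
  push Not at hcase
  rcases hnd with hp₂ | ⟨hF₁, hs⟩ | ⟨hs, C, κ, hκ, hflat⟩
  · exact hcase.2 hp₂
  · have hx : x - c ≠ 0 := norm_ne_zero_iff.1 hs
    exact smul_ne_zero (mul_ne_zero two_ne_zero hF₁) hx (ha.symm.trans hcase.1)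
  · obtain rfl : x = c := sub_eq_zero.1 (norm_eq_zero.1 hs)
    have := hv.nonpos_of_touching hcase.1 C κ hκ (by
      filter_upwards [hmax] with y hy
      have := hflat ‖y - x‖ (norm_nonneg _)
      simp only [sub_self, norm_zero, ne_eq, two_ne_zero, not_false_eq_true, zero_pow] at hy
      linarith)
    linarith [hv.timeDeriv_nonneg]

namespace IsDeadCoreOn

variable {N : ℕ} {p q m M A : ℝ} {v : Euc N → ℝ → ℝ} {c : Euc N} {R ta tb : ℝ} {W : ℝ → ℝ → ℝ}

theorem le_barrier (hp : 2 ≤ p) (hm : 0 < m)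
    (hv : IsDeadCoreOn N p q m M v (closedBall c R) (Icc ta tb))
    (hW : ContinuousOn (fun z : ℝ × ℝ => W z.1 z.2) (univ ×ˢ Icc ta tb))
    (hW₀ : ∀ r, 0 ≤ r → ∀ t ∈ Icc ta tb, 0 ≤ W r t)
    (hinit : ∀ x ∈ closedBall c R, v x ta ≤ W (‖x - c‖ ^ 2) ta)
    (houter : ∀ x ∈ sphere c R, ∀ t ∈ Icc ta tb, v x t ≤ W (‖x - c‖ ^ 2) t)
    (hsuper : ∀ s ∈ Ico 0 R, ∀ t ∈ Ioc ta tb, ∃ Wt, HasDerivAt (W (s ^ 2)) Wt t ∧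
      IsRadialSupersolutionAt N p (fun r => W r t) Wt s) :
    ∀ x ∈ closedBall c R, ∀ t ∈ Icc ta tb, v x t ≤ W (‖x - c‖ ^ 2) t := by
  intro x₁ hx₁ t₁ ht₁
  by_contra! hlt₁
  have hcont : ContinuousOn (fun z : Euc N × ℝ => v z.1 z.2 - W (‖z.1 - c‖ ^ 2) z.2)
      (closedBall c R ×ˢ Icc ta tb) :=
    hv.continuousOn.sub (hW.comp (f := fun z : Euc N × ℝ => (‖z.1 - c‖ ^ 2, z.2)) (by fun_prop)
      fun z hz => ⟨mem_univ _, hz.2⟩)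
  obtain ⟨⟨x, t⟩, ⟨hx, ht⟩, hmax⟩ :=
    ((isCompact_closedBall c R).prod isCompact_Icc).exists_isMaxOn ⟨(x₁, t₁), hx₁, ht₁⟩ hcont
  replace hmax := isMaxOn_iff.1 hmax
  simp only at hx ht
  have hgap : W (‖x - c‖ ^ 2) t < v x t := by
    linarith [hmax (x₁, t₁) ⟨hx₁, ht₁⟩]
  have hxR : ‖x - c‖ < R := (mem_closedBall_iff_norm.1 hx).lt_of_ne fun h =>
    (houter x (mem_sphere_iff_norm.2 h) t ht).not_gt hgap
  have hta : ta < t := ht.1.lt_of_ne fun h => by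
    subst h
    exact (hinit x hx).not_gt hgap
  obtain ⟨a, b, f, hjet⟩ := hv.exists_jet x hx t ht
  obtain ⟨Wt, hWt, hφ⟩ := hsuper _ ⟨norm_nonneg (x - c), hxR⟩ t ⟨hta, ht.2⟩
  have hpos : 0 < v x t := (hW₀ _ (sq_nonneg _) t ht).trans_lt hgap
  have hf : 0 < f := (mul_pos hm (plusPowQ_pos hpos)).trans_le hjet.le_absorption
  have hb : 0 ≤ b - Wt := nonneg_of_hasDerivAt_of_forall_le_left
    (hjet.hasDerivAt_time.fun_sub hWt) hta fun s hs => hmax (x, s) ⟨hx, hs.1.le, hs.2.le.trans ht.2⟩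
  refine hjet.not_isLocalMax_sub_radial hp hφ hf (by linarith) ?_
  filter_upwards [isOpen_ball.mem_nhds (mem_ball_iff_norm.2 hxR)] with y hy
    using hmax (y, t) ⟨ball_subset_closedBall hy, ht⟩

theorem le_of_tendsto_left (hv : IsDeadCoreOn N p q m M v {c} (Icc ta tb)) (hT : ta < tb)
    (hle : ∀ t ∈ Ioo ta tb, v c t ≤ A) : v c tb ≤ A := by
  have hcont : ContinuousWithinAt (v c) (Icc ta tb) tb :=
    (hv.continuousOn.comp (f := fun t : ℝ => (c, t)) (by fun_prop)
      fun t ht => ⟨mem_singleton c, ht⟩) tb (right_mem_Icc.2 hT.le)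
  have hmem : Ioo ta tb ∈ 𝓝[<] tb := Ioo_mem_nhdsLT hT
  exact le_of_tendsto (hcont.mono_left (nhdsWithin_le_of_mem
    (mem_of_superset hmem Ioo_subset_Icc_self))) (mem_of_superset hmem hle)

theorem le_of_blowup_barrier (hp : 2 ≤ p) (hm : 0 < m) (hR : 0 ≤ R)
    (hv : IsDeadCoreOn N p q m M v (closedBall c R) (Icc (-1) 0))
    (hW : ContinuousOn (fun z : ℝ × ℝ => W z.1 z.2) (univ ×ˢ Ico (-1) 0))
    (hinit : ∀ x ∈ closedBall c R, ∀ r, 0 ≤ r → v x (-1) ≤ W r (-1))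
    (hW₀ : ∀ r, 0 ≤ r → ∀ t ∈ Ico (-1) 0, 0 ≤ W r t)
    (houter : ∀ x ∈ closedBall c R, ∀ t ∈ Ico (-1) 0, v x t ≤ W (R ^ 2) t)
    (hsuper : ∀ s ∈ Ico 0 R, ∀ t ∈ Ioo (-1) 0, ∃ Wt, HasDerivAt (W (s ^ 2)) Wt t ∧
      IsRadialSupersolutionAt N p (fun r => W r t) Wt s)
    (hA : ∀ t ∈ Ioo (-1) 0, W 0 t ≤ A) : v c 0 ≤ A := by
  have hc : c ∈ closedBall c R := mem_closedBall_self hR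
  refine (hv.mono (singleton_subset_iff.2 hc) subset_rfl).le_of_tendsto_left (by norm_num)
    fun t ht => ?_
  have hI : Icc (-1) t ⊆ Ico (-1) 0 := Icc_subset_Ico_right ht.2
  have h := (hv.mono subset_rfl (hI.trans Ico_subset_Icc_self)).le_barrier hp hm
    (hW.mono (prod_mono subset_rfl hI)) (fun r hr s hs => hW₀ r hr s (hI hs))
    (fun x hx => hinit x hx _ (sq_nonneg _))
    (fun x hx s hs => (mem_sphere_iff_norm.1 hx).symm ▸
      houter x (sphere_subset_closedBall hx) s (hI hs))
    (fun s hs τ hτ => hsuper s hs τ ⟨hτ.1, hτ.2.trans_lt ht.2⟩) c hc t (right_mem_Icc.2 ht.1.le)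
  simp only [sub_self, norm_zero, ne_eq, two_ne_zero, not_false_eq_true, zero_pow] at h
  exact h.trans (hA t ht)

end IsDeadCoreOn

/-- The factor by which `Δ_p` multiplies the radial power `x ↦ ‖x‖ ^ (2 (j + 2))`. -/
def powerPLapConst (N : ℕ) (p : ℝ) (j : ℕ) : ℝ :=
  (2 * (j + 2)) ^ (p - 2) * (4 * ((j + 2) * (j + 1)) * (p - 1) + 2 * (j + 2) * (N + p - 2))

theorem powerPLapConst_pos {N : ℕ} {p : ℝ} (hp : 2 ≤ p) (j : ℕ) : 0 < powerPLapConst N p j := by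
  have h₁ : 0 < p - 1 := by linarith
  have h₂ : 0 ≤ N + p - 2 := by linarith [(Nat.cast_nonneg N : (0 : ℝ) ≤ N)]
  unfold powerPLapConst
  positivity

theorem hasSecondDerivAt_power (a H w r : ℝ) (j : ℕ) :
    HasSecondDerivAt (fun r => a + H * (r / w) ^ (j + 2))
      (H * ((j + 2) * (r / w) ^ (j + 1) / w))
      (H * ((j + 2) * ((j + 1) * (r / w) ^ j / w) / w)) r := by
  refine HasSecondDerivAt.of_forall (g' := fun r => H * ((j + 2) * (r / w) ^ (j + 1) / w))
    (fun r => ?_) ?_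
  · refine ((((hasDerivAt_id r).div_const w).fun_pow (j + 2)).const_mul H
      |>.const_add a).congr_deriv ?_
    simp only [id, Nat.add_succ_sub_one, Nat.cast_add, Nat.cast_ofNat]
    ring
  · refine ((((hasDerivAt_id r).div_const w).fun_pow (j + 1)).const_mul ((j : ℝ) + 2) |>.div_const w
      |>.const_mul H).congr_deriv ?_
    simp only [id, Nat.add_sub_cancel, Nat.cast_add, Nat.cast_one]
    ring

theorem radialPLap_power {N : ℕ} {p H ρ s : ℝ} (hH : 0 < H) (hρ : 0 < ρ) (hs : 0 < s) (j : ℕ) :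
    radialPLap N p (H * ((j + 2) * (s ^ 2 / ρ ^ 2) ^ (j + 1) / ρ ^ 2))
        (H * ((j + 2) * ((j + 1) * (s ^ 2 / ρ ^ 2) ^ j / ρ ^ 2) / ρ ^ 2)) s =
      powerPLapConst N p j * (H ^ (p - 1) / ρ ^ p) *
        (s / ρ) ^ (2 * (j + 2) * (p - 1) - p : ℝ) := by
  obtain ⟨σ, hσ, rfl⟩ : ∃ σ, 0 < σ ∧ s = σ * ρ := ⟨s / ρ, by positivity, by field_simp⟩
  have hdiv : (σ * ρ) ^ 2 / ρ ^ 2 = σ ^ 2 := by field_simp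
  have hgrad : 2 * |H * ((j + 2) * (σ ^ 2) ^ (j + 1) / ρ ^ 2)| * (σ * ρ) =
      2 * (j + 2) * (H / ρ) * σ ^ (2 * j + 3) := by
    rw [abs_of_nonneg (by positivity)]
    field_simp
    ring
  have hHp : H ^ (p - 1) = H ^ (p - 2) * H := by
    rw [← Real.rpow_add_one hH.ne']; ring_nf
  have hρp : ρ ^ p = ρ ^ (p - 2) * ρ ^ 2 := by
    rw [← Real.rpow_natCast, ← Real.rpow_add hρ]; norm_num
  have hσp : σ ^ (2 * (j + 2) * (p - 1) - p : ℝ) =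
      (σ ^ (2 * j + 3)) ^ (p - 2) * (σ ^ 2) ^ (j + 1) := by
    rw [← pow_mul, ← Real.rpow_natCast, ← Real.rpow_natCast, ← Real.rpow_mul hσ.le,
      ← Real.rpow_add hσ]
    push_cast
    ring_nf
  rw [radialPLap, hdiv, hgrad, Real.mul_rpow (by positivity) (by positivity),
    Real.mul_rpow (by positivity) (by positivity), Real.div_rpow hH.le hρ.le, powerPLapConst,
    hHp, hρp, mul_div_cancel_right₀ _ hρ.ne', hσp]
  field_simp
  ring

theorem isRadialSupersolutionAt_power {N : ℕ} {p a H ρ s : ℝ} (hp : 2 ≤ p) (hH : 0 < H)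
    (hρ : 0 < ρ) (hs : 0 ≤ s) (j : ℕ) :
    IsRadialSupersolutionAt N p (fun r => a + H * (r / ρ ^ 2) ^ (j + 2))
      (powerPLapConst N p j * (H ^ (p - 1) / ρ ^ p) *
        (s / ρ) ^ (2 * (j + 2) * (p - 1) - p : ℝ)) s := by
  refine ⟨_, _, hasSecondDerivAt_power a H (ρ ^ 2) (s ^ 2) j, ?_, ?_⟩
  · rcases hs.eq_or_lt with rfl | hs
    · have := powerPLapConst_pos (N := N) hp j
      simp only [radialPLap, ne_eq, two_ne_zero, not_false_eq_true, zero_pow, zero_div,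
        Nat.add_eq_zero_iff, one_ne_zero, and_false, mul_zero, zero_mul, add_zero]
      positivity
    · exact (radialPLap_power hH hρ hs j).le
  · rcases hs.eq_or_lt with rfl | hs
    · refine .inr (.inr ⟨rfl, H / (ρ ^ 2) ^ (j + 2), 2 * (j + 2), ?_, fun r _ => ?_⟩)
      · have : p / (p - 1) ≤ 2 := by
          rw [div_le_iff₀ (by linarith)]
          linarith
        linarith [(Nat.cast_nonneg j : (0 : ℝ) ≤ j)]
      · have hr : r ^ (2 * (j + 2) : ℝ) = (r ^ 2) ^ (j + 2) := by
          rw [← pow_mul, ← Real.rpow_natCast]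
          push_cast
          rfl
        simp only [hr, div_pow, zero_div, ne_eq, Nat.add_eq_zero_iff, two_ne_zero, and_false,
          not_false_eq_true, zero_pow, mul_zero, add_zero]
        exact le_of_eq (by ring)
    · exact .inr (.inl ⟨by positivity, hs.ne'⟩)

theorem rpow_div_mul_rpow_le {p q c ρ σ κ : ℝ} (hp : 2 ≤ p) (hq : 0 ≤ q) (hq₁ : q < 1)
    (hc : 0 < c) (hρ : 0 < ρ) (hσ : 0 ≤ σ) (hσ₁ : σ ≤ 1) (hκ : p < κ * (p - 1 - q)) :
    (c * ρ ^ (p / (p - 1 - q))) ^ (p - 1) / ρ ^ p * σ ^ (κ * (p - 1) - p) ≤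
      c ^ (p - 1 - q) * (c * ρ ^ (p / (p - 1 - q)) * σ ^ κ) ^ q := by
  have hpq : 0 < p - 1 - q := by linarith
  have hκ₀ : 0 < κ := pos_of_mul_pos_left (by linarith : 0 < κ * (p - 1 - q)) hpq.le
  have hκq : 0 ≤ κ * q := by positivity
  set H := c * ρ ^ (p / (p - 1 - q)) with hH
  have hH₀ : 0 < H := by positivity
  have hHp : H ^ (p - 1 - q) = c ^ (p - 1 - q) * ρ ^ p := by
    rw [hH, Real.mul_rpow hc.le (by positivity), ← Real.rpow_mul hρ.le, div_mul_cancel₀ _ hpq.ne']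
  have hsplit : H ^ (p - 1) = c ^ (p - 1 - q) * ρ ^ p * H ^ q := by
    rw [← hHp, ← Real.rpow_add hH₀, sub_add_cancel]
  calc H ^ (p - 1) / ρ ^ p * σ ^ (κ * (p - 1) - p)
      = c ^ (p - 1 - q) * H ^ q * σ ^ (κ * (p - 1) - p) := by
        rw [hsplit]
        field_simp
    _ ≤ c ^ (p - 1 - q) * H ^ q * σ ^ (κ * q) := by
        gcongr ?_ * ?_
        exact Real.rpow_le_rpow_of_exponent_ge_of_imp hσ hσ₁ (by linarith)
          fun _ h => by linarith
    _ = c ^ (p - 1 - q) * (H * σ ^ κ) ^ q := by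
        rw [Real.mul_rpow hH₀.le (by positivity), ← Real.rpow_mul hσ]
        ring

namespace IsDeadCoreOn

variable {N : ℕ} {p q m M : ℝ}

theorem slice_le_of_supersolution {v : Euc N → ℝ → ℝ} {φ : ℝ → ℝ} {c : Euc N} {R t : ℝ}
    (hp : 2 ≤ p) (hq : 0 ≤ q) (hm : 0 < m) (hR : 0 ≤ R)
    (hv : IsDeadCoreOn N p q m M v (closedBall c R) {t}) (hφ : Continuous φ)
    (hφ₀ : ∀ r, 0 ≤ r → 0 ≤ φ r) (houter : ∀ x ∈ sphere c R, v x t ≤ φ (R ^ 2))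
    (hsuper : ∀ s ∈ Ico 0 R, IsRadialSupersolutionAt N p φ (m / 2 * φ (s ^ 2) ^ q) s) :
    v c t ≤ φ 0 := by
  by_contra! hlt
  have hc : c ∈ closedBall c R := mem_closedBall_self hR
  obtain ⟨x, hx, hmax⟩ := (isCompact_closedBall c R).exists_isMaxOn ⟨c, hc⟩
    ((hv.continuousOn_slice (mem_singleton t)).sub (g := fun x => φ (‖x - c‖ ^ 2)) (by fun_prop))
  replace hmax := isMaxOn_iff.1 hmax
  simp only [Pi.sub_apply] at hmax
  have hgap : φ (‖x - c‖ ^ 2) < v x t := by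
    have := hmax c hc
    simp only [sub_self, norm_zero, ne_eq, two_ne_zero, not_false_eq_true, zero_pow] at this
    linarith
  have hxR : ‖x - c‖ < R := (mem_closedBall_iff_norm.1 hx).lt_of_ne fun h =>
    (h ▸ houter x (mem_sphere_iff_norm.2 h)).not_gt hgap
  have hφx := hφ₀ _ (sq_nonneg ‖x - c‖)
  have hpos : 0 < v x t := hφx.trans_lt hgap
  obtain ⟨a, b, f, hjet⟩ := hv.exists_jet x hx t rfl
  have hf : m * v x t ^ q ≤ f := plusPowQ_of_pos hpos ▸ hjet.le_absorption
  have hvq : 0 < m * v x t ^ q := by positivity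
  have hφq : m / 2 * φ (‖x - c‖ ^ 2) ^ q ≤ m / 2 * v x t ^ q := by gcongr
  refine hjet.not_isLocalMax_sub_radial hp (hsuper _ ⟨norm_nonneg _, hxR⟩) (hvq.trans_le hf)
    (by linarith [hjet.timeDeriv_nonneg]) ?_
  filter_upwards [isOpen_ball.mem_nhds (mem_ball_iff_norm.2 hxR)] with y hy
    using hmax y (ball_subset_closedBall hy)

theorem exists_mul_rpow_le (hp : 2 ≤ p) (hq : 0 ≤ q) (hq₁ : q < 1) (hm : 0 < m) :
    ∃ c : ℝ, 0 < c ∧ ∀ (v : Euc N → ℝ → ℝ) (x₀ : Euc N) (t ρ : ℝ), 0 < ρ →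
      IsDeadCoreOn N p q m M v (closedBall x₀ ρ) {t} → 0 < v x₀ t →
      ∃ y ∈ closedBall x₀ ρ, c * ρ ^ (p / (p - 1 - q)) ≤ v y t := by
  have hpq : 0 < p - 1 - q := by linarith
  obtain ⟨j, hj⟩ := exists_nat_ge (p / (p - 1 - q))
  rw [div_le_iff₀ hpq] at hj
  have hκ : p < 2 * (j + 2) * (p - 1 - q) := by
    nlinarith [(Nat.cast_nonneg j : (0 : ℝ) ≤ j)]
  set B := powerPLapConst N p j
  have hB : 0 < B := powerPLapConst_pos hp j
  set c : ℝ := (m / (2 * B)) ^ (1 / (p - 1 - q)) with hc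
  have hc₀ : 0 < c := by positivity
  have hcB : B * c ^ (p - 1 - q) = m / 2 := by
    rw [hc, ← Real.rpow_mul (by positivity), one_div_mul_cancel hpq.ne', Real.rpow_one]
    field_simp
  refine ⟨c, hc₀, fun v x₀ t ρ hρ hv hpos => ?_⟩
  by_contra! hlt
  set H := c * ρ ^ (p / (p - 1 - q))
  have hH₀ : 0 < H := by positivity
  have hle : v x₀ t ≤ 0 + H * (0 / ρ ^ 2) ^ (j + 2) := by
    refine hv.slice_le_of_supersolution (φ := fun r => 0 + H * (r / ρ ^ 2) ^ (j + 2)) hp hq hm hρ.le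
      (by fun_prop) (fun r hr => by positivity) (fun x hx => ?_) fun s hs => ?_
    · rw [div_self (by positivity), one_pow, zero_add, mul_one]
      exact (hlt x (sphere_subset_closedBall hx)).le
    · refine (isRadialSupersolutionAt_power hp hH₀ hρ hs.1 j).mono ?_
      have hσ : ((s ^ 2 / ρ ^ 2) ^ (j + 2) : ℝ) = (s / ρ) ^ (2 * (j + 2) : ℝ) := by
        rw [← div_pow, ← pow_mul, ← Real.rpow_natCast]
        push_cast
        rfl
      rw [hσ, zero_add, ← hcB, mul_assoc B, mul_assoc B]
      exact mul_le_mul_of_nonneg_left (rpow_div_mul_rpow_le hp hq hq₁ hc₀ hρ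
        (div_nonneg hs.1 hρ.le) ((div_le_one hρ).2 hs.2.le) hκ) hB.le
  simp only [zero_div, ne_eq, Nat.add_eq_zero_iff, two_ne_zero, and_false, not_false_eq_true,
    zero_pow, mul_zero, add_zero] at hle
  exact hle.not_gt hpos

end IsDeadCoreOn

theorem hasDerivAt_neg_rpow_neg {β t : ℝ} (ht : t < 0) :
    HasDerivAt (fun t : ℝ => (-t) ^ (-β)) (β * (-t) ^ (-β - 1)) t := by
  refine ((hasDerivAt_id t).fun_neg.rpow_const (p := -β) (.inl ?_)).congr_deriv ?_
  · simp only [id]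
    linarith
  · simp only [id]
    ring

theorem isRadialSupersolutionAt_blowup {N : ℕ} {p C L s τ : ℝ} {j : ℕ} (hp : 2 < p) (hC : 0 < C)
    (hL : 0 < L) (hs : s ∈ Icc 0 L) (hτ : 0 < τ) (hj : p ≤ 2 * (j + 2) * (p - 2))
    (hCL : powerPLapConst N p j * C ^ (p - 2) ≤ 1 / (p - 2) * L ^ p) :
    IsRadialSupersolutionAt N p
      (fun r => C + C * τ ^ (-(1 / (p - 2))) * (r / L ^ 2) ^ (j + 2))
      (C * (1 / (p - 2) * τ ^ (-(1 / (p - 2)) - 1)) * (s ^ 2 / L ^ 2) ^ (j + 2)) s := by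
  have hp₂ : 0 < p - 2 := by linarith
  refine (isRadialSupersolutionAt_power hp.le (by positivity) hL hs.1 j).mono ?_
  have hHp : (C * τ ^ (-(1 / (p - 2)))) ^ (p - 1) =
      C ^ (p - 2) * C * τ ^ (-(1 / (p - 2)) - 1) := by
    rw [Real.mul_rpow hC.le (by positivity), ← Real.rpow_mul hτ.le, ← Real.rpow_add_one hC.ne']
    congr 2
    · ring
    · field_simp
      ring
  have hσ : (s / L) ^ (2 * (j + 2) * (p - 1) - p) ≤ (s ^ 2 / L ^ 2) ^ (j + 2) := by
    rw [← div_pow, ← pow_mul, ← Real.rpow_natCast]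
    refine Real.rpow_le_rpow_of_exponent_ge_of_imp (div_nonneg hs.1 hL.le)
      ((div_le_one hL).2 hs.2) ?_ fun _ h => ?_
    · push_cast
      linarith
    · nlinarith [(Nat.cast_nonneg j : (0 : ℝ) ≤ j)]
  calc powerPLapConst N p j * ((C * τ ^ (-(1 / (p - 2)))) ^ (p - 1) / L ^ p) *
        (s / L) ^ (2 * (j + 2) * (p - 1) - p)
      = powerPLapConst N p j * C ^ (p - 2) / L ^ p * (C * τ ^ (-(1 / (p - 2)) - 1)) *
        (s / L) ^ (2 * (j + 2) * (p - 1) - p) := by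
        rw [hHp]
        ring
    _ ≤ 1 / (p - 2) * (C * τ ^ (-(1 / (p - 2)) - 1)) * (s ^ 2 / L ^ 2) ^ (j + 2) := by
        have hcoef := (div_le_iff₀ (by positivity)).2 hCL
        have hσ₀ : 0 ≤ s / L := div_nonneg hs.1 hL.le
        gcongr
    _ = C * (1 / (p - 2) * τ ^ (-(1 / (p - 2)) - 1)) * (s ^ 2 / L ^ 2) ^ (j + 2) := by ring

theorem hasSecondDerivAt_exp_mul (K a b r : ℝ) :
    HasSecondDerivAt (fun r => K + b * Real.exp (a * r ^ 2))
      (2 * a * b * r * Real.exp (a * r ^ 2))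
      ((2 * a * b + 4 * a ^ 2 * b * r ^ 2) * Real.exp (a * r ^ 2)) r := by
  have hexp (r : ℝ) : HasDerivAt (fun r => Real.exp (a * r ^ 2))
      (Real.exp (a * r ^ 2) * (a * (2 * r))) r := by
    simpa using (((hasDerivAt_id r).fun_pow 2).const_mul a).exp
  refine HasSecondDerivAt.of_forall (g' := fun r => 2 * a * b * r * Real.exp (a * r ^ 2))
    (fun r => ?_) ?_
  · refine (((hexp r).const_mul b).const_add K).congr_deriv ?_
    ring
  · refine (((hasDerivAt_id r).const_mul (2 * a * b)).fun_mul (hexp r)).congr_deriv ?_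
    simp only [id]
    ring

theorem heat_exp_le {a n r z : ℝ} (ha : 0 ≤ a) (hn : 6 ≤ n) (hr : 0 ≤ r) (hz : 0 ≤ z)
    (han : a * n ^ 2 ≤ 1) (harn : a * r * n ^ 2 ≤ 1) :
    (n / 2 * (a * z) + 16 * (a * r) * (a * z ^ 2)) * Real.exp (a * r * z) ≤
      a * z ^ 2 * Real.exp (a * r * z) + 2 := by
  have hE := Real.exp_pos (a * r * z)
  have har₀ : 0 ≤ a * r := by positivity
  have har : 16 * (a * r) ≤ 1 / 2 := by nlinarith [mul_nonneg har₀ (by nlinarith : 0 ≤ n ^ 2 - 32)]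
  have hquad : 16 * (a * r) * (a * z ^ 2) ≤ 1 / 2 * (a * z ^ 2) := by gcongr
  rcases le_or_gt n z with hnz | hzn
  · have hlin : n / 2 * (a * z) ≤ 1 / 2 * (a * z ^ 2) := by
      nlinarith [mul_nonneg (mul_nonneg ha hz) (sub_nonneg.2 hnz)]
    nlinarith
  · have hlin : n / 2 * (a * z) ≤ 1 / 2 := by nlinarith [mul_nonneg ha (sub_nonneg.2 hzn.le)]
    have hexp : Real.exp (a * r * z) ≤ 3 := by
      calc Real.exp (a * r * z) ≤ Real.exp 1 := by
            gcongr
            nlinarith [mul_nonneg har₀ (sub_nonneg.2 hzn.le)]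
        _ ≤ 3 := by linarith [Real.exp_one_lt_d9]
    have haz : 0 ≤ a * z ^ 2 := by positivity
    nlinarith

theorem isRadialSupersolutionAt_heat_exp {N : ℕ} {K C c L s τ : ℝ} (hC : 0 < C) (hc : 0 < c)
    (hL : 1 ≤ L) (hs : s ∈ Icc 0 L) (hτ : 0 < τ) (hcL : c * (16 + 8 * N) ^ 2 ≤ L ^ 2) :
    IsRadialSupersolutionAt N 2 (fun r => K + C * Real.exp (c / L ^ 4 / τ * r ^ 2))
      (C * (Real.exp (c / L ^ 4 / τ * (s ^ 2) ^ 2) * (c / L ^ 4 / τ ^ 2 * (s ^ 2) ^ 2)) + 2 * C)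
      s := by
  have : 0 < L := by linarith
  have harn : c / L ^ 4 * L ^ 2 * (16 + 8 * N) ^ 2 ≤ 1 := by
    rw [show c / L ^ 4 * L ^ 2 * (16 + 8 * N) ^ 2 = c * (16 + 8 * N) ^ 2 / L ^ 2 by field_simp]
    exact (div_le_one (by positivity)).2 hcL
  have ha : 0 < c / L ^ 4 := by positivity
  refine ⟨_, _, hasSecondDerivAt_exp_mul K _ C (s ^ 2), ?_, .inl rfl⟩
  set a := c / L ^ 4
  have hle : (s ^ 2 : ℝ) ≤ L ^ 2 := pow_le_pow_left₀ hs.1 hs.2 2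
  have h := heat_exp_le (n := 16 + 8 * N) (r := s ^ 2) (z := s ^ 2 / τ) ha.le
    (by linarith [(Nat.cast_nonneg N : (0 : ℝ) ≤ N)]) (sq_nonneg s) (by positivity)
    (le_trans (by gcongr; exact le_mul_of_one_le_right ha.le (one_le_pow₀ hL)) harn)
    (le_trans (by gcongr) harn)
  have hE : a / τ * (s ^ 2) ^ 2 = a * s ^ 2 * (s ^ 2 / τ) := by ring
  rw [radialPLap, sub_self, Real.rpow_zero, hE]
  calc _ = C * ((((16 + 8 * N) / 2 * (a * (s ^ 2 / τ)) + 16 * (a * s ^ 2) * (a * (s ^ 2 / τ) ^ 2)) *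
        Real.exp (a * s ^ 2 * (s ^ 2 / τ)))) := by
        field_simp
        ring
    _ ≤ C * (a * (s ^ 2 / τ) ^ 2 * Real.exp (a * s ^ 2 * (s ^ 2 / τ)) + 2) := by gcongr
    _ = _ := by
        field_simp

namespace IsDeadCoreOn

variable {N : ℕ} {p q m M : ℝ}

theorem exists_le_of_forall_le_mul_rpow {C : ℝ} (hp : 2 < p) (hm : 0 < m) (hC : 0 < C) :
    ∃ L : ℝ, 1 ≤ L ∧ ∀ (v : Euc N → ℝ → ℝ) (x₀ : Euc N),
      IsDeadCoreOn N p q m M v (closedBall x₀ L) (Icc (-1) 0) →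
      (∀ x ∈ closedBall x₀ L, ∀ τ ∈ Ioc (0 : ℝ) 1, v x (-τ) ≤ C * τ ^ (-1 / (p - 2))) →
      v x₀ 0 ≤ C := by
  have hp₂ : 0 < p - 2 := by linarith
  obtain ⟨j, hj⟩ := exists_nat_ge (p / (p - 2))
  rw [div_le_iff₀ hp₂] at hj
  replace hj : p ≤ 2 * (j + 2) * (p - 2) := by nlinarith [(Nat.cast_nonneg j : (0 : ℝ) ≤ j)]
  obtain ⟨L, hL, hCL⟩ : ∃ L : ℝ, 1 ≤ L ∧
      powerPLapConst N p j * C ^ (p - 2) ≤ 1 / (p - 2) * L ^ p := by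
    refine ⟨max 1 (powerPLapConst N p j * C ^ (p - 2) / (1 / (p - 2))), le_max_left _ _, ?_⟩
    rw [← div_le_iff₀' (by positivity)]
    exact (le_max_right _ _).trans (Real.self_le_rpow_of_one_le (le_max_left _ _) (by linarith))
  have hL₀ : 0 < L := by linarith
  refine ⟨L, hL, fun v x₀ hv hpast => ?_⟩
  have hβ : -1 / (p - 2) = -(1 / (p - 2)) := neg_div _ _
  simp only [hβ] at hpast
  refine hv.le_of_blowup_barrier
    (W := fun r t => C + C * (-t) ^ (-(1 / (p - 2))) * (r / L ^ 2) ^ (j + 2)) hp.le hm hL₀.le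
    ?_ ?_ ?_ ?_ ?_ ?_
  · refine continuousOn_const.add (.mul (.mul continuousOn_const ?_) (by fun_prop))
    exact .rpow_const (by fun_prop) fun z hz => .inl (by linarith [hz.2.2])
  · intro x hx r hr
    have := hpast x hx 1 ⟨one_pos, le_rfl⟩
    rw [Real.one_rpow, mul_one] at this
    exact this.trans (le_add_of_nonneg_right (by positivity))
  · intro r hr t ht
    have : 0 < -t := by linarith [ht.2]
    positivity
  · intro x hx t ht
    have := hpast x hx (-t) ⟨by linarith [ht.2], by linarith [ht.1]⟩
    rw [neg_neg] at this
    rw [div_self (by positivity), one_pow, mul_one]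
    linarith
  · exact fun s hs t ht =>
      ⟨_, (((hasDerivAt_neg_rpow_neg ht.2).const_mul C).mul_const _).const_add C,
        isRadialSupersolutionAt_blowup hp hC hL₀ ⟨hs.1, hs.2.le⟩ (neg_pos.2 ht.2) hj hCL⟩
  · simp

theorem exists_le_of_forall_le_mul_exp {C c : ℝ} (hm : 0 < m) (hC : 0 < C) (hc : 0 < c) :
    ∃ L : ℝ, 1 ≤ L ∧ ∀ (v : Euc N → ℝ → ℝ) (x₀ : Euc N),
      IsDeadCoreOn N 2 q m M v (closedBall x₀ L) (Icc (-1) 0) →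
      (∀ x ∈ closedBall x₀ L, ∀ τ ∈ Ioc (0 : ℝ) 1, v x (-τ) ≤ C * Real.exp (c / τ)) →
      v x₀ 0 ≤ C * Real.exp c + 3 * C := by
  obtain ⟨L, hL, hcL⟩ : ∃ L : ℝ, 1 ≤ L ∧ c * (16 + 8 * N) ^ 2 ≤ L ^ 2 :=
    ⟨max 1 (c * (16 + 8 * N) ^ 2), le_max_left _ _,
      (le_max_right _ _).trans (le_self_pow₀ (le_max_left _ _) two_ne_zero)⟩
  have hL₀ : 0 < L := by linarith
  refine ⟨L, hL, fun v x₀ hv hpast => ?_⟩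
  refine hv.le_of_blowup_barrier
    (W := fun r t => C * Real.exp c + 2 * C * (1 + t) + C * Real.exp (c / L ^ 4 / -t * r ^ 2))
    le_rfl hm hL₀.le ?_ ?_ ?_ ?_ ?_ ?_
  · refine .add (by fun_prop) (continuousOn_const.mul (.rexp (.mul ?_ (by fun_prop))))
    exact continuousOn_const.div (by fun_prop) fun z hz => by linarith [hz.2.2]
  · intro x hx r _
    have := hpast x hx 1 ⟨one_pos, le_rfl⟩
    rw [div_one] at this
    have := Real.exp_pos (c / L ^ 4 / - -1 * r ^ 2)
    nlinarith
  · intro r _ t ht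
    have : 0 ≤ 1 + t := by linarith [ht.1]
    positivity
  · intro x hx t ht
    have := hpast x hx (-t) ⟨by linarith [ht.2], by linarith [ht.1]⟩
    rw [neg_neg] at this
    have h₀ : 0 ≤ C * Real.exp c + 2 * C * (1 + t) := by
      have : 0 ≤ 1 + t := by linarith [ht.1]
      positivity
    rw [show c / L ^ 4 / -t * (L ^ 2) ^ 2 = c / -t by field_simp]
    linarith
  · refine fun s hs t ht =>
      ⟨_, ?_, isRadialSupersolutionAt_heat_exp hC hc hL ⟨hs.1, hs.2.le⟩ (neg_pos.2 ht.2) hcL⟩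
    have hdiv := ((hasDerivAt_id t).fun_neg.fun_inv (neg_ne_zero.2 ht.2.ne)).const_mul (c / L ^ 4)
    simp only [id, ← div_eq_mul_inv] at hdiv
    refine (((hasDerivAt_id t).const_add 1).const_mul (2 * C) |>.const_add (C * Real.exp c)
      |>.fun_add ((hdiv.mul_const ((s ^ 2) ^ 2)).exp.const_mul C)).congr_deriv ?_
    ring
  · intro t ht
    have := mul_pos hC (neg_pos.2 ht.2)
    simp only [ne_eq, two_ne_zero, not_false_eq_true, zero_pow, mul_zero, Real.exp_zero, mul_one]
    linarith

theorem exists_le_of_forall_exists_eq_zero (hN : 1 ≤ N) (hp : 2 ≤ p) (hq : 0 ≤ q) (hq₁ : q < 1)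
    (hm : 0 < m) (hM : 0 ≤ M) :
    ∃ A L : ℝ, 1 ≤ L ∧ ∀ (v : Euc N → ℝ → ℝ) (x₀ : Euc N),
      IsDeadCoreOn N p q m M v (closedBall x₀ (L + 3)) (Icc (-1) 0) →
      (∀ x ∈ closedBall x₀ (L + 1), ∃ y ∈ ball x 1, v y 0 = 0) → v x₀ 0 ≤ A := by
  have hball {x₀ x : Euc N} {L : ℝ} (r : ℝ) (hx : x ∈ closedBall x₀ L) :
      closedBall x r ⊆ closedBall x₀ (L + r) :=
    closedBall_subset_closedBall' (by linarith [mem_closedBall.1 hx])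
  have hsub {x₀ : Euc N} {L : ℝ} : closedBall x₀ L ⊆ closedBall x₀ (L + 3) :=
    closedBall_subset_closedBall (by linarith)
  rcases hp.eq_or_lt with rfl | hp
  · obtain ⟨C, hC, hpast⟩ := exists_forall_le_mul_exp hN hq hq₁ hm.le hM
    obtain ⟨L, hL, hle⟩ := exists_le_of_forall_le_mul_exp (N := N) (q := q) (M := M) (C := C)
      (c := 5 / (1 - q)) hm (by linarith) (div_pos (by norm_num) (by linarith))
    exact ⟨_, L, hL, fun v x₀ hv hzero => hle v x₀ (hv.mono hsub subset_rfl) fun x hx =>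
      hpast v x (hv.mono (hball 3 hx) subset_rfl) fun y hy => hzero y (hball 1 hx hy)⟩
  · obtain ⟨C, hC, hpast⟩ := exists_forall_le_mul_rpow hN hp hq hq₁ hm.le hM
    obtain ⟨L, hL, hle⟩ := exists_le_of_forall_le_mul_rpow (N := N) (q := q) (M := M) (C := C)
      hp hm (by linarith)
    exact ⟨C, L, hL, fun v x₀ hv hzero => hle v x₀ (hv.mono hsub subset_rfl) fun x hx =>
      hpast v x (hv.mono (hball 3 hx) subset_rfl) fun y hy => hzero y (hball 1 hx hy)⟩

end IsDeadCoreOn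

/-! ### Classical solutions -/

section PFlux

variable {E : Type*} [NormedAddCommGroup E] [InnerProductSpace ℝ E] {p : ℝ} {a : E}

/-- The flux `‖a‖ ^ (p - 2) a` of the `p`-Laplacian at the gradient `a`. -/
def pFlux (p : ℝ) (a : E) : E :=
  ‖a‖ ^ (p - 2) • a

theorem pFlux_two : pFlux 2 a = a := by
  simp [pFlux]

theorem pFlux_zero (p : ℝ) : pFlux p (0 : E) = 0 :=
  smul_zero _

theorem pFlux_smul {s : ℝ} (hs : 0 < s) (p : ℝ) (a : E) :
    pFlux p (s • a) = s ^ (p - 1) • pFlux p a := by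
  rw [pFlux, pFlux, norm_smul, Real.norm_of_nonneg hs.le, Real.mul_rpow hs.le (norm_nonneg a),
    smul_smul, smul_smul, show p - 1 = p - 2 + 1 by ring, Real.rpow_add_one hs.ne']
  congr 1
  ring

theorem norm_pFlux (ha : a ≠ 0) : ‖pFlux p a‖ = ‖a‖ ^ (p - 1) := by
  rw [pFlux, norm_smul, Real.norm_of_nonneg (by positivity),
    ← Real.rpow_add_one (norm_ne_zero_iff.2 ha)]
  congr 1
  ring

theorem pFlux_ne_zero (ha : a ≠ 0) : pFlux p a ≠ 0 :=
  smul_ne_zero (Real.rpow_pos_of_pos (norm_pos_iff.2 ha) _).ne' ha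

theorem pFlux_pFlux_conj (hp : 1 < p) (a : E) : pFlux (p / (p - 1)) (pFlux p a) = a := by
  rcases eq_or_ne a 0 with rfl | ha
  · simp only [pFlux_zero]
  have hp₁ : p - 1 ≠ 0 := by linarith
  have hexp : (p - 1) * (p / (p - 1) - 2) + (p - 2) = 0 := by
    field_simp
    ring
  rw [pFlux, norm_pFlux ha, pFlux, ← Real.rpow_mul (norm_nonneg a), smul_smul,
    ← Real.rpow_add (norm_pos_iff.2 ha), hexp, Real.rpow_zero, one_smul]

theorem hasFDerivAt_pFlux (p : ℝ) (ha : a ≠ 0) :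
    HasFDerivAt (pFlux p) (‖a‖ ^ (p - 2) • (ContinuousLinearMap.id ℝ E +
      (p - 2) • (innerSL ℝ (‖a‖⁻¹ • a)).smulRight (‖a‖⁻¹ • a))) a := by
  have _ : 0 < ‖a‖ := norm_pos_iff.2 ha
  have hpow (y : E) : (‖y‖ ^ 2) ^ ((p - 2) / 2) = ‖y‖ ^ (p - 2) := by
    rw [← Real.rpow_natCast, ← Real.rpow_mul (norm_nonneg y)]
    congr 1
    push_cast
    ring
  have h := ((hasFDerivAt_id a).norm_sq.rpow_const (p := (p - 2) / 2)
    (.inl (by simpa using ha))).smul (hasFDerivAt_id a)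
  simp only [id, hpow] at h
  refine h.congr_fderiv ?_
  ext ξ
  rw [Real.rpow_sub_one (by positivity), hpow]
  simp [smul_smul]
  module

theorem exists_mul_rpow_le_inner_pFlux {V : ℝ → E} {y e : E} (hV₀ : V 0 = 0)
    (hV : HasDerivAt V y 0) (hye : 0 < ⟪y, e⟫) (p : ℝ) :
    ∃ c, 0 < c ∧ ∀ᶠ s in 𝓝[>] 0, c * s ^ (p - 1) ≤ ⟪pFlux p (V s), e⟫ := by
  have hy : y ≠ 0 := by
    rintro rfl
    simp at hye
  have hpos : 0 < ⟪pFlux p y, e⟫ := by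
    rw [pFlux, real_inner_smul_left]
    positivity
  have hslope : Tendsto (fun s : ℝ => s⁻¹ • V s) (𝓝[>] 0) (𝓝 y) := by
    have h := hasDerivAt_iff_tendsto_slope_zero.1 hV
    simp only [zero_add, hV₀, sub_zero] at h
    exact h.mono_left (nhdsWithin_mono _ fun s hs => ne_of_gt hs)
  have hlim := (((hasFDerivAt_pFlux p hy).continuousAt.tendsto.comp hslope).inner
    (tendsto_const_nhds (x := e))).eventually_const_lt (half_lt_self hpos)
  refine ⟨⟪pFlux p y, e⟫ / 2, half_pos hpos, ?_⟩
  filter_upwards [hlim, self_mem_nhdsWithin] with s hs hs₀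
  rw [mem_Ioi] at hs₀
  have hV_s : pFlux p (V s) = s ^ (p - 1) • pFlux p (s⁻¹ • V s) := by
    rw [← pFlux_smul hs₀, smul_inv_smul₀ hs₀.ne']
  rw [hV_s, real_inner_smul_left, mul_comm]
  exact mul_le_mul_of_nonneg_left hs.le (by positivity)

end PFlux

theorem trace_comp_pFlux_fderiv {N : ℕ} (p : ℝ) (X : Euc N →L[ℝ] Euc N) (a : Euc N) :
    LinearMap.trace ℝ (Euc N) ((‖a‖ ^ (p - 2) • (ContinuousLinearMap.id ℝ (Euc N) +
      (p - 2) • (innerSL ℝ (‖a‖⁻¹ • a)).smulRight (‖a‖⁻¹ • a))).comp X).toLinearMap =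
      ‖a‖ ^ (p - 2) * normalizedPLap p X a := by
  have hlin : ((‖a‖ ^ (p - 2) • (ContinuousLinearMap.id ℝ (Euc N) +
      (p - 2) • (innerSL ℝ (‖a‖⁻¹ • a)).smulRight (‖a‖⁻¹ • a))).comp X).toLinearMap =
      ‖a‖ ^ (p - 2) • (X.toLinearMap + (p - 2) •
        ((innerSL ℝ (‖a‖⁻¹ • a)).toLinearMap ∘ₗ X.toLinearMap).smulRight (‖a‖⁻¹ • a)) := by
    ext1 ξ
    simp
  rw [hlin, map_smul, map_add, map_smul, LinearMap.trace_smulRight, normalizedPLap,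
    real_inner_comm]
  rfl

theorem exists_hasFDerivAt_of_differentiableAt_pFlux {N : ℕ} {p : ℝ} (hp : 1 < p)
    {G : Euc N → Euc N} {x : Euc N} (hG : DifferentiableAt ℝ (fun y => pFlux p (G y)) x)
    (hnd : G x ≠ 0 ∨ p = 2) :
    ∃ X : Euc N →L[ℝ] Euc N, HasFDerivAt G X x ∧ ‖G x‖ ^ (p - 2) * normalizedPLap p X (G x) =
      LinearMap.trace ℝ (Euc N) (fderiv ℝ (fun y => pFlux p (G y)) x).toLinearMap := by
  rcases eq_or_ne p 2 with rfl | hp₂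
  · simp only [pFlux_two] at hG ⊢
    exact ⟨_, hG.hasFDerivAt, by simp [normalizedPLap]⟩
  have hGx : G x ≠ 0 := hnd.resolve_right hp₂
  have hdiff : DifferentiableAt ℝ G x := by
    have h := (hasFDerivAt_pFlux (p / (p - 1)) (pFlux_ne_zero (p := p) hGx)).differentiableAt.comp
      x hG
    exact h.congr_of_eventuallyEq (.of_forall fun y => (pFlux_pFlux_conj hp (G y)).symm)
  refine ⟨_, hdiff.hasFDerivAt, ?_⟩
  have hchain : HasFDerivAt (fun y => pFlux p (G y)) _ x :=
    (hasFDerivAt_pFlux p hGx).comp x hdiff.hasFDerivAt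
  rw [← trace_comp_pFlux_fderiv, hchain.fderiv]

theorem hasDerivAt_add_smul {E : Type*} [NormedAddCommGroup E] [NormedSpace ℝ E] (x ξ : E)
    (s : ℝ) : HasDerivAt (fun s : ℝ => x + s • ξ) ξ s := by
  simpa using ((hasDerivAt_id s).smul_const ξ).const_add x

theorem tendsto_add_smul_nhds_zero {E : Type*} [NormedAddCommGroup E] [NormedSpace ℝ E] (x ξ : E) :
    Tendsto (fun s : ℝ => x + s • ξ) (𝓝 0) (𝓝 x) := by
  simpa using (hasDerivAt_add_smul x ξ 0).continuousAt.tendsto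

theorem hasDerivAt_comp_add_smul {E : Type*} [NormedAddCommGroup E] [InnerProductSpace ℝ E]
    [CompleteSpace E] {g : E → ℝ} {x ξ : E} {s : ℝ} (hg : DifferentiableAt ℝ g (x + s • ξ)) :
    HasDerivAt (fun s : ℝ => g (x + s • ξ)) ⟪gradient g (x + s • ξ), ξ⟫ s :=
  (hg.hasGradientAt.hasFDerivAt.comp_hasDerivAt s (hasDerivAt_add_smul x ξ s)).congr_deriv
    (InnerProductSpace.toDual_apply_apply ..)

theorem rpow_le_of_rpow_le_deriv {h h' : ℝ → ℝ} {c γ s : ℝ} (hγ : 0 < γ) (hs : 0 ≤ s)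
    (hderiv : ∀ r ∈ Icc 0 s, HasDerivAt h (h' r) r)
    (hle : ∀ r ∈ Ioo 0 s, c * r ^ (γ - 1) ≤ h' r) : h 0 + c / γ * s ^ γ ≤ h s := by
  have hmono : MonotoneOn (fun r => h r - c / γ * r ^ γ) (Icc 0 s) := by
    refine monotoneOn_of_hasDerivWithinAt_nonneg (f' := fun r => h' r - c * r ^ (γ - 1))
      (convex_Icc 0 s) (fun r hr => ?_) (fun r hr => ?_) fun r hr => ?_
    · exact ((hderiv r hr).continuousAt.sub
        ((Real.continuousAt_rpow_const r γ (.inr hγ.le)).const_mul _)).continuousWithinAt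
    · rw [interior_Icc] at hr
      have hpow := (Real.hasDerivAt_rpow_const (p := γ) (.inl hr.1.ne')).const_mul (c / γ)
      refine (((hderiv r (Ioo_subset_Icc_self hr)).sub hpow).congr_deriv ?_).hasDerivWithinAt
      field_simp
    · rw [interior_Icc] at hr
      exact sub_nonneg.2 (hle r hr)
  have h₀ := hmono (left_mem_Icc.2 hs) (right_mem_Icc.2 hs) hs
  simp only [Real.zero_rpow hγ.ne', mul_zero, sub_zero] at h₀
  linarith

theorem not_eventually_le_add_rpow {h h' : ℝ → ℝ} {c γ κ : ℝ} (hc : 0 < c) (hγ : 0 < γ)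
    (hκ : γ < κ) (hderiv : ∀ᶠ s in 𝓝 0, HasDerivAt h (h' s) s)
    (hle : ∀ᶠ s in 𝓝[>] 0, c * s ^ (γ - 1) ≤ h' s) (C : ℝ) :
    ¬ ∀ᶠ s in 𝓝[>] 0, h s ≤ h 0 + C * s ^ κ := by
  intro hupper
  have hlim : Tendsto (fun s : ℝ => C * s ^ (κ - γ)) (𝓝[>] 0) (𝓝 0) := by
    have h := ((Real.continuousAt_rpow_const 0 (κ - γ) (.inr (by linarith))).const_mul C).tendsto
    rw [Real.zero_rpow (by linarith), mul_zero] at h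
    exact h.mono_left nhdsWithin_le_nhds
  refine (div_pos hc hγ).not_ge (ge_of_tendsto hlim ?_)
  obtain ⟨ε, hε, hball⟩ := Metric.eventually_nhds_iff_ball.1 hderiv
  obtain ⟨δ, hδ, hIoo⟩ := (mem_nhdsGT_iff_exists_Ioo_subset).1 hle
  rw [mem_Ioi] at hδ
  filter_upwards [hupper, Ioo_mem_nhdsGT (lt_min hε hδ)] with s hs hs₀
  obtain ⟨hs₁, hs₂⟩ := lt_min_iff.1 hs₀.2
  have hlower := rpow_le_of_rpow_le_deriv hγ hs₀.1.le
    (fun r hr => hball r (by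
      rw [mem_ball_zero_iff, Real.norm_of_nonneg hr.1]; exact hr.2.trans_lt hs₁))
    fun r hr => hIoo ⟨hr.1, hr.2.trans hs₂⟩
  refine le_of_mul_le_mul_right ?_ (Real.rpow_pos_of_pos hs₀.1 γ)
  rw [mul_assoc, ← Real.rpow_add hs₀.1, sub_add_cancel]
  linarith

theorem exists_inner_pos_of_trace_pos {N : ℕ} {Y : Euc N →L[ℝ] Euc N}
    (hY : 0 < LinearMap.trace ℝ (Euc N) Y.toLinearMap) :
    ∃ e : Euc N, ‖e‖ = 1 ∧ 0 < ⟪Y e, e⟫ := by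
  let b := EuclideanSpace.basisFun (Fin N) ℝ
  rw [LinearMap.trace_eq_sum_inner _ b] at hY
  by_contra! hneg
  refine hY.not_ge (Finset.sum_nonpos fun i _ => ?_)
  rw [real_inner_comm]
  exact hneg (b i) (b.norm_eq_one i)

-- If the trace were positive, `g` would grow at least like `s ^ (p / (p - 1))` in some direction.
theorem trace_fderiv_pFlux_gradient_nonpos {N : ℕ} {p : ℝ} (hp : 1 < p) {g : Euc N → ℝ}
    {x : Euc N} (hg : ∀ᶠ y in 𝓝 x, DifferentiableAt ℝ g y)
    (hV : DifferentiableAt ℝ (fun y => pFlux p (gradient g y)) x) (h₀ : gradient g x = 0)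
    {C κ : ℝ} (hκ : p / (p - 1) < κ) (hle : ∀ᶠ y in 𝓝 x, g y ≤ g x + C * ‖y - x‖ ^ κ) :
    LinearMap.trace ℝ (Euc N)
      (fderiv ℝ (fun y => pFlux p (gradient g y)) x).toLinearMap ≤ 0 := by
  by_contra! htrace
  obtain ⟨e, he, hpos⟩ := exists_inner_pos_of_trace_pos htrace
  have hline := tendsto_add_smul_nhds_zero x e
  have hVline : HasDerivAt (fun s : ℝ => pFlux p (gradient g (x + s • e)))
      (fderiv ℝ (fun y => pFlux p (gradient g y)) x e) 0 :=
    HasFDerivAt.comp_hasDerivAt (l := fun y => pFlux p (gradient g y))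
      (f := fun s : ℝ => x + s • e) 0 (by simpa using hV.hasFDerivAt) (hasDerivAt_add_smul x e 0)
  obtain ⟨c, hc, hgrowth⟩ := exists_mul_rpow_le_inner_pFlux
    (by rw [zero_smul, add_zero, h₀, pFlux_zero]) hVline hpos (p / (p - 1))
  simp only [pFlux_pFlux_conj hp] at hgrowth
  refine not_eventually_le_add_rpow (h := fun s => g (x + s • e)) hc
    (div_pos (by linarith) (by linarith)) hκ
    ((hline.eventually hg).mono fun s hs => hasDerivAt_comp_add_smul hs) hgrowth C ?_
  filter_upwards [nhdsWithin_le_nhds (hline.eventually hle), self_mem_nhdsWithin] with s hs hs₀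
  rw [mem_Ioi] at hs₀
  simpa [norm_smul, he, abs_of_pos hs₀] using hs

theorem hasSecondDerivAt_comp_add_smul {E : Type*} [NormedAddCommGroup E] [InnerProductSpace ℝ E]
    [CompleteSpace E] {g : E → ℝ} {X : E →L[ℝ] E} {x : E}
    (hg : ∀ᶠ y in 𝓝 x, DifferentiableAt ℝ g y) (hX : HasFDerivAt (gradient g) X x) (ξ : E) :
    HasSecondDerivAt (fun s : ℝ => g (x + s • ξ)) ⟪gradient g x, ξ⟫ ⟪X ξ, ξ⟫ 0 := by
  refine ⟨fun s => ⟪gradient g (x + s • ξ), ξ⟫, ?_, by simp only [zero_smul, add_zero], ?_⟩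
  · exact ((tendsto_add_smul_nhds_zero x ξ).eventually hg).mono fun s hs =>
      hasDerivAt_comp_add_smul hs
  · have h := HasFDerivAt.comp_hasDerivAt (f := fun s : ℝ => x + s • ξ) 0
      (by simpa using hX) (hasDerivAt_add_smul x ξ 0)
    simpa using h.inner ℝ (hasDerivAt_const (0 : ℝ) ξ)

section ClassicalSolution

variable {N : ℕ} {p q m M : ℝ} {lam u : Euc N × ℝ → ℝ} {D : Set (Euc N × ℝ)}

theorem deadCoreJet_of_isDCSol (hp : 1 < p) (hD : IsOpen D)
    (hlam : ∀ z ∈ D, m ≤ lam z ∧ lam z ≤ M) (hsol : IsDCSol N p q lam u D)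
    (hu : ∀ z ∈ D, 0 ≤ u z) (hut : ∀ z ∈ D, 0 ≤ timeDeriv N u z) {x : Euc N} {t : ℝ}
    (hz : (x, t) ∈ D) :
    DeadCoreJet N p q m M (fun x t => u (x, t)) x t (spatialGrad N u (x, t))
      (timeDeriv N u (x, t)) (lam (x, t) * plusPowQ q (u (x, t))) := by
  obtain ⟨hdiff, hdiff_t, hflux, hpde⟩ := hsol.2 _ hz
  have hnear : ∀ᶠ y in 𝓝 x, DifferentiableAt ℝ (fun y => u (y, t)) y := by
    have hcont : ContinuousAt (fun y : Euc N => (y, t)) x := by fun_prop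
    filter_upwards [hcont (hD.mem_nhds hz)] with y hy using (hsol.2 _ hy).1
  have hflux' : DifferentiableAt ℝ (fun y => pFlux p (gradient (fun y => u (y, t)) y)) x := hflux
  have htrace : LinearMap.trace ℝ (Euc N)
      (fderiv ℝ (fun y => pFlux p (gradient (fun y => u (y, t)) y)) x).toLinearMap =
        timeDeriv N u (x, t) + lam (x, t) * plusPowQ q (u (x, t)) := sub_eq_iff_eq_add'.1 hpde
  exact
  { nonneg := hu _ hz
    timeDeriv_nonneg := hut _ hz
    le_absorption := mul_le_mul_of_nonneg_right (hlam _ hz).1 plusPowQ_nonneg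
    absorption_le := mul_le_mul_of_nonneg_right (hlam _ hz).2 plusPowQ_nonneg
    hasDerivAt_time := hdiff_t.hasDerivAt
    hasDerivAt_line := fun ξ => by
      simpa [spatialGrad] using hasDerivAt_comp_add_smul (g := fun y => u (y, t)) (ξ := ξ) (s := 0)
        (by simpa using hdiff)
    exists_hessian := fun hnd => by
      obtain ⟨X, hX, heq⟩ := exists_hasFDerivAt_of_differentiableAt_pFlux hp hflux' hnd
      exact ⟨X, hasSecondDerivAt_comp_add_smul hnear hX, heq.trans htrace⟩
    nonpos_of_touching := fun ha C κ hκ hle =>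
      htrace.symm.trans_le (trace_fderiv_pFlux_gradient_nonpos hp hnear hflux' ha hκ hle) }

theorem isDeadCoreOn_of_isDCSol {S : Set (Euc N)} {I : Set ℝ} (hp : 1 < p) (hS : IsOpen S)
    (hI : IsOpen I) (hlam : ∀ z ∈ S ×ˢ I, m ≤ lam z ∧ lam z ≤ M)
    (hsol : IsDCSol N p q lam u (S ×ˢ I)) (hu : ∀ z ∈ S ×ˢ I, 0 ≤ u z)
    (hut : ∀ z ∈ S ×ˢ I, 0 ≤ timeDeriv N u z) :
    IsDeadCoreOn N p q m M (fun x t => u (x, t)) S I :=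
  ⟨hsol.1, fun _ hx _ ht =>
    ⟨_, _, _, deadCoreJet_of_isDCSol hp (hS.prod hI) hlam hsol hu hut ⟨hx, ht⟩⟩⟩

end ClassicalSolution

/-! ### Intrinsic rescaling and porosity -/

theorem plusPowQ_div {k : ℝ} (hk : 0 < k) (q s : ℝ) :
    plusPowQ q (s / k) = k ^ (1 - q) / k * plusPowQ q s := by
  rcases le_or_gt s 0 with hs | hs
  · rw [plusPowQ_of_nonpos hs, plusPowQ_of_nonpos (div_nonpos_of_nonpos_of_nonneg hs hk.le),
      mul_zero]
  · rw [plusPowQ_of_pos hs, plusPowQ_of_pos (by positivity), Real.div_rpow hs.le hk.le,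
      Real.rpow_sub hk, Real.rpow_one]
    field_simp

theorem normalizedPLap_smul_smul {N : ℕ} {r : ℝ} (hr : 0 < r) (p c : ℝ)
    (X : Euc N →L[ℝ] Euc N) (a : Euc N) :
    normalizedPLap p (c • X) (r • a) = c * normalizedPLap p X a := by
  have hdir : ‖r • a‖⁻¹ • r • a = ‖a‖⁻¹ • a := by
    rw [norm_smul, Real.norm_of_nonneg hr.le, smul_smul]
    congr 1
    field_simp
  rw [normalizedPLap, normalizedPLap, hdir, ContinuousLinearMap.toLinearMap_smul, map_smul,
    smul_eq_mul, smul_apply, real_inner_smul_left]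
  ring

theorem HasSecondDerivAt.comp_const_mul {g : ℝ → ℝ} {b c : ℝ} (hg : HasSecondDerivAt g b c 0)
    (η : ℝ) : HasSecondDerivAt (fun s => g (η * s)) (η * b) (η ^ 2 * c) 0 := by
  have hlin (s : ℝ) : HasDerivAt (fun s : ℝ => η * s) η s := by
    simpa using (hasDerivAt_id s).const_mul η
  have hlin₂ : HasSecondDerivAt (fun s : ℝ => η * s) η 0 0 :=
    .of_forall (g' := fun _ => η) hlin (hasDerivAt_const 0 η)
  exact (HasSecondDerivAt.comp (h := g) (by simpa using hg) hlin₂).congr (mul_comm ..) (by ring)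

theorem eventually_le_of_rescaled {E : Type*} [NormedAddCommGroup E] [NormedSpace ℝ E] {g : E → ℝ}
    {x₀ x : E} {η k C κ : ℝ} (hη : 0 < η) (hk : 0 < k)
    (hle : ∀ᶠ y in 𝓝 x, g (x₀ + η • y) / k ≤ g (x₀ + η • x) / k + C * ‖y - x‖ ^ κ) :
    ∀ᶠ y in 𝓝 (x₀ + η • x),
      g y ≤ g (x₀ + η • x) + k * C * η⁻¹ ^ κ * ‖y - (x₀ + η • x)‖ ^ κ := by
  have hinv : Tendsto (fun y : E => η⁻¹ • (y - x₀)) (𝓝 (x₀ + η • x)) (𝓝 x) := by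
    have hcont : Continuous fun y : E => η⁻¹ • (y - x₀) := by fun_prop
    simpa [inv_smul_smul₀ hη.ne'] using hcont.tendsto (x₀ + η • x)
  filter_upwards [hinv.eventually hle] with y hy
  have hnorm : ‖η⁻¹ • (y - x₀) - x‖ = η⁻¹ * ‖y - (x₀ + η • x)‖ := by
    rw [← norm_smul_of_nonneg (inv_pos.2 hη).le, ← sub_sub, smul_sub η⁻¹ (y - x₀),
      inv_smul_smul₀ hη.ne']
  rw [smul_inv_smul₀ hη.ne', add_sub_cancel, hnorm,
    Real.mul_rpow (inv_pos.2 hη).le (norm_nonneg _), div_le_iff₀ hk] at hy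
  refine hy.trans_eq ?_
  field_simp

namespace DeadCoreJet

variable {N : ℕ} {p q m M η k ζ t₀ t b f : ℝ} {v : Euc N → ℝ → ℝ} {x₀ x a : Euc N}

theorem exists_hessian_rescale (hη : 0 < η) (hk : 0 < k) (hηp : η ^ p = ζ * k ^ (p - 2))
    (h : DeadCoreJet N p q m M v (x₀ + η • x) (t₀ + ζ * t) a b f)
    (hnd : (η / k) • a ≠ 0 ∨ p = 2) :
    ∃ X : Euc N →L[ℝ] Euc N,
      (∀ ξ : Euc N, HasSecondDerivAt
        (fun s : ℝ => v (x₀ + η • x + (η * s) • ξ) (t₀ + ζ * t) / k) ⟪(η / k) • a, ξ⟫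
        ⟪X ξ, ξ⟫ 0) ∧
      ‖(η / k) • a‖ ^ (p - 2) * normalizedPLap p X ((η / k) • a) = ζ / k * b + ζ / k * f := by
  obtain ⟨X, hX, heq⟩ := h.exists_hessian (hnd.imp_left fun ha ha₀ => ha (by simp [ha₀]))
  refine ⟨(η ^ 2 / k) • X, fun ξ => ?_, ?_⟩
  · simp only [div_eq_inv_mul _ k, smul_apply, real_inner_smul_left]
    exact (((hX ξ).comp_const_mul η).const_mul k⁻¹).congr (by ring) (by ring)
  · have hpow : (η / k) ^ (p - 2) * (η ^ 2 / k) = ζ / k := by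
      have hη₂ : η ^ (p - 2) * η ^ 2 = η ^ p := by
        rw [← Real.rpow_natCast η 2, ← Real.rpow_add hη]
        norm_num
      rw [Real.div_rpow hη.le hk.le, div_mul_div_comm, hη₂, hηp]
      field_simp
    rw [normalizedPLap_smul_smul (by positivity), norm_smul_of_nonneg (by positivity),
      Real.mul_rpow (by positivity) (norm_nonneg a), ← mul_add, ← heq, ← hpow]
    ring

theorem rescale (hη : 0 < η) (hk : 0 < k) (hζ : ζ = k ^ (1 - q)) (hηp : η ^ p = ζ * k ^ (p - 2))
    (h : DeadCoreJet N p q m M v (x₀ + η • x) (t₀ + ζ * t) a b f) :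
    DeadCoreJet N p q m M (fun x t => v (x₀ + η • x) (t₀ + ζ * t) / k) x t ((η / k) • a)
      (ζ / k * b) (ζ / k * f) := by
  have hζk : 0 ≤ ζ / k := by rw [hζ]; positivity
  have habs := plusPowQ_div hk q (v (x₀ + η • x) (t₀ + ζ * t))
  rw [← hζ] at habs
  have hline (ξ : Euc N) (s : ℝ) : x₀ + η • (x + s • ξ) = x₀ + η • x + (η * s) • ξ := by
    rw [smul_add, smul_smul, add_assoc]
  exact
  { nonneg := div_nonneg h.nonneg hk.le
    timeDeriv_nonneg := mul_nonneg hζk h.timeDeriv_nonneg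
    le_absorption := by
      rw [habs, mul_left_comm]
      exact mul_le_mul_of_nonneg_left h.le_absorption hζk
    absorption_le := by
      rw [habs, mul_left_comm]
      exact mul_le_mul_of_nonneg_left h.absorption_le hζk
    hasDerivAt_time := by
      have hlin : HasDerivAt (fun s : ℝ => t₀ + ζ * s) ζ t := by
        simpa using ((hasDerivAt_id t).const_mul ζ).const_add t₀
      exact ((h.hasDerivAt_time.comp t hlin).div_const k).congr_deriv (by ring)
    hasDerivAt_line := fun ξ => by
      have hlin : HasDerivAt (fun s : ℝ => η * s) η 0 := by
        simpa using (hasDerivAt_id (0 : ℝ)).const_mul η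
      have hcomp := (HasDerivAt.comp (h₂ := fun s : ℝ => v (x₀ + η • x + s • ξ) (t₀ + ζ * t)) 0
        (by simpa using h.hasDerivAt_line ξ) hlin).div_const k
      simp only [hline, real_inner_smul_left]
      exact hcomp.congr_deriv (by ring)
    exists_hessian := fun hnd => by
      simp only [hline]
      exact h.exists_hessian_rescale hη hk hηp hnd
    nonpos_of_touching := fun ha C κ hκ hle => by
      have ha₀ : a = 0 := by simpa [hη.ne', hk.ne'] using ha
      rw [← mul_add]
      exact mul_nonpos_of_nonneg_of_nonpos hζk
        (h.nonpos_of_touching ha₀ _ κ hκ (eventually_le_of_rescaled hη hk hle)) }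

end DeadCoreJet

namespace IsDeadCoreOn

variable {N : ℕ} {p q m M : ℝ}

theorem rescale {v : Euc N → ℝ → ℝ} {S : Set (Euc N)} {I : Set ℝ} {η : ℝ} (hη : 0 < η)
    (hpq : p - 1 - q ≠ 0) (hv : IsDeadCoreOn N p q m M v S I) (x₀ : Euc N) (t₀ : ℝ) :
    IsDeadCoreOn N p q m M
      (fun x t => v (x₀ + η • x) (t₀ + η ^ thetaV p q * t) / η ^ (p / (p - 1 - q)))
      ((fun x => x₀ + η • x) ⁻¹' S) ((fun t => t₀ + η ^ thetaV p q * t) ⁻¹' I) := by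
  refine ⟨?_, fun x hx t ht => ?_⟩
  · exact (hv.continuousOn.comp
      (f := fun z : Euc N × ℝ => (x₀ + η • z.1, t₀ + η ^ thetaV p q * z.2)) (by fun_prop)
      fun z hz => hz).div_const _
  · obtain ⟨a, b, f, h⟩ := hv.exists_jet _ hx _ ht
    refine ⟨_, _, _, h.rescale hη (by positivity) ?_ ?_⟩
    · rw [← Real.rpow_mul hη.le, thetaV, div_mul_eq_mul_div]
    · rw [← Real.rpow_mul hη.le, ← Real.rpow_add hη, thetaV]
      congr 1
      field_simp
      ring

theorem exists_le_mul_rpow_of_forall_exists_eq_zero (hN : 1 ≤ N) (hp : 2 ≤ p) (hq : 0 ≤ q)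
    (hq₁ : q < 1) (hm : 0 < m) (hM : 0 ≤ M) :
    ∃ A L : ℝ, 1 ≤ L ∧ ∀ (v : Euc N → ℝ → ℝ) (x₀ : Euc N) (t₀ η : ℝ), 0 < η →
      IsDeadCoreOn N p q m M v (closedBall x₀ (η * (L + 3))) (Icc (t₀ - η ^ thetaV p q) t₀) →
      (∀ x ∈ closedBall x₀ (η * (L + 1)), ∃ y ∈ ball x η, v y t₀ = 0) →
      v x₀ t₀ ≤ A * η ^ (p / (p - 1 - q)) := by
  obtain ⟨A, L, hL, hbound⟩ := exists_le_of_forall_exists_eq_zero hN hp hq hq₁ hm hM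
  refine ⟨A, L, hL, fun v x₀ t₀ η hη hv hzero => ?_⟩
  have hnorm (x : Euc N) : ‖η • x‖ = η * ‖x‖ := norm_smul_of_nonneg hη.le x
  have hrescaled := hbound _ 0
    ((hv.rescale hη (by linarith) x₀ t₀).mono (fun x hx => ?_) fun t ht => ?_) fun x hx => ?_
  · rwa [smul_zero, add_zero, mul_zero, add_zero, div_le_iff₀ (by positivity)] at hrescaled
  · rw [mem_closedBall_zero_iff] at hx
    rw [mem_preimage, mem_closedBall_iff_norm, add_sub_cancel_left, hnorm]
    exact mul_le_mul_of_nonneg_left hx hη.le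
  · have hpos : 0 ≤ η ^ thetaV p q := by positivity
    exact ⟨by nlinarith [ht.1], by nlinarith [ht.2]⟩
  · rw [mem_closedBall_zero_iff] at hx
    obtain ⟨y, hy, hvy⟩ := hzero (x₀ + η • x) (by
      rw [mem_closedBall_iff_norm, add_sub_cancel_left, hnorm]
      exact mul_le_mul_of_nonneg_left hx hη.le)
    refine ⟨η⁻¹ • (y - x₀), ?_, ?_⟩
    · rw [mem_ball_iff_norm] at hy ⊢
      rw [← mul_lt_mul_iff_right₀ hη, ← hnorm, smul_sub, smul_inv_smul₀ hη.ne', mul_one, sub_sub]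
      exact hy
    · simp only [smul_inv_smul₀ hη.ne', add_sub_cancel, mul_zero, add_zero, hvy, zero_div]

theorem exists_mul_rpow_le_of_mem_closure (hp : 2 ≤ p) (hq : 0 ≤ q) (hq₁ : q < 1) (hm : 0 < m) :
    ∃ c, 0 < c ∧ ∀ (v : Euc N → ℝ → ℝ) (U : Set (Euc N)) (I : Set ℝ) (x₀ : Euc N) (t₀ ρ : ℝ),
      IsOpen U → IsOpen I → IsDeadCoreOn N p q m M v U I → 0 < ρ → closedBall x₀ (2 * ρ) ⊆ U →
      t₀ ∈ I → (x₀, t₀) ∈ closure {z ∈ U ×ˢ I | 0 < v z.1 z.2} →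
      ∃ y ∈ closedBall x₀ (2 * ρ), c * ρ ^ (p / (p - 1 - q)) ≤ v y t₀ := by
  obtain ⟨c, hc, hgrowth⟩ := exists_mul_rpow_le (N := N) (M := M) hp hq hq₁ hm
  refine ⟨c, hc, fun v U I x₀ t₀ ρ hU hI hv hρ hball ht₀ hcl => ?_⟩
  by_contra! hlt
  have hnear : ∀ᶠ t in 𝓝 t₀, ∀ y ∈ closedBall x₀ (2 * ρ), v y t < c * ρ ^ (p / (p - 1 - q)) := by
    refine (isCompact_closedBall x₀ (2 * ρ)).eventually_forall_of_forall_eventually fun y hy => ?_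
    have hcont : Tendsto (fun z : Euc N × ℝ => v z.1 z.2) (𝓝 (y, t₀)) (𝓝 (v y t₀)) :=
      hv.continuousOn.continuousAt ((hU.prod hI).mem_nhds ⟨hball hy, ht₀⟩)
    exact (hcont.comp (continuous_swap.tendsto (t₀, y))).eventually_lt_const (hlt y hy)
  have hev : ∀ᶠ z : Euc N × ℝ in 𝓝 (x₀, t₀), z.1 ∈ ball x₀ ρ ∧
      ∀ y ∈ closedBall x₀ (2 * ρ), v y z.2 < c * ρ ^ (p / (p - 1 - q)) :=
    ((continuous_fst.tendsto (x₀, t₀)).eventually_mem (ball_mem_nhds x₀ hρ)).and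
      ((continuous_snd.tendsto (x₀, t₀)).eventually hnear)
  obtain ⟨⟨x, t⟩, ⟨⟨-, ht⟩, hpos⟩, hx, hlt_t⟩ :=
    ((mem_closure_iff_frequently.1 hcl).and_eventually hev).exists
  have hsub : closedBall x ρ ⊆ closedBall x₀ (2 * ρ) :=
    closedBall_subset_closedBall' (by linarith [mem_ball.1 hx])
  obtain ⟨y, hy, hge⟩ := hgrowth v x t ρ hρ
    (hv.mono (hsub.trans hball) (singleton_subset_iff.2 ht)) hpos
  exact (hlt_t y (hsub hy)).not_ge hge

theorem exists_ball_pos_of_mem_closure (hN : 1 ≤ N) (hp : 2 ≤ p) (hq : 0 ≤ q) (hq₁ : q < 1)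
    (hm : 0 < m) (hM : 0 ≤ M) :
    ∃ δ, 0 < δ ∧ δ ≤ 1 ∧ ∀ (v : Euc N → ℝ → ℝ) (U : Set (Euc N)) (I : Set ℝ) (x₀ : Euc N)
      (t₀ r : ℝ), IsOpen U → IsOpen I → IsDeadCoreOn N p q m M v U I → 0 < r →
      closedBall x₀ r ⊆ U → Icc (t₀ - r ^ thetaV p q) t₀ ⊆ I →
      (x₀, t₀) ∈ closure {z ∈ U ×ˢ I | 0 < v z.1 z.2} →
      ∃ x', ball x' (δ * r) ⊆ ball x₀ r ∧ ∀ y ∈ ball x' (δ * r), 0 < v y t₀ := by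
  have hpq : 0 < p - 1 - q := by linarith
  have hα : 0 < p / (p - 1 - q) := by positivity
  have hθ : 0 ≤ thetaV p q := by
    rw [thetaV]
    exact div_nonneg (mul_nonneg (by linarith) (by linarith)) hpq.le
  obtain ⟨A, L, hL, hupper⟩ := exists_le_mul_rpow_of_forall_exists_eq_zero hN hp hq hq₁ hm hM
  obtain ⟨c, hc, hlower⟩ := exists_mul_rpow_le_of_mem_closure (N := N) (M := M) hp hq hq₁ hm
  obtain ⟨K, hAK, hKL⟩ := (((tendsto_rpow_atTop hα).const_mul_atTop hc).eventually_gt_atTop A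
    |>.and (eventually_ge_atTop (L + 3))).exists
  have hK : 0 < K := by linarith
  refine ⟨(4 * K)⁻¹, by positivity, inv_le_one_of_one_le₀ (by linarith), ?_⟩
  intro v U I x₀ t₀ r hU hI hv hr hball htime hcl
  set η := (4 * K)⁻¹ * r with hη
  have hη₀ : 0 < η := by positivity
  have hKη : K * η = r / 4 := by rw [hη]; field_simp
  have hLη : η * (L + 3) ≤ r / 4 := by nlinarith
  have ht₀ : t₀ ∈ I := htime (right_mem_Icc.2 (sub_le_self _ (by positivity)))
  obtain ⟨y, hy, hge⟩ := hlower v U I x₀ t₀ (r / 4) hU hI hv (by positivity)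
    ((closedBall_subset_closedBall (by linarith)).trans hball) ht₀ hcl
  rw [mem_closedBall] at hy
  by_contra! hzero
  have hle := hupper v y t₀ η hη₀ (hv.mono
    ((closedBall_subset_closedBall' (by linarith)).trans hball)
    ((Icc_subset_Icc_left (sub_le_sub_left
      (Real.rpow_le_rpow hη₀.le (by nlinarith) hθ) t₀)).trans htime)) fun x hx => ?_
  · rw [← hKη, Real.mul_rpow (by linarith) hη₀.le, ← mul_assoc] at hge
    exact hAK.not_ge (le_of_mul_le_mul_right (hge.trans hle) (by positivity))
  · rw [mem_closedBall] at hx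
    have hsub : ball x η ⊆ ball x₀ r :=
      ball_subset_ball' (by linarith [dist_triangle x y x₀])
    obtain ⟨z, hz, hvz⟩ := hzero x hsub
    exact ⟨z, hz, hvz.antisymm (hv.nonneg (hball (ball_subset_closedBall (hsub hz))) ht₀)⟩

end IsDeadCoreOn

theorem cylQ_one (N : ℕ) (θ : ℝ) : cylQ N θ 1 (0, 0) = ball 0 1 ×ˢ Ioo (-1) 1 := by
  simp [cylQ]

theorem thetaV_pos {p q : ℝ} (hp : 2 ≤ p) (hq : q < 1) : 0 < thetaV p q :=
  div_pos (mul_pos (by linarith) (by linarith)) (by linarith)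

theorem norm_le_of_mem_closure_cylQ {N : ℕ} {θ r t₀ : ℝ} {x : Euc N}
    (hx : (x, t₀) ∈ closure (cylQ N θ r (0, 0))) : ‖x‖ ≤ r := by
  rw [cylQ, closure_prod_eq] at hx
  exact mem_closedBall_zero_iff.1 (closure_ball_subset_closedBall hx.1)

theorem free_boundary_slices_porous_general (N : ℕ) (hN : 1 ≤ N) (p q m M : ℝ) (hp : 2 ≤ p)
    (hq : 0 ≤ q) (hq₁ : q < 1) (hm : 0 < m) (hM : m ≤ M) :
    ∃ δ R : ℝ, 0 < δ ∧ δ ≤ 1 ∧ 0 < R ∧ ∀ lam u : Euc N × ℝ → ℝ,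
      (∀ z ∈ cylQ N (thetaV p q) 1 (0, 0), m ≤ lam z ∧ lam z ≤ M) →
      IsDCSol N p q lam u (cylQ N (thetaV p q) 1 (0, 0)) →
      (∀ z ∈ cylQ N (thetaV p q) 1 (0, 0), 0 ≤ u z) →
      (∀ z ∈ cylQ N (thetaV p q) 1 (0, 0), 0 ≤ timeDeriv N u z) →
      ∀ t₀ ∈ Ioc (-((1 / 2 : ℝ) ^ thetaV p q)) ((1 / 2 : ℝ) ^ thetaV p q),
      ∀ x₀ : Euc N, (x₀, t₀) ∈ frontier {z ∈ cylQ N (thetaV p q) 1 (0, 0) | 0 < u z} ∩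
        closure (cylQ N (thetaV p q) (1 / 2) (0, 0)) →
      ∀ r : ℝ, 0 < r → r < R → ∃ x' : Euc N, ball x' (δ * r) ⊆ ball x₀ r \
        {x : Euc N | (x, t₀) ∈ frontier {z ∈ cylQ N (thetaV p q) 1 (0, 0) | 0 < u z} ∩
          closure (cylQ N (thetaV p q) (1 / 2) (0, 0))} := by
  have hθ := thetaV_pos hp hq₁
  have hgap : 0 < 1 - (1 / 2 : ℝ) ^ thetaV p q :=
    sub_pos.2 (Real.rpow_lt_one (by norm_num) (by norm_num) hθ)
  obtain ⟨δ, hδ, hδ₁, hhole⟩ :=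
    IsDeadCoreOn.exists_ball_pos_of_mem_closure hN hp hq hq₁ hm (hm.le.trans hM)
  refine ⟨δ, min (1 / 2) ((1 - (1 / 2) ^ thetaV p q) ^ (thetaV p q)⁻¹), hδ, hδ₁, by positivity, ?_⟩
  simp only [cylQ_one]
  intro lam u hlam hsol hu hut t₀ ht₀ x₀ hx₀ r hr hrR
  obtain ⟨hr₁, hr₂⟩ := lt_min_iff.1 hrR
  have hrθ : r ^ thetaV p q < 1 - (1 / 2) ^ thetaV p q := by
    rwa [Real.lt_rpow_inv_iff_of_pos hr.le hgap.le hθ] at hr₂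
  have hv : IsDeadCoreOn N p q m M (fun x t => u (x, t)) (ball 0 1) (Ioo (-1) 1) :=
    isDeadCoreOn_of_isDCSol (by linarith) isOpen_ball isOpen_Ioo hlam hsol hu hut
  have hopen : IsOpen {z ∈ ball (0 : Euc N) 1 ×ˢ Ioo (-1 : ℝ) 1 | 0 < u z} :=
    hsol.1.isOpen_inter_preimage (isOpen_ball.prod isOpen_Ioo) isOpen_Ioi
  have hball : closedBall x₀ r ⊆ ball 0 1 := closedBall_subset_ball' (by
    linarith [dist_zero_right x₀, norm_le_of_mem_closure_cylQ hx₀.2])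
  have htime : Icc (t₀ - r ^ thetaV p q) t₀ ⊆ Ioo (-1) 1 :=
    Icc_subset_Ioo (by linarith [ht₀.1]) (by linarith [ht₀.2])
  obtain ⟨x', hsub, hpos⟩ := hhole _ _ _ x₀ t₀ r isOpen_ball isOpen_Ioo hv hr hball htime
    (frontier_subset_closure hx₀.1)
  refine ⟨x', fun y hy => ⟨hsub hy, fun hyE => ?_⟩⟩
  rw [hopen.frontier_eq] at hyE
  exact hyE.1.2 ⟨⟨hball (ball_subset_closedBall (hsub hy)),
    htime (right_mem_Icc.2 (sub_le_self _ (by positivity)))⟩, hpos y hy⟩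

/-- **Corollary 4.3 (Porosity of the time-slices of the free boundary).** -/
theorem free_boundary_slices_porous
    (N : ℕ) (hN : 1 ≤ N) (p q m M : ℝ)
    (hp : 2 ≤ p) (hq0 : 0 ≤ q) (hq1 : q < 1) (hm : 0 < m) (hmM : m ≤ M) :
    ∃ δ : ℝ, 0 < δ ∧ δ ≤ 1 ∧
      ∀ u : Euc N × ℝ → ℝ, memJ N p q m M u →
      ∀ t0 ∈ Ioc (-((1 / 2 : ℝ) ^ thetaV p q)) ((1 / 2 : ℝ) ^ thetaV p q),
      ∀ E : Set (Euc N),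
        E = {x : Euc N | (x, t0) ∈ frontier {z ∈ cylQ N (thetaV p q) 1 (0, 0) | 0 < u z} ∩
              closure (cylQ N (thetaV p q) (1 / 2) (0, 0))} →
        ∃ R : ℝ, 0 < R ∧
          ∀ x0 ∈ E, ∀ r : ℝ, 0 < r → r < R →
            ∃ x' : Euc N, ball x' (δ * r) ⊆ ball x0 r \ E := by
  obtain ⟨δ, R, hδ, hδ₁, hR, hporous⟩ :=
    free_boundary_slices_porous_general N hN p q m M hp hq0 hq1 hm hmM
  refine ⟨δ, hδ, hδ₁, ?_⟩
  rintro u ⟨lam, hlam, hsol, hu, hut, -⟩ t0 ht0 E rfl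
  exact ⟨R, hR, hporous lam u hlam hsol (fun z hz => (hu z hz).1) hut t0 ht0⟩
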